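/- Let p ≥ 3 be a prime number, let K_{3p−2} be the complete simple graph on 3p−2 vertices, and let M be a maximal matching in K_{3p−2}, i.e. a set of (3p−3)/2 pairwise non-adjacent edges (covering all but one vertex). Then the graph obtained from K_{3p−2} by deleting the edges of M is p-winding. -/

import Mathlib

noncomputable section

/-- The Euclidean plane `ℝ²`. -/
abbrev E2 : Type := EuclideanSpace ℝ (Fin 2)

/-- A plane drawing of a simple graph `G`: an assignment of points of `ℝ²` to the
vertices and of continuous paths to the edges (one path per edge, the path for the
edge traversed in the opposite direction being the reverse). -/
structure Drawing {V : Type*} (G : SimpleGraph V) where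
  vert : V → E2
  edgePath : ∀ {a b : V}, G.Adj a b → Path (vert a) (vert b)
  edgePath_symm : ∀ {a b : V} (h : G.Adj a b), edgePath h.symm = (edgePath h).symm

/-- The image of a walk under a drawing: the union of the images of the paths of
its edges (for the trivial walk, the image of its single vertex). -/
def walkImage {V : Type*} {G : SimpleGraph V} (D : Drawing G) :
    ∀ {a b : V}, G.Walk a b → Set E2
  | a, _, SimpleGraph.Walk.nil => {D.vert a}
  | _, _, SimpleGraph.Walk.cons h w => Set.range ⇑(D.edgePath h) ∪ walkImage D w

/-- The continuous path in `ℝ²` obtained by concatenating the paths of the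
consecutive edges of a walk. -/
def walkPath {V : Type*} {G : SimpleGraph V} (D : Drawing G) :
    ∀ {a b : V}, G.Walk a b → Path (D.vert a) (D.vert b)
  | _, _, SimpleGraph.Walk.nil => Path.refl _
  | _, _, SimpleGraph.Walk.cons h w => (D.edgePath h).trans (walkPath D w)

/-- A graph `G` is `q`-winding if for every plane drawing of `G` there are `q`
pairwise vertex-disjoint walks, each a path or a cycle, and a point `x ∈ ℝ²`, such
that each path passes through `x`, and each cycle passes through `x` or its
associated loop is not nullhomotopic in `ℝ² \ {x}` (i.e. not path-homotopic to a
constant loop). -/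
def IsQWinding {V : Type*} [DecidableEq V] (G : SimpleGraph V) (q : ℕ) : Prop :=
  ∀ D : Drawing G,
    ∃ (a b : Fin q → V) (w : ∀ i, G.Walk (a i) (b i)) (x : E2),
      (∀ i j, i ≠ j → Disjoint (w i).support.toFinset (w j).support.toFinset) ∧
      ∀ i,
        ((w i).IsPath ∧ x ∈ walkImage D (w i)) ∨
        (∃ h : b i = a i, ((w i).copy rfl h).IsCycle ∧
          (x ∈ walkImage D (w i) ∨
            ∀ (p : ↥({x}ᶜ : Set E2)) (γ : Path p p),
              (∀ t, (γ t : E2) = (walkPath D ((w i).copy rfl h)) t) →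
              ¬ γ.Homotopic (Path.refl p)))

open Finset Filter Topology

set_option linter.unusedSectionVars false

/-- The values of a cochain of mixed degree on one square of the grid: the degree `0` part `w`,
the two components `h`, `v` of the degree `1` part, and the degree `2` part `p`. -/
structure Cell where
  w : ℤ
  h : ℤ
  v : ℤ
  p : ℤ

namespace Cell

variable {I : Type*} [Fintype I] [LinearOrder I]

/-- The sign with which the degree `1` parts of the factors `i` and `l` are multiplied. -/
def sg (e : I → ℕ) (i l : I) : ℤ := (-1) ^ (e i + e l + if l < i then 1 else 0)

/-- The wedge product of the degree `1` parts. -/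
def wedge (a b : Cell) : ℤ := a.h * b.v - a.v * b.h

/-- Twice the top degree part of the product of a family of cells. -/
def top (e : I → ℕ) (A : I → Cell) : ℤ :=
  2 * ∑ i, (A i).p * ∏ t, (if t = i then 1 else (A t).w) +
  ∑ i, ∑ l, if i = l then 0 else
    sg e i l * wedge (A i) (A l) * ∏ t, (if t = i ∨ t = l then 1 else (A t).w)

/-- The coefficient of the degree `0` part of the factor `m` in `top`. -/
def topCoeff (e : I → ℕ) (A : I → Cell) (m : I) : ℤ :=
  2 * ∑ i, (if i = m then 0 else (A i).p * ∏ t, (if t = i ∨ t = m then 1 else (A t).w)) +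
  ∑ i, ∑ l, if i = l ∨ i = m ∨ l = m then 0 else
    sg e i l * wedge (A i) (A l) * ∏ t, (if t = i ∨ t = l ∨ t = m then 1 else (A t).w)

lemma wedge_antisymm (a b : Cell) : wedge a b = - wedge b a := by
  unfold wedge; ring

lemma sg_antisymm (e : I → ℕ) {i l : I} (h : i ≠ l) : sg e i l = - sg e l i := by
  unfold sg
  rcases lt_or_gt_of_ne h with h | h
  · simp only [h, h.not_gt, if_true, if_false]; ring
  · simp only [h, h.not_gt, if_true, if_false]; ring

lemma prod_split (W : I → ℤ) (q : I → Prop) [DecidablePred q] (m : I) (hm : ¬ q m) :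
    ∏ t, (if q t then 1 else W t) = W m * ∏ t, (if q t ∨ t = m then 1 else W t) := by
  rw [← Finset.mul_prod_erase _ _ (mem_univ m),
    ← Finset.mul_prod_erase (f := fun t => if q t ∨ t = m then 1 else W t) _ (mem_univ m)]
  simp only [hm, if_false, or_true, if_true, one_mul]
  congr 1
  apply Finset.prod_congr rfl
  intro t ht
  simp [Finset.ne_of_mem_erase ht]

lemma top_eq (e : I → ℕ) (A : I → Cell) (m : I) :
    top e A = 2 * (A m).p * ∏ t, (if t = m then 1 else (A t).w) + (A m).w * topCoeff e A m +
      2 * ∑ l, (if l = m then 0 else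
        sg e m l * wedge (A m) (A l) * ∏ t, (if t = m ∨ t = l then 1 else (A t).w)) := by
  unfold top topCoeff
  have h1 : ∑ i, (A i).p * ∏ t, (if t = i then 1 else (A t).w) =
      (A m).p * ∏ t, (if t = m then 1 else (A t).w) + (A m).w *
      ∑ i, (if i = m then 0 else (A i).p * ∏ t, (if t = i ∨ t = m then 1 else (A t).w)) := by
    rw [← Finset.add_sum_erase _ _ (mem_univ m),
      ← Finset.add_sum_erase (f := fun i => if i = m then (0:ℤ) else _) _ (mem_univ m)]
    simp only [if_true, zero_add]
    rw [Finset.mul_sum]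
    congr 1
    apply Finset.sum_congr rfl
    intro i hi
    have hi := Finset.ne_of_mem_erase hi
    rw [prod_split (fun t => (A t).w) (fun t => t = i) m hi.symm]
    simp only [hi, if_false]
    ring
  have h2 : ∑ i, ∑ l, (if i = l then 0 else
      sg e i l * wedge (A i) (A l) * ∏ t, (if t = i ∨ t = l then 1 else (A t).w)) =
      (∑ l, (if l = m then 0 else
        sg e m l * wedge (A m) (A l) * ∏ t, (if t = m ∨ t = l then 1 else (A t).w))) +
      (∑ l, (if l = m then 0 else
        sg e m l * wedge (A m) (A l) * ∏ t, (if t = m ∨ t = l then 1 else (A t).w))) +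
      (A m).w * ∑ i, ∑ l, (if i = l ∨ i = m ∨ l = m then 0 else
        sg e i l * wedge (A i) (A l) * ∏ t, (if t = i ∨ t = l ∨ t = m then 1 else (A t).w)) := by
    have key : ∀ i l, (if i = l then 0 else
        sg e i l * wedge (A i) (A l) * ∏ t, (if t = i ∨ t = l then 1 else (A t).w)) =
        (if i = m then (if l = m then 0 else
          sg e m l * wedge (A m) (A l) * ∏ t, (if t = m ∨ t = l then 1 else (A t).w)) else 0) +
        (if l = m then (if i = m then 0 else
          sg e m i * wedge (A m) (A i) * ∏ t, (if t = m ∨ t = i then 1 else (A t).w)) else 0) +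
        (A m).w * (if i = l ∨ i = m ∨ l = m then 0 else
          sg e i l * wedge (A i) (A l) * ∏ t, (if t = i ∨ t = l ∨ t = m then 1 else (A t).w)) := by
      intro i l
      by_cases him : i = m
      · subst him
        by_cases hli : l = i
        · simp [hli]
        · simp [hli, Ne.symm hli]
      · by_cases hlm : l = m
        · subst hlm
          simp only [him, if_false, if_true, or_true, mul_zero, add_zero, zero_add]
          rw [sg_antisymm e him, wedge_antisymm]
          simp only [or_comm]
          ring
        · simp only [him, hlm, if_false, or_false, zero_add]
          by_cases hil : i = l
          · simp [hil]
          · simp only [hil, if_false]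
            rw [prod_split (fun t => (A t).w) (fun t => t = i ∨ t = l) m
              (by simp [Ne.symm him, Ne.symm hlm])]
            simp only [or_assoc]
            ring
    simp only [key, Finset.sum_add_distrib, ← Finset.mul_sum]
    have h3 : ∀ f : I → ℤ, ∑ i, ∑ l, (if i = m then f l else 0) = ∑ l, f l := by
      intro f
      rw [Finset.sum_comm]
      simp
    have h4 : ∀ f : I → ℤ, ∑ i, ∑ l, (if l = m then f i else 0) = ∑ l, f l := by
      intro f
      simp
    rw [h3, h4]
  rw [h1, h2]
  ring

lemma topCoeff_congr (e : I → ℕ) {A B : I → Cell} (m : I) (h : ∀ t, t ≠ m → A t = B t) :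
    topCoeff e A m = topCoeff e B m := by
  unfold topCoeff
  congr 2
  · apply Finset.sum_congr rfl
    intro i _
    split_ifs with hi
    · rfl
    · rw [h i hi]
      congr 1
      apply Finset.prod_congr rfl
      intro t _
      split_ifs with ht
      · rfl
      · rw [h t (by tauto)]
  · ext i
    apply Finset.sum_congr rfl
    intro l _
    split_ifs with hi
    · rfl
    · rw [h i (by tauto), h l (by tauto)]
      congr 1
      apply Finset.prod_congr rfl
      intro t _
      split_ifs with ht
      · rfl
      · rw [h t (by tauto)]

/-- `top` after replacing the factor `m`. -/
lemma top_update (e : I → ℕ) (A : I → Cell) (m : I) (a : Cell) :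
    top e (Function.update A m a) =
      2 * a.p * ∏ t, (if t = m then 1 else (A t).w) + a.w * topCoeff e A m +
      2 * ∑ l, (if l = m then 0 else
        sg e m l * wedge a (A l) * ∏ t, (if t = m ∨ t = l then 1 else (A t).w)) := by
  rw [top_eq e _ m, topCoeff_congr e (B := A) m (fun t ht => by simp [ht])]
  simp only [Function.update_self]
  congr 2
  · congr 1
    congr 1
    funext t
    split_ifs with ht
    · rfl
    · simp [ht]
  · apply Finset.sum_congr rfl
    intro l _
    split_ifs with hl
    · rfl
    · rw [Function.update_of_ne hl]
      congr 1
      apply Finset.prod_congr rfl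
      intro t _
      split_ifs with ht
      · rfl
      · rw [Function.update_of_ne (by tauto)]

end Cell

/-- A cochain of mixed degree on the grid `ℕ × ℕ`: degree `0` part `w`, degree `1` part `(h, v)`
on the horizontal and vertical grid edges, degree `2` part `p`. -/
structure Coch where
  w : ℕ → ℕ → ℤ
  h : ℕ → ℕ → ℤ
  v : ℕ → ℕ → ℤ
  p : ℕ → ℕ → ℤ

namespace Coch

/-- The values of a cochain at a grid square. -/
def cell (X : Coch) (i j : ℕ) : Cell := ⟨X.w i j, X.h i j, X.v i j, X.p i j⟩

/-- The coboundary of the degree `1` part. -/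
def dE (X : Coch) (i j : ℕ) : ℤ := X.h i j + X.v (i + 1) j - X.h i (j + 1) - X.v i j

/-- The horizontal component of the coboundary of the degree `0` part. -/
def dh (X : Coch) (i j : ℕ) : ℤ := X.w (i + 1) j - X.w i j

/-- The vertical component of the coboundary of the degree `0` part. -/
def dv (X : Coch) (i j : ℕ) : ℤ := X.w i (j + 1) - X.w i j

/-- `X` changes only along rows and columns whose class lies in `S`. -/
structure Supp (c : ℕ → ℕ) (S : Set ℕ) (X : Coch) : Prop where
  h : ∀ i j, X.h i j ≠ 0 → c i ∈ S
  v : ∀ i j, X.v i j ≠ 0 → c j ∈ S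
  di : ∀ i j, X.dE i j ≠ 0 → c i ∈ S
  dj : ∀ i j, X.dE i j ≠ 0 → c j ∈ S
  wh : ∀ i j, X.w (i + 1) j ≠ X.w i j → c i ∈ S
  wv : ∀ i j, X.w i (j + 1) ≠ X.w i j → c j ∈ S

/-- The degree `1` part vanishes on the boundary of the grid `[0, n]²`. -/
structure Bd (n : ℕ) (X : Coch) : Prop where
  h0 : ∀ i, X.h i 0 = 0
  hn : ∀ i, X.h i n = 0
  v0 : ∀ j, X.v 0 j = 0
  vn : ∀ j, X.v n j = 0

end Coch

lemma sum_stokes (n : ℕ) (f h v : ℕ → ℕ → ℤ)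
    (h0 : ∀ i, h i 0 = 0) (hn : ∀ i, h i n = 0) (v0 : ∀ j, v 0 j = 0) (vn : ∀ j, v n j = 0)
    (hv : ∀ i j, f (i + 1) j ≠ f i j → v (i + 1) j = v i j)
    (hh : ∀ i j, f i (j + 1) ≠ f i j → h i (j + 1) = h i j) :
    ∑ i ∈ range n, ∑ j ∈ range n,
      (f i j * (h i j + v (i + 1) j - h i (j + 1) - v i j) +
        ((f (i + 1) j - f i j) * v i j - (f i (j + 1) - f i j) * h i j)) = 0 := by
  have key : ∀ i j, (f i j * (h i j + v (i + 1) j - h i (j + 1) - v i j) +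
        ((f (i + 1) j - f i j) * v i j - (f i (j + 1) - f i j) * h i j)) =
      (f (i + 1) j * v (i + 1) j - f i j * v i j) -
        (f i (j + 1) * h i (j + 1) - f i j * h i j) := by
    intro i j
    have e1 : (f (i + 1) j - f i j) * v i j = (f (i + 1) j - f i j) * v (i + 1) j := by
      by_cases hf : f (i + 1) j = f i j
      · simp [hf]
      · rw [hv i j hf]
    have e2 : (f i (j + 1) - f i j) * h i j = (f i (j + 1) - f i j) * h i (j + 1) := by
      by_cases hf : f i (j + 1) = f i j
      · simp [hf]
      · rw [hh i j hf]
    rw [e1, e2]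
    ring
  simp only [key, Finset.sum_sub_distrib]
  have a1 : ∑ i ∈ range n, ∑ j ∈ range n, f (i + 1) j * v (i + 1) j -
      ∑ i ∈ range n, ∑ j ∈ range n, f i j * v i j = 0 := by
    rw [← Finset.sum_sub_distrib, Finset.sum_range_sub (fun i => ∑ j ∈ range n, f i j * v i j)]
    simp [v0, vn]
  have a2 : ∑ i ∈ range n, ∑ j ∈ range n, f i (j + 1) * h i (j + 1) -
      ∑ i ∈ range n, ∑ j ∈ range n, f i j * h i j = 0 := by
    rw [← Finset.sum_sub_distrib]
    apply Finset.sum_eq_zero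
    intro i _
    rw [← Finset.sum_sub_distrib, Finset.sum_range_sub (fun j => f i j * h i j)]
    simp [h0, hn]
  rw [a1, a2, sub_zero]

lemma prod_sub_prod_of_unique {I : Type*} [Fintype I] [DecidableEq I] (a b : I → ℤ)
    (hu : ∀ m m', b m ≠ a m → b m' ≠ a m' → m = m') :
    ∏ t, b t - ∏ t, a t = ∑ m, (b m - a m) * ∏ t, (if t = m then 1 else a t) := by
  by_cases hex : ∃ m, b m ≠ a m
  · obtain ⟨m, hm⟩ := hex
    have ho : ∀ t, t ≠ m → b t = a t := fun t ht => by
      by_contra hc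
      exact ht (hu t m hc hm)
    rw [Finset.sum_eq_single m]
    · rw [← Finset.mul_prod_erase _ a (mem_univ m), ← Finset.mul_prod_erase _ b (mem_univ m),
        ← Finset.mul_prod_erase _ (fun t => if t = m then 1 else a t) (mem_univ m)]
      have e1 : ∏ t ∈ univ.erase m, b t = ∏ t ∈ univ.erase m, a t :=
        Finset.prod_congr rfl (fun t ht => ho t (ne_of_mem_erase ht))
      have e2 : ∏ t ∈ univ.erase m, (if t = m then 1 else a t) = ∏ t ∈ univ.erase m, a t :=
        Finset.prod_congr rfl (fun t ht => by simp [ne_of_mem_erase ht])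
      rw [e1, e2]
      simp only [if_true]
      ring
    · intro t _ ht
      simp [ho t ht]
    · simp
  · push Not at hex
    simp [hex]

namespace Coch

open Cell

variable {I : Type*} [Fintype I] [LinearOrder I]

/-- The contribution of the factor `l` to the total coboundary of a product of cochains. -/
def bracket (A : I → Coch) (l : I) (i j : ℕ) : ℤ :=
  (A l).dE i j * ∏ t, (if t = l then 1 else (A t).w i j) +
    ∑ m, if m = l then 0 else
      ((A m).dh i j * (A l).v i j - (A m).dv i j * (A l).h i j) *
        ∏ t, (if t = m ∨ t = l then 1 else (A t).w i j)

lemma sum_bracket (n : ℕ) (c : ℕ → ℕ) (S : I → Set ℕ)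
    (hS : ∀ t l, t ≠ l → Disjoint (S t) (S l)) (A : I → Coch)
    (hA : ∀ t, Supp c (S t) (A t)) (hB : ∀ t, Bd n (A t)) (l : I) :
    ∑ i ∈ range n, ∑ j ∈ range n, bracket A l i j = 0 := by
  have hdisj : ∀ t l x, x ∈ S t → x ∈ S l → t = l := by
    intro t l x h1 h2
    by_contra hne
    exact Set.disjoint_left.mp (hS t l hne) h1 h2
  set g : ℕ → ℕ → I → ℤ := fun i j t => if t = l then 1 else (A t).w i j with hg
  have hst := sum_stokes n (fun i j => ∏ t, g i j t) (A l).h (A l).v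
    (hB l).h0 (hB l).hn (hB l).v0 (hB l).vn ?_ ?_
  · rw [← hst]
    apply Finset.sum_congr rfl
    intro i _
    apply Finset.sum_congr rfl
    intro j _
    have p1 := prod_sub_prod_of_unique (g i j) (g (i + 1) j) (by
      intro m m' hm hm'
      simp only [hg] at hm hm'
      split_ifs at hm hm' <;> try tauto
      exact hdisj _ _ _ ((hA m).wh i j hm) ((hA m').wh i j hm'))
    have p2 := prod_sub_prod_of_unique (g i j) (g i (j + 1)) (by
      intro m m' hm hm'
      simp only [hg] at hm hm'
      split_ifs at hm hm' <;> try tauto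
      exact hdisj _ _ _ ((hA m).wv i j hm) ((hA m').wv i j hm'))
    rw [p1, p2]
    unfold bracket
    rw [mul_comm ((A l).dE i j)]
    simp only [dE]
    congr 1
    rw [Finset.sum_mul, Finset.sum_mul, ← Finset.sum_sub_distrib]
    apply Finset.sum_congr rfl
    intro m _
    simp only [hg]
    by_cases hm : m = l
    · simp [hm]
    · simp only [hm, if_false, dh, dv, ite_or]
      ring
  · intro i j hf
    have : ∃ m, g (i + 1) j m ≠ g i j m := by
      by_contra hcon
      push Not at hcon
      exact hf (Finset.prod_congr rfl (fun t _ => hcon t))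
    obtain ⟨m, hm⟩ := this
    simp only [hg] at hm
    split_ifs at hm with hml
    · tauto
    have hc := (hA m).wh i j hm
    have hnl : c i ∉ S l := fun hcl => hml (hdisj _ _ _ hc hcl)
    have z1 : (A l).dE i j = 0 := by
      by_contra hz
      exact hnl ((hA l).di i j hz)
    have z2 : (A l).h i j = 0 := by
      by_contra hz
      exact hnl ((hA l).h i j hz)
    have z3 : (A l).h i (j + 1) = 0 := by
      by_contra hz
      exact hnl ((hA l).h i _ hz)
    simp only [dE] at z1
    linarith
  · intro i j hf
    have : ∃ m, g i (j + 1) m ≠ g i j m := by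
      by_contra hcon
      push Not at hcon
      exact hf (Finset.prod_congr rfl (fun t _ => hcon t))
    obtain ⟨m, hm⟩ := this
    simp only [hg] at hm
    split_ifs at hm with hml
    · tauto
    have hc := (hA m).wv i j hm
    have hnl : c j ∉ S l := fun hcl => hml (hdisj _ _ _ hc hcl)
    have z1 : (A l).dE i j = 0 := by
      by_contra hz
      exact hnl ((hA l).dj i j hz)
    have z2 : (A l).v i j = 0 := by
      by_contra hz
      exact hnl ((hA l).v i j hz)
    have z3 : (A l).v (i + 1) j = 0 := by
      by_contra hz
      exact hnl ((hA l).v _ j hz)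
    simp only [dE] at z1
    linarith

/-- The cells of a family of cochains at a grid square. -/
def cells (A : I → Coch) (i j : ℕ) (t : I) : Cell := (A t).cell i j

/-- The total coboundary of a cochain, up to the sign `s` of its degree `2` part. -/
def dcell (s : ℤ) (X : Coch) (i j : ℕ) : Cell := ⟨0, X.dh i j, X.dv i j, s * X.dE i j⟩

lemma top_dcell_eq (e : I → ℕ) (A : I → Coch) (z : I) (hz : ∀ i, z ≤ i) (he : e z = 0) (i j : ℕ) :
    top e (Function.update (cells A i j) z (dcell 1 (A z) i j)) -
      ∑ m, (if m = z then 0 else (-1) ^ e m *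
        top (fun t => e t + if m < t then 1 else 0)
          (Function.update (cells A i j) m (dcell (-1) (A m) i j))) =
    2 * ∑ l, (-1) ^ e l * bracket A l i j := by
  set F : I → I → ℤ := fun m l => if m = l then 0 else
      ((A m).dh i j * (A l).v i j - (A m).dv i j * (A l).h i j) *
        ∏ t, (if t = m ∨ t = l then 1 else (A t).w i j) with hF
  set D : I → ℤ := fun l => (A l).dE i j * ∏ t, (if t = l then 1 else (A t).w i j) with hD
  have h1 : top e (Function.update (cells A i j) z (dcell 1 (A z) i j)) =
      2 * D z + 2 * ∑ l, (-1) ^ e l * F z l := by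
    rw [top_update]
    simp only [dcell, hD, hF, cells, cell, zero_mul, add_zero, wedge, one_mul]
    congr 1
    · ring
    · congr 1
      apply Finset.sum_congr rfl
      intro l _
      by_cases hl : l = z
      · simp [hl]
      · simp only [hl, Ne.symm hl, if_false, sg, he, (hz l).not_gt, zero_add, add_zero]
        ring
  have h2 : ∀ m, (-1) ^ e m * top (fun t => e t + if m < t then 1 else 0)
          (Function.update (cells A i j) m (dcell (-1) (A m) i j)) =
      - (2 * ((-1) ^ e m * D m)) - 2 * ∑ l, (-1) ^ e l * F m l := by
    intro m
    rw [top_update]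
    have hs : ∀ l, l ≠ m → (-1 : ℤ) ^ e m * sg (fun t => e t + if m < t then 1 else 0) m l =
        - (-1) ^ e l := by
      intro l hl
      have : (-1 : ℤ) ^ e m * (-1) ^ e m = 1 := by rw [← mul_pow]; simp
      unfold sg
      rcases lt_or_gt_of_ne hl with h | h
      · simp only [h, h.not_gt, lt_irrefl, if_true, if_false, pow_add]
        linear_combination (- (-1 : ℤ) ^ e l) * this
      · simp only [h, h.not_gt, lt_irrefl, if_true, if_false, pow_add]
        linear_combination (- (-1 : ℤ) ^ e l) * this
    simp only [dcell, hD, hF, cells, cell, zero_mul, add_zero, wedge]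
    have : ∑ l, (-1) ^ e l * (if m = l then 0 else
      ((A m).dh i j * (A l).v i j - (A m).dv i j * (A l).h i j) *
        ∏ t, (if t = m ∨ t = l then 1 else (A t).w i j)) =
      - ((-1) ^ e m * ∑ l, if l = m then 0 else
        sg (fun t => e t + if m < t then 1 else 0) m l *
          ((A m).dh i j * (A l).v i j - (A m).dv i j * (A l).h i j) *
          ∏ t, (if t = m ∨ t = l then 1 else (A t).w i j)) := by
      rw [Finset.mul_sum, ← Finset.sum_neg_distrib]
      apply Finset.sum_congr rfl
      intro l _
      by_cases hl : l = m
      · simp [hl]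
      · simp only [hl, Ne.symm hl, if_false]
        linear_combination (((A m).dh i j * (A l).v i j - (A m).dv i j * (A l).h i j) *
          ∏ t, (if t = m ∨ t = l then 1 else (A t).w i j)) * hs l hl
    rw [this]
    ring
  have h3 : ∑ m, (if m = z then 0 else (-1) ^ e m *
        top (fun t => e t + if m < t then 1 else 0)
          (Function.update (cells A i j) m (dcell (-1) (A m) i j))) =
      ∑ m, (- (2 * ((-1) ^ e m * D m)) - 2 * ∑ l, (-1) ^ e l * F m l) -
        (- (2 * ((-1) ^ e z * D z)) - 2 * ∑ l, (-1) ^ e l * F z l) := by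
    rw [← Finset.add_sum_erase _ _ (mem_univ z),
      ← Finset.add_sum_erase (f := fun m => (- (2 * ((-1) ^ e m * D m)) -
        2 * ∑ l, (-1) ^ e l * F m l)) _ (mem_univ z)]
    simp only [if_true, zero_add, add_sub_cancel_left]
    apply Finset.sum_congr rfl
    intro m hm
    simp only [ne_of_mem_erase hm, if_false, h2]
  have h4 : ∑ l, (-1) ^ e l * bracket A l i j = ∑ l, (-1) ^ e l * D l +
      ∑ m, ∑ l, (-1) ^ e l * F m l := by
    rw [Finset.sum_comm, ← Finset.sum_add_distrib]
    apply Finset.sum_congr rfl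
    intro l _
    rw [← Finset.mul_sum, ← mul_add]
    rfl
  rw [h1, h3, h4, Finset.sum_sub_distrib, Finset.sum_neg_distrib, ← Finset.mul_sum,
    ← Finset.mul_sum, he]
  ring

/-- The Leibniz rule, summed over the grid. -/
lemma sum_top_dcell (n : ℕ) (c : ℕ → ℕ) (S : I → Set ℕ)
    (hS : ∀ t l, t ≠ l → Disjoint (S t) (S l)) (A : I → Coch)
    (hA : ∀ t, Supp c (S t) (A t)) (hB : ∀ t, Bd n (A t))
    (e : I → ℕ) (z : I) (hz : ∀ i, z ≤ i) (he : e z = 0) :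
    ∑ i ∈ range n, ∑ j ∈ range n,
      top e (Function.update (cells A i j) z (dcell 1 (A z) i j)) =
    ∑ i ∈ range n, ∑ j ∈ range n,
      ∑ m, (if m = z then 0 else (-1) ^ e m *
        top (fun t => e t + if m < t then 1 else 0)
          (Function.update (cells A i j) m (dcell (-1) (A m) i j))) := by
  rw [← sub_eq_zero, ← Finset.sum_sub_distrib]
  simp only [← Finset.sum_sub_distrib, top_dcell_eq e A z hz he, Finset.mul_sum]
  have : ∀ i, ∑ j ∈ range n, ∑ l, (2:ℤ) * ((-1) ^ e l * bracket A l i j) =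
      ∑ l, ∑ j ∈ range n, 2 * ((-1) ^ e l * bracket A l i j) := fun i => Finset.sum_comm
  simp only [this]
  rw [Finset.sum_comm]
  apply Finset.sum_eq_zero
  intro l _
  simp only [← Finset.mul_sum]
  rw [sum_bracket n c S hS A hA hB l]
  simp

end Coch

namespace Cell

variable {I : Type*} [Fintype I] [LinearOrder I]

lemma exists_top_update_linear (e : I → ℕ) (A : I → Cell) (m : I) :
    ∃ α β γ δ : ℤ, ∀ a : Cell,
      top e (Function.update A m a) = α * a.w + β * a.h + γ * a.v + δ * a.p := by
  refine ⟨topCoeff e A m,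
    2 * ∑ l, (if l = m then 0 else
        sg e m l * (A l).v * ∏ t, (if t = m ∨ t = l then 1 else (A t).w)),
    - (2 * ∑ l, (if l = m then 0 else
        sg e m l * (A l).h * ∏ t, (if t = m ∨ t = l then 1 else (A t).w))),
    2 * ∏ t, (if t = m then 1 else (A t).w), fun a => ?_⟩
  rw [top_update]
  have : ∑ l, (if l = m then 0 else
        sg e m l * wedge a (A l) * ∏ t, (if t = m ∨ t = l then 1 else (A t).w)) =
      a.h * (∑ l, (if l = m then 0 else
        sg e m l * (A l).v * ∏ t, (if t = m ∨ t = l then 1 else (A t).w))) -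
      a.v * (∑ l, (if l = m then 0 else
        sg e m l * (A l).h * ∏ t, (if t = m ∨ t = l then 1 else (A t).w))) := by
    rw [Finset.mul_sum, Finset.mul_sum, ← Finset.sum_sub_distrib]
    apply Finset.sum_congr rfl
    intro l _
    split_ifs
    · simp
    · unfold wedge; ring
  rw [this]
  ring

lemma top_update_sum (e : I → ℕ) (A : I → Cell) (m : I) {J : Type*} (s : Finset J) (k : J → ℤ)
    (B : J → Cell) (a : Cell) (hw : a.w = ∑ j ∈ s, k j * (B j).w)
    (hh : a.h = ∑ j ∈ s, k j * (B j).h) (hv : a.v = ∑ j ∈ s, k j * (B j).v)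
    (hp : a.p = ∑ j ∈ s, k j * (B j).p) :
    top e (Function.update A m a) = ∑ j ∈ s, k j * top e (Function.update A m (B j)) := by
  obtain ⟨α, β, γ, δ, h⟩ := exists_top_update_linear e A m
  simp only [h, hw, hh, hv, hp, Finset.mul_sum, ← Finset.sum_add_distrib]
  apply Finset.sum_congr rfl
  intro j _
  ring

lemma top_update_add (e : I → ℕ) (A : I → Cell) (m : I) (a b d : Cell) (hw : d.w = a.w + b.w)
    (hh : d.h = a.h + b.h) (hv : d.v = a.v + b.v) (hp : d.p = a.p + b.p) :
    top e (Function.update A m d) =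
      top e (Function.update A m a) + top e (Function.update A m b) := by
  obtain ⟨α, β, γ, δ, h⟩ := exists_top_update_linear e A m
  simp only [h, hw, hh, hv, hp]
  ring

/-- Negating the degree `1` part of the first factor amounts to a change of signs. -/
lemma top_update_neg (e : I → ℕ) (A : I → Cell) (z : I) (hz : ∀ i, z ≤ i) (a b : Cell)
    (hw : b.w = a.w) (hh : b.h = - a.h) (hv : b.v = - a.v) (hp : b.p = a.p) :
    top e (Function.update A z b) =
      top (fun t => e t + if z < t then 1 else 0) (Function.update A z a) := by
  rw [top_update, top_update, hw, hp]
  congr 1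
  · congr 2
    unfold topCoeff
    congr 1
    apply Finset.sum_congr rfl
    intro i _
    apply Finset.sum_congr rfl
    intro l _
    by_cases h : i = l ∨ i = z ∨ l = z
    · simp [h]
    · simp only [h, if_false]
      congr 2
      push Not at h
      simp only [sg, lt_of_le_of_ne (hz i) (Ne.symm h.2.1), lt_of_le_of_ne (hz l) (Ne.symm h.2.2),
        if_true, pow_add]
      ring
  · congr 1
    apply Finset.sum_congr rfl
    intro l _
    by_cases h : l = z
    · simp [h]
    · simp only [h, if_false]
      congr 1
      simp only [sg, lt_of_le_of_ne (hz l) (Ne.symm h), lt_irrefl, if_true, if_false, pow_add,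
        wedge, hh, hv]
      ring

end Cell

/-- A partial choice of labels, one from each of four groups of vertices. -/
abbrev Face := Fin 4 → Option ℕ

namespace Face

/-- The labels occurring in a face, in order. -/
def labels (b : Face) : List ℕ :=
  (b 0).toList ++ ((b 1).toList ++ ((b 2).toList ++ (b 3).toList))

/-- The number of labels preceding the one in group `s`. -/
def pos (b : Face) (s : Fin 4) : ℕ := ∑ r, if r < s ∧ (b r).isSome then 1 else 0

/-- Removal of the label in group `s`. -/
def del (b : Face) (s : Fin 4) : Face := Function.update b s none

/-- The alternating sum of `g` over the facets of a list. -/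
def listBdry (g : List ℕ → ℤ) : List ℕ → ℤ
  | [] => 0
  | [_] => g []
  | [a, b] => g [b] - g [a]
  | [a, b, c] => g [b, c] - g [a, c] + g [a, b]
  | [a, b, c, d] => g [b, c, d] - g [a, c, d] + g [a, b, d] - g [a, b, c]
  | _ => 0

lemma sum_del_eq (g : List ℕ → ℤ) (b : Face) :
    ∑ s, (if (b s).isSome then (-1) ^ pos b s else 0) * g (labels (del b s)) =
      listBdry g (labels b) := by
  have hp0 : pos b 0 = 0 := by simp [pos]
  have hp1 : pos b 1 = if (b 0).isSome then 1 else 0 := by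
    simp only [pos, Fin.sum_univ_four]
    simp
  have hp2 : pos b 2 = (if (b 0).isSome then 1 else 0) + (if (b 1).isSome then 1 else 0) := by
    simp only [pos, Fin.sum_univ_four]
    simp
  have hp3 : pos b 3 = (if (b 0).isSome then 1 else 0) + (if (b 1).isSome then 1 else 0) +
      (if (b 2).isSome then 1 else 0) := by
    simp only [pos, Fin.sum_univ_four]
    simp
  rw [Fin.sum_univ_four, hp0, hp1, hp2, hp3]
  have d0 : labels (del b 0) = (b 1).toList ++ ((b 2).toList ++ (b 3).toList) := by
    simp [labels, del]
  have d1 : labels (del b 1) = (b 0).toList ++ ((b 2).toList ++ (b 3).toList) := by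
    simp [labels, del]
  have d2 : labels (del b 2) = (b 0).toList ++ ((b 1).toList ++ (b 3).toList) := by
    simp [labels, del]
  have d3 : labels (del b 3) = (b 0).toList ++ ((b 1).toList ++ (b 2).toList) := by
    simp [labels, del]
  rw [d0, d1, d2, d3, labels]
  rcases b 0 with _ | x0 <;> rcases b 1 with _ | x1 <;> rcases b 2 with _ | x2 <;>
    rcases b 3 with _ | x3 <;> simp [listBdry] <;> ring

lemma labels_length_le (b : Face) : (labels b).length ≤ 4 := by
  unfold labels
  rcases b 0 with _ | x0 <;> rcases b 1 with _ | x1 <;> rcases b 2 with _ | x2 <;>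
    rcases b 3 with _ | x3 <;> simp

lemma mem_labels (b : Face) (x : ℕ) : x ∈ labels b ↔ ∃ s, b s = some x := by
  simp only [labels, List.mem_append, Option.mem_toList, Fin.exists_fin_succ]
  simp

end Face

/-- Discretised drawing data: for each label `a < R` a degree `2` cochain, and for each pair of
labels a degree `1` cochain connecting them. -/
structure Stage (n R : ℕ) (c : ℕ → ℕ) where
  P : ℕ → ℕ → ℕ → ℤ
  h : ℕ → ℕ → ℕ → ℕ → ℤ
  v : ℕ → ℕ → ℕ → ℕ → ℤ
  dE : ∀ a b i j, a < b → b < R →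
    h a b i j + v a b (i + 1) j - h a b i (j + 1) - v a b i j = P a i j - P b i j
  hs : ∀ a b i j, a < b → b < R → h a b i j ≠ 0 → c i = a ∨ c i = b
  vs : ∀ a b i j, a < b → b < R → v a b i j ≠ 0 → c j = a ∨ c j = b
  Ps : ∀ a i j, a < R → P a i j ≠ 0 → c i = a ∧ c j = a
  h0 : ∀ a b i, a < b → b < R → h a b i 0 = 0
  hn : ∀ a b i, a < b → b < R → h a b i n = 0
  v0 : ∀ a b j, a < b → b < R → v a b 0 j = 0
  vn : ∀ a b j, a < b → b < R → v a b n j = 0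

/-- The potential of a degree `1` cochain, obtained by summation along rows. -/
def potential (h : ℕ → ℕ → ℤ) (i j : ℕ) : ℤ := ∑ k ∈ range i, h k j

lemma potential_dh (h : ℕ → ℕ → ℤ) (i j : ℕ) :
    potential h (i + 1) j - potential h i j = h i j := by
  simp [potential, Finset.sum_range_succ]

lemma potential_dv (h v : ℕ → ℕ → ℤ) (v0 : ∀ j, v 0 j = 0)
    (hd : ∀ i j, h i j + v (i + 1) j - h i (j + 1) - v i j = 0) (i j : ℕ) :
    potential h i (j + 1) - potential h i j = v i j := by
  induction i with
  | zero => simp [potential, v0]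
  | succ i ih =>
    have h1 := potential_dh h i j
    have h2 := potential_dh h i (j + 1)
    have := hd i j
    linarith

lemma potential_add (f g : ℕ → ℕ → ℤ) (i j : ℕ) :
    potential (fun i j => f i j + g i j) i j = potential f i j + potential g i j := by
  simp [potential, Finset.sum_add_distrib]

lemma potential_sub (f g : ℕ → ℕ → ℤ) (i j : ℕ) :
    potential (fun i j => f i j - g i j) i j = potential f i j - potential g i j := by
  simp [potential, Finset.sum_sub_distrib]

namespace Stage

variable {n R : ℕ} {c : ℕ → ℕ} (T : Stage n R c)

/-- The cochain of a list of labels. -/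
def part : List ℕ → Coch
  | [a] => ⟨0, 0, 0, T.P a⟩
  | [a, b] => ⟨0, T.h a b, T.v a b, 0⟩
  | [a, b, d] => ⟨potential (fun i j => T.h a b i j + T.h b d i j - T.h a d i j), 0, 0, 0⟩
  | _ => ⟨0, 0, 0, 0⟩

/-- Lists of labels below `R` in increasing order. -/
def Adm (R : ℕ) (l : List ℕ) : Prop := l.Pairwise (· < ·) ∧ (∀ x ∈ l, x < R) ∧ l.length ≤ 4

lemma part_triple_dv (a b d : ℕ) (hab : a < b) (hbd : b < d) (hd : d < R) (i j : ℕ) :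
    (T.part [a, b, d]).dv i j = T.v a b i j + T.v b d i j - T.v a d i j := by
  simp only [Coch.dv, part]
  apply potential_dv _ (fun i j => T.v a b i j + T.v b d i j - T.v a d i j)
  · intro j
    rw [T.v0 a b j hab (by omega), T.v0 b d j hbd hd, T.v0 a d j (by omega) hd]
    simp
  · intro i j
    have h1 := T.dE a b i j hab (by omega)
    have h2 := T.dE b d i j hbd hd
    have h3 := T.dE a d i j (by omega) hd
    linarith

lemma part_triple_dh (a b d : ℕ) (i j : ℕ) :
    (T.part [a, b, d]).dh i j = T.h a b i j + T.h b d i j - T.h a d i j := by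
  simp only [Coch.dh, part, potential_dh]

lemma part_bdry {l : List ℕ} (hl : Adm R l) (i j : ℕ) :
    Face.listBdry (fun l => (T.part l).w i j) l = 0 ∧
    Face.listBdry (fun l => (T.part l).h i j) l = (T.part l).dh i j ∧
    Face.listBdry (fun l => (T.part l).v i j) l = (T.part l).dv i j ∧
    Face.listBdry (fun l => (T.part l).p i j) l = - (T.part l).dE i j := by
  obtain ⟨h1, h2, h3⟩ := hl
  match l, h1, h2, h3 with
  | [], _, _, _ => simp [Face.listBdry, part, Coch.dh, Coch.dv, Coch.dE]
  | [a], _, _, _ => simp [Face.listBdry, part, Coch.dh, Coch.dv, Coch.dE]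
  | [a, b], h1, h2, _ =>
    have hab : a < b := by simpa using h1
    have := T.dE a b i j hab (h2 b (by simp))
    simp only [Face.listBdry, part, Coch.dh, Coch.dv, Coch.dE, Pi.zero_apply, this]
    simp
  | [a, b, d], h1, h2, _ =>
    have h1' : (a < b ∧ a < d) ∧ b < d := by simpa using h1
    rw [part_triple_dh, part_triple_dv T a b d h1'.1.1 h1'.2 (h2 d (by simp))]
    simp only [Face.listBdry, part, Coch.dE, Pi.zero_apply]
    refine ⟨by ring, by ring, by ring, by ring⟩
  | [a, b, d, e], h1, h2, _ =>
    simp only [Face.listBdry, part, Coch.dh, Coch.dv, Coch.dE, Pi.zero_apply, potential_sub,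
      potential_add]
    refine ⟨by ring, by ring, by ring, by ring⟩

lemma part_supp {l : List ℕ} (hl : Adm R l) : Coch.Supp c {x | x ∈ l} (T.part l) := by
  obtain ⟨h1, h2, h3⟩ := hl
  match l, h1, h2, h3 with
  | [], _, _, _ => constructor <;> simp [part, Coch.dE]
  | [a], _, _, _ => constructor <;> simp [part, Coch.dE]
  | [a, b], h1, h2, _ =>
    have hab : a < b := by simpa using h1
    have hb := h2 b (by simp)
    have ha := h2 a (by simp)
    constructor
    · intro i j h
      simpa using T.hs a b i j hab hb h
    · intro i j h
      simpa using T.vs a b i j hab hb h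
    · intro i j h
      have hd := T.dE a b i j hab hb
      simp only [Coch.dE, part] at h
      rw [hd] at h
      by_cases hz : T.P a i j = 0
      · have := T.Ps b i j hb (by intro h0; simp [hz, h0] at h)
        simp [this]
      · have := T.Ps a i j ha hz
        simp [this]
    · intro i j h
      have hd := T.dE a b i j hab hb
      simp only [Coch.dE, part] at h
      rw [hd] at h
      by_cases hz : T.P a i j = 0
      · have := T.Ps b i j hb (by intro h0; simp [hz, h0] at h)
        simp [this]
      · have := T.Ps a i j ha hz
        simp [this]
    · simp [part]
    · simp [part]
  | [a, b, d], h1, h2, _ =>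
    have h1' : (a < b ∧ a < d) ∧ b < d := by simpa using h1
    have hd := h2 d (by simp)
    have hb := h2 b (by simp)
    constructor
    · simp [part]
    · simp [part]
    · simp [part, Coch.dE]
    · simp [part, Coch.dE]
    · intro i j h
      have := T.part_triple_dh a b d i j
      rw [Coch.dh] at this
      have hne : T.h a b i j + T.h b d i j - T.h a d i j ≠ 0 := by
        rw [← this]; exact sub_ne_zero.mpr h
      by_cases z1 : T.h a b i j = 0
      · by_cases z2 : T.h b d i j = 0
        · have z3 : T.h a d i j ≠ 0 := by intro h0; simp [z1, z2, h0] at hne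
          have := T.hs a d i j h1'.1.2 hd z3
          simp; tauto
        · have := T.hs b d i j h1'.2 hd z2
          simp; tauto
      · have := T.hs a b i j h1'.1.1 hb z1
        simp; tauto
    · intro i j h
      have := T.part_triple_dv a b d h1'.1.1 h1'.2 hd i j
      rw [Coch.dv] at this
      have hne : T.v a b i j + T.v b d i j - T.v a d i j ≠ 0 := by
        rw [← this]; exact sub_ne_zero.mpr h
      by_cases z1 : T.v a b i j = 0
      · by_cases z2 : T.v b d i j = 0
        · have z3 : T.v a d i j ≠ 0 := by intro h0; simp [z1, z2, h0] at hne
          have := T.vs a d i j h1'.1.2 hd z3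
          simp; tauto
        · have := T.vs b d i j h1'.2 hd z2
          simp; tauto
      · have := T.vs a b i j h1'.1.1 hb z1
        simp; tauto
  | [a, b, d, e], h1, h2, _ => constructor <;> simp [part, Coch.dE]

lemma part_bd {l : List ℕ} (hl : Adm R l) : Coch.Bd n (T.part l) := by
  obtain ⟨h1, h2, h3⟩ := hl
  match l, h1, h2, h3 with
  | [], _, _, _ => constructor <;> simp [part]
  | [a], _, _, _ => constructor <;> simp [part]
  | [a, b], h1, h2, _ =>
    have hab : a < b := by simpa using h1
    have hb := h2 b (by simp)
    exact ⟨fun i => T.h0 a b i hab hb, fun i => T.hn a b i hab hb, fun j => T.v0 a b j hab hb,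
      fun j => T.vn a b j hab hb⟩
  | [a, b, d], h1, h2, _ => constructor <;> simp [part]
  | [a, b, d, e], h1, h2, _ => constructor <;> simp [part]

end Stage

/-- An elementary deformation between two stages, moving only the label `u`. -/
structure Move {n R : ℕ} {c : ℕ → ℕ} (T T' : Stage n R c) (u : ℕ) where
  sh : ℕ → ℕ → ℤ
  sv : ℕ → ℕ → ℤ
  hP : ∀ a, a ≠ u → T'.P a = T.P a
  hh : ∀ a b, a ≠ u → b ≠ u → T'.h a b = T.h a b
  hv : ∀ a b, a ≠ u → b ≠ u → T'.v a b = T.v a b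
  ds : ∀ i j, sh i j + sv (i + 1) j - sh i (j + 1) - sv i j = T.P u i j - T'.P u i j
  shs : ∀ i j, sh i j ≠ 0 → c i = u
  svs : ∀ i j, sv i j ≠ 0 → c j = u
  sh0 : ∀ i, sh i 0 = 0
  shn : ∀ i, sh i n = 0
  sv0 : ∀ j, sv 0 j = 0
  svn : ∀ j, sv n j = 0

namespace Move

open Stage

variable {n R : ℕ} {c : ℕ → ℕ} {T T' : Stage n R c} {u : ℕ} (D : Move T T' u)

/-- The chain homotopy of a move. -/
def hom : List ℕ → Coch
  | [a] => if a = u then ⟨0, fun i j => - D.sh i j, fun i j => - D.sv i j, 0⟩ else ⟨0, 0, 0, 0⟩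
  | [a, b] =>
    if a = u then ⟨potential (fun i j => T'.h a b i j - T.h a b i j + D.sh i j), 0, 0, 0⟩
    else if b = u then ⟨potential (fun i j => T'.h a b i j - T.h a b i j - D.sh i j), 0, 0, 0⟩
    else ⟨0, 0, 0, 0⟩
  | _ => ⟨0, 0, 0, 0⟩

lemma hom_pair_dh_left (b : ℕ) (i j : ℕ) :
    (D.hom [u, b]).dh i j = T'.h u b i j - T.h u b i j + D.sh i j := by
  simp only [Coch.dh, hom, if_true, potential_dh]

lemma hom_pair_dv_left {b : ℕ} (hb : u < b) (hR : b < R) (i j : ℕ) :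
    (D.hom [u, b]).dv i j = T'.v u b i j - T.v u b i j + D.sv i j := by
  simp only [Coch.dv, hom, if_true]
  apply potential_dv _ (fun i j => T'.v u b i j - T.v u b i j + D.sv i j)
  · intro j
    rw [T.v0 u b j hb hR, T'.v0 u b j hb hR, D.sv0]
    simp
  · intro i j
    have h1 := T.dE u b i j hb hR
    have h2 := T'.dE u b i j hb hR
    have h3 := D.ds i j
    rw [D.hP b hb.ne'] at h2
    linarith

lemma hom_pair_dh_right {b : ℕ} (hb : b < u) (i j : ℕ) :
    (D.hom [b, u]).dh i j = T'.h b u i j - T.h b u i j - D.sh i j := by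
  simp only [Coch.dh, hom, if_true, hb.ne, if_false, potential_dh]

lemma hom_pair_dv_right {b : ℕ} (hb : b < u) (hR : u < R) (i j : ℕ) :
    (D.hom [b, u]).dv i j = T'.v b u i j - T.v b u i j - D.sv i j := by
  simp only [Coch.dv, hom, if_true, hb.ne, if_false]
  apply potential_dv _ (fun i j => T'.v b u i j - T.v b u i j - D.sv i j)
  · intro j
    rw [T.v0 b u j hb hR, T'.v0 b u j hb hR, D.sv0]
    simp
  · intro i j
    have h1 := T.dE b u i j hb hR
    have h2 := T'.dE b u i j hb hR
    have h3 := D.ds i j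
    rw [D.hP b hb.ne] at h2
    linarith

lemma part_eq_of_notMem (D : Move T T' u) {l : List ℕ} (hu : u ∉ l) : T'.part l = T.part l := by
  match l with
  | [] => rfl
  | [a] =>
    simp only [List.mem_singleton] at hu
    simp only [part, D.hP a (Ne.symm hu)]
  | [a, b] =>
    simp only [List.mem_cons, List.not_mem_nil, or_false, not_or] at hu
    simp only [part, D.hh a b (Ne.symm hu.1) (Ne.symm hu.2),
      D.hv a b (Ne.symm hu.1) (Ne.symm hu.2)]
  | [a, b, d] =>
    simp only [List.mem_cons, List.not_mem_nil, or_false, not_or] at hu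
    simp only [part, D.hh a b (Ne.symm hu.1) (Ne.symm hu.2.1),
      D.hh b d (Ne.symm hu.2.1) (Ne.symm hu.2.2), D.hh a d (Ne.symm hu.1) (Ne.symm hu.2.2)]
  | _ :: _ :: _ :: _ :: _ => rfl

lemma hom_eq_zero_of_notMem {l : List ℕ} (hu : u ∉ l) : D.hom l = ⟨0, 0, 0, 0⟩ := by
  match l with
  | [] => rfl
  | [a] =>
    simp only [List.mem_singleton] at hu
    simp only [hom, Ne.symm hu, if_false]
  | [a, b] =>
    simp only [List.mem_cons, List.not_mem_nil, or_false, not_or] at hu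
    simp only [hom, Ne.symm hu.1, Ne.symm hu.2, if_false]
  | _ :: _ :: _ :: _ => rfl

lemma hom_p (l : List ℕ) (i j : ℕ) : (D.hom l).p i j = 0 := by
  match l with
  | [] => rfl
  | [a] => simp only [hom]; split_ifs <;> rfl
  | [a, b] => simp only [hom]; split_ifs <;> rfl
  | _ :: _ :: _ :: _ => rfl

lemma sub_eq {l : List ℕ} (hl : Adm R l) (hu : u ∈ l) (i j : ℕ) :
    (T'.part l).w i j = (T.part l).w i j + Face.listBdry (fun l => (D.hom l).w i j) l ∧
    (T'.part l).h i j = (T.part l).h i j +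
      ((D.hom l).dh i j - Face.listBdry (fun l => (D.hom l).h i j) l) ∧
    (T'.part l).v i j = (T.part l).v i j +
      ((D.hom l).dv i j - Face.listBdry (fun l => (D.hom l).v i j) l) ∧
    (T'.part l).p i j = (T.part l).p i j + (D.hom l).dE i j := by
  obtain ⟨h1, h2, h3⟩ := hl
  have hR := h2 u hu
  match l, h1, h2, h3, hu with
  | [a], _, _, _, hu =>
    have : u = a := by simpa using hu
    subst this
    have hd := D.ds i j
    simp only [Face.listBdry, part, hom, Coch.dh, Coch.dv, Coch.dE, if_true, Pi.zero_apply]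
    refine ⟨by simp, by simp, by simp, by linarith⟩
  | [a, b], h1, h2, _, hu =>
    have hab : a < b := by simpa using h1
    have hb := h2 b (by simp)
    rcases (by simpa using hu : u = a ∨ u = b) with rfl | rfl
    · rw [D.hom_pair_dh_left, D.hom_pair_dv_left hab hb]
      simp only [Face.listBdry, part, hom, Coch.dE, if_true, hab.ne', if_false, Pi.zero_apply]
      refine ⟨by ring, by ring, by ring, by ring⟩
    · rw [D.hom_pair_dh_right hab, D.hom_pair_dv_right hab hb]
      simp only [Face.listBdry, part, hom, Coch.dE, if_true, hab.ne, if_false, Pi.zero_apply]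
      refine ⟨by ring, by ring, by ring, by ring⟩
  | [a, b, d], h1, h2, _, hu =>
    have h1' : (a < b ∧ a < d) ∧ b < d := by simpa using h1
    obtain ⟨⟨hab, had⟩, hbd⟩ := h1'
    rcases (by simpa using hu : u = a ∨ u = b ∨ u = d) with rfl | rfl | rfl
    · simp only [Face.listBdry, part, hom, Coch.dE, Coch.dh, Coch.dv, if_true, hab.ne', had.ne',
        if_false, Pi.zero_apply, potential_add, potential_sub,
        D.hh b d hab.ne' had.ne']
      refine ⟨by ring, by ring, by ring, by ring⟩
    · simp only [Face.listBdry, part, hom, Coch.dE, Coch.dh, Coch.dv, if_true, hab.ne, hbd.ne',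
        if_false, Pi.zero_apply, potential_add, potential_sub,
        D.hh a d hab.ne hbd.ne']
      refine ⟨by ring, by ring, by ring, by ring⟩
    · simp only [Face.listBdry, part, hom, Coch.dE, Coch.dh, Coch.dv, if_true, had.ne, hbd.ne,
        if_false, Pi.zero_apply, potential_add, potential_sub,
        D.hh a b had.ne hbd.ne]
      refine ⟨by ring, by ring, by ring, by ring⟩
  | [a, b, d, e], h1, h2, _, hu =>
    simp [Face.listBdry, part, hom, Coch.dE, Coch.dh, Coch.dv]

lemma supp_zero (S : Set ℕ) : Coch.Supp c S ⟨0, 0, 0, 0⟩ := by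
  constructor <;> simp [Coch.dE]

lemma bd_zero : Coch.Bd n ⟨0, 0, 0, 0⟩ := by
  constructor <;> simp

lemma hom_bd (l : List ℕ) : Coch.Bd n (D.hom l) := by
  match l with
  | [] => exact bd_zero
  | [a] =>
    simp only [hom]
    split_ifs
    · exact ⟨fun i => by simp [D.sh0], fun i => by simp [D.shn], fun i => by simp [D.sv0],
        fun i => by simp [D.svn]⟩
    · exact bd_zero
  | [a, b] =>
    simp only [hom]
    split_ifs <;> constructor <;> simp
  | _ :: _ :: _ :: _ => exact bd_zero

lemma hom_supp {l : List ℕ} (hl : Adm R l) : Coch.Supp c {x | x ∈ l} (D.hom l) := by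
  by_cases hu : u ∈ l
  swap
  · rw [D.hom_eq_zero_of_notMem hu]
    exact supp_zero _
  obtain ⟨h1, h2, h3⟩ := hl
  have hR := h2 u hu
  match l, h1, h2, h3, hu with
  | [a], _, _, _, hu =>
    have : u = a := by simpa using hu
    subst this
    have hP : ∀ i j, (D.hom [u]).dE i j ≠ 0 → c i = u ∧ c j = u := by
      intro i j h
      have hd := D.ds i j
      simp only [hom, if_true, Coch.dE] at h
      by_cases hz : T.P u i j = 0
      · exact T'.Ps u i j hR (by intro h0; apply h; linarith)
      · exact T.Ps u i j hR hz
    constructor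
    · intro i j h
      simp only [hom, if_true, ne_eq, neg_eq_zero] at h
      simpa using D.shs i j h
    · intro i j h
      simp only [hom, if_true, ne_eq, neg_eq_zero] at h
      simpa using D.svs i j h
    · intro i j h
      simpa using (hP i j h).1
    · intro i j h
      simpa using (hP i j h).2
    · simp [hom]
    · simp [hom]
  | [a, b], h1, h2, _, hu =>
    have hab : a < b := by simpa using h1
    have hb := h2 b (by simp)
    rcases (by simpa using hu : u = a ∨ u = b) with rfl | rfl
    · constructor
      · simp [hom]
      · simp [hom]
      · simp [hom, Coch.dE]
      · simp [hom, Coch.dE]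
      · intro i j h
        have hd := D.hom_pair_dh_left b i j
        rw [Coch.dh] at hd
        have hne := sub_ne_zero.mpr h
        rw [hd] at hne
        have k1 := T.hs u b i j hab hb
        have k2 := T'.hs u b i j hab hb
        have k3 := D.shs i j
        by_contra hcon
        simp only [Set.mem_ofPred_eq, List.mem_cons, List.not_mem_nil, or_false] at hcon
        apply hne
        rw [not_not.mp (mt k1 hcon), not_not.mp (mt k2 hcon), not_not.mp (mt k3 (by tauto))]
        simp
      · intro i j h
        have hd := D.hom_pair_dv_left hab hb i j
        rw [Coch.dv] at hd
        have hne := sub_ne_zero.mpr h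
        rw [hd] at hne
        have k1 := T.vs u b i j hab hb
        have k2 := T'.vs u b i j hab hb
        have k3 := D.svs i j
        by_contra hcon
        simp only [Set.mem_ofPred_eq, List.mem_cons, List.not_mem_nil, or_false] at hcon
        apply hne
        rw [not_not.mp (mt k1 hcon), not_not.mp (mt k2 hcon), not_not.mp (mt k3 (by tauto))]
        simp
    · constructor
      · simp [hom, hab.ne]
      · simp [hom, hab.ne]
      · simp [hom, Coch.dE, hab.ne]
      · simp [hom, Coch.dE, hab.ne]
      · intro i j h
        have hd := D.hom_pair_dh_right hab i j
        rw [Coch.dh] at hd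
        have hne := sub_ne_zero.mpr h
        rw [hd] at hne
        have k1 := T.hs a u i j hab hb
        have k2 := T'.hs a u i j hab hb
        have k3 := D.shs i j
        by_contra hcon
        simp only [Set.mem_ofPred_eq, List.mem_cons, List.not_mem_nil, or_false] at hcon
        apply hne
        rw [not_not.mp (mt k1 hcon), not_not.mp (mt k2 hcon), not_not.mp (mt k3 (by tauto))]
        simp
      · intro i j h
        have hd := D.hom_pair_dv_right hab hb i j
        rw [Coch.dv] at hd
        have hne := sub_ne_zero.mpr h
        rw [hd] at hne
        have k1 := T.vs a u i j hab hb
        have k2 := T'.vs a u i j hab hb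
        have k3 := D.svs i j
        by_contra hcon
        simp only [Set.mem_ofPred_eq, List.mem_cons, List.not_mem_nil, or_false] at hcon
        apply hne
        rw [not_not.mp (mt k1 hcon), not_not.mp (mt k2 hcon), not_not.mp (mt k3 (by tauto))]
        simp
  | [a, b, d], h1, h2, _, hu => exact supp_zero _
  | [a, b, d, e], h1, h2, _, hu => exact supp_zero _

end Move

namespace Move

open Stage Cell Coch

variable {n R : ℕ} {c : ℕ → ℕ} {T T' : Stage n R c} {u : ℕ} (D : Move T T' u)
variable {I : Type*} [Fintype I] [LinearOrder I]

/-- The cochains of a family of faces, with the first one replaced by the homotopy of a move. -/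
def fam (z : I) (b : I → Face) (t : I) : Coch :=
  if t = z then D.hom (b t).labels else T.part (b t).labels

/-- Removal of the label in group `s` from the face `m` of a family. -/
def delAt (b : I → Face) (m : I) (s : Fin 4) : I → Face := Function.update b m ((b m).del s)

/-- The sign with which the removal of a label enters the total boundary of a family of faces. -/
def delSign (e : I → ℕ) (b : I → Face) (m : I) (s : Fin 4) : ℤ :=
  if (b m s).isSome then (-1) ^ (e m + (b m).pos s) else 0

lemma delSign_eq (e : I → ℕ) (b : I → Face) (m : I) (s : Fin 4) :
    delSign e b m s = (-1) ^ e m * (if (b m s).isSome then (-1) ^ (b m).pos s else 0) := by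
  unfold delSign
  split_ifs
  · rw [pow_add]
  · simp

lemma fam_delAt_cells (z : I) (b : I → Face) (m : I) (s : Fin 4) (i j : ℕ) :
    cells (D.fam z (delAt b m s)) i j = Function.update (cells (D.fam z b) i j) m
      ((if m = z then D.hom ((b m).del s).labels else T.part ((b m).del s).labels).cell i j) := by
  funext t
  by_cases ht : t = m
  · subst ht
    simp [cells, fam, delAt]
  · simp [cells, fam, delAt, ht]

/-- The effect of a move on the top degree part of a product over pairwise disjoint faces. -/
lemma top_sub_top (z : I) (hz : ∀ i, z ≤ i) (e : I → ℕ) (he : e z = 0) (b : I → Face)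
    (hadm : ∀ t, Adm R (b t).labels)
    (hdis : ∀ t l x, x ∈ (b t).labels → x ∈ (b l).labels → t = l) (hu : u ∈ (b z).labels) :
    ∑ i ∈ range n, ∑ j ∈ range n, top e (cells (fun t => T'.part (b t).labels) i j) =
    ∑ i ∈ range n, ∑ j ∈ range n, top e (cells (fun t => T.part (b t).labels) i j) +
    ∑ i ∈ range n, ∑ j ∈ range n, ∑ m, ∑ s, delSign e b m s *
      top (fun t => e t + if m < t then 1 else 0) (cells (D.fam z (delAt b m s)) i j) := by
  have hA : ∀ t, Supp c {x | x ∈ (b t).labels} (D.fam z b t) := by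
    intro t
    unfold fam
    split_ifs
    · exact D.hom_supp (hadm t)
    · exact T.part_supp (hadm t)
  have hB : ∀ t, Bd n (D.fam z b t) := by
    intro t
    unfold fam
    split_ifs
    · exact D.hom_bd _
    · exact T.part_bd (hadm t)
  have hY := sum_top_dcell n c (fun t => {x | x ∈ (b t).labels})
    (fun t l htl => Set.disjoint_left.mpr (fun x h1 h2 => htl (hdis t l x h1 h2)))
    (D.fam z b) hA hB e z hz he
  have e1 : ∀ i j, cells (fun t => T'.part (b t).labels) i j =
      Function.update (cells (D.fam z b) i j) z ((T'.part (b z).labels).cell i j) := by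
    intro i j
    funext t
    by_cases ht : t = z
    · subst ht; simp [cells]
    · have hnu : u ∉ (b t).labels := fun h => ht (hdis t z u h hu)
      simp [cells, ht, fam, D.part_eq_of_notMem hnu]
  have e2 : ∀ i j, cells (fun t => T.part (b t).labels) i j =
      Function.update (cells (D.fam z b) i j) z ((T.part (b z).labels).cell i j) := by
    intro i j
    funext t
    by_cases ht : t = z
    · subst ht; simp [cells]
    · simp [cells, ht, fam]
  set k : I → Fin 4 → ℤ := fun m s => if (b m s).isSome then (-1) ^ (b m).pos s else 0 with hk
  have e3 : ∀ i j, top e (cells (fun t => T'.part (b t).labels) i j) =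
      top e (cells (fun t => T.part (b t).labels) i j) +
      (top e (Function.update (cells (D.fam z b) i j) z (dcell 1 (D.fam z b z) i j)) +
      ∑ s, k z s * top (fun t => e t + if z < t then 1 else 0)
        (cells (D.fam z (delAt b z s)) i j)) := by
    intro i j
    obtain ⟨q1, q2, q3, q4⟩ := D.sub_eq (hadm z) hu i j
    set N : Cell := ⟨Face.listBdry (fun l => (D.hom l).w i j) (b z).labels,
      Face.listBdry (fun l => (D.hom l).h i j) (b z).labels,
      Face.listBdry (fun l => (D.hom l).v i j) (b z).labels, 0⟩ with hN
    set N' : Cell := ⟨N.w, - N.h, - N.v, 0⟩ with hN'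
    set M : Cell := ⟨N.w, (D.fam z b z).dh i j - N.h, (D.fam z b z).dv i j - N.v,
      (D.fam z b z).dE i j⟩ with hM
    have hfz : D.fam z b z = D.hom (b z).labels := by simp [fam]
    rw [e1, e2, top_update_add e _ z ((T.part (b z).labels).cell i j) M _ q1
      (by rw [hM, hfz]; exact q2) (by rw [hM, hfz]; exact q3) (by rw [hM, hfz]; exact q4),
      top_update_add e _ z (dcell 1 (D.fam z b z) i j) N' M (by simp [dcell, hM, hN'])
      (by simp [dcell, hM, hN']; ring) (by simp [dcell, hM, hN']; ring) (by simp [dcell, hM, hN']),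
      top_update_neg e _ z hz N N' rfl rfl rfl rfl]
    congr 2
    rw [top_update_sum _ _ z univ (k z) (fun s => (D.hom ((b z).del s).labels).cell i j) N]
    · apply Finset.sum_congr rfl
      intro s _
      rw [fam_delAt_cells]
      simp
    · exact (Face.sum_del_eq (fun l => (D.hom l).w i j) (b z)).symm
    · exact (Face.sum_del_eq (fun l => (D.hom l).h i j) (b z)).symm
    · exact (Face.sum_del_eq (fun l => (D.hom l).v i j) (b z)).symm
    · simp [cell, hN, hom_p]
  have e4 : ∀ i j m, m ≠ z → top (fun t => e t + if m < t then 1 else 0)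
      (Function.update (cells (D.fam z b) i j) m (dcell (-1) (D.fam z b m) i j)) =
      ∑ s, k m s * top (fun t => e t + if m < t then 1 else 0)
        (cells (D.fam z (delAt b m s)) i j) := by
    intro i j m hm
    have hfm : D.fam z b m = T.part (b m).labels := by simp [fam, hm]
    obtain ⟨q1, q2, q3, q4⟩ := T.part_bdry (hadm m) i j
    rw [top_update_sum _ _ m univ (k m) (fun s => (T.part ((b m).del s).labels).cell i j)]
    · apply Finset.sum_congr rfl
      intro s _
      rw [fam_delAt_cells]
      simp [hm]
    · rw [← Face.sum_del_eq] at q1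
      exact q1.symm
    · rw [← Face.sum_del_eq] at q2
      rw [hfm]
      exact q2.symm
    · rw [← Face.sum_del_eq] at q3
      rw [hfm]
      exact q3.symm
    · rw [← Face.sum_del_eq] at q4
      rw [hfm]
      simp only [dcell, neg_one_mul]
      exact q4.symm
  have e5 : ∀ i j, (∑ m, ∑ s, delSign e b m s *
      top (fun t => e t + if m < t then 1 else 0) (cells (D.fam z (delAt b m s)) i j)) =
      (∑ m, (if m = z then 0 else (-1) ^ e m *
        top (fun t => e t + if m < t then 1 else 0)
          (Function.update (cells (D.fam z b) i j) m (dcell (-1) (D.fam z b m) i j)))) +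
      ∑ s, k z s * top (fun t => e t + if z < t then 1 else 0)
        (cells (D.fam z (delAt b z s)) i j) := by
    intro i j
    rw [← Finset.add_sum_erase _ _ (mem_univ z),
      ← Finset.add_sum_erase (f := fun m => if m = z then (0:ℤ) else _) _ (mem_univ z)]
    simp only [if_true, zero_add]
    rw [add_comm]
    congr 1
    · apply Finset.sum_congr rfl
      intro m hm
      have hm' := ne_of_mem_erase hm
      simp only [hm', if_false]
      rw [e4 i j m hm', Finset.mul_sum]
      apply Finset.sum_congr rfl
      intro s _
      rw [delSign_eq, mul_assoc]
    · apply Finset.sum_congr rfl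
      intro s _
      rw [delSign_eq, he]
      simp [hk]
  simp only [e3, e5, Finset.sum_add_distrib]
  rw [hY]

end Move

/-- The indicator of a proposition. -/
def ind (P : Prop) [Decidable P] : ℕ := if P then 1 else 0

lemma neg_one_pow_congr_mod {a b : ℕ} (h : a % 2 = b % 2) : (-1 : ℤ) ^ a = (-1) ^ b := by
  rw [neg_one_pow_eq_pow_mod_two, h, ← neg_one_pow_eq_pow_mod_two]

lemma neg_one_pow_eq_neg {a b : ℕ} (h : (a + b) % 2 = 1) : (-1 : ℤ) ^ a = - (-1) ^ b := by
  have : (-1 : ℤ) ^ a = (-1) ^ (b + 1) := neg_one_pow_congr_mod (by omega)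
  rw [this, pow_succ]; ring

namespace Cell

variable {I : Type*} [Fintype I] [LinearOrder I]

lemma top_congr_sg {e e' : I → ℕ} (h : ∀ i l, i ≠ l → sg e i l = sg e' i l) (A : I → Cell) :
    top e A = top e' A := by
  unfold top
  congr 1
  apply Finset.sum_congr rfl
  intro i _
  apply Finset.sum_congr rfl
  intro l _
  split_ifs with hil
  · rfl
  · rw [h i l hil]

lemma top_congr_mod {e e' : I → ℕ} (h : ∀ i, e i % 2 = e' i % 2) (A : I → Cell) :
    top e A = top e' A := by
  apply top_congr_sg
  intro i l _
  apply neg_one_pow_congr_mod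
  have := h i
  have := h l
  omega

lemma top_reindex {e e' : I → ℕ} (ρ : Equiv.Perm I)
    (h : ∀ i l, i ≠ l → sg e' (ρ i) (ρ l) = sg e i l) (A : I → Cell) :
    top e' A = top e (fun t => A (ρ t)) := by
  unfold top
  congr 1
  · congr 1
    rw [← Equiv.sum_comp ρ]
    apply Finset.sum_congr rfl
    intro i _
    rw [← Equiv.prod_comp ρ]
    simp only [EmbeddingLike.apply_eq_iff_eq]
  · rw [← Equiv.sum_comp ρ]
    apply Finset.sum_congr rfl
    intro i _
    rw [← Equiv.sum_comp ρ]
    apply Finset.sum_congr rfl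
    intro l _
    simp only [EmbeddingLike.apply_eq_iff_eq]
    split_ifs with hil
    · rfl
    · rw [h i l hil, ← Equiv.prod_comp ρ]
      simp only [EmbeddingLike.apply_eq_iff_eq]

lemma top_eq_zero_of_cell (e : I → ℕ) (A : I → Cell) (m : I) (h : A m = ⟨0, 0, 0, 0⟩) :
    top e A = 0 := by
  obtain ⟨α, β, γ, δ, hl⟩ := exists_top_update_linear e A m
  have := hl (A m)
  rw [Function.update_eq_self] at this
  rw [this, h]
  simp

end Cell

section signs

variable {p : ℕ}

/-- The sign exponent of a colouring with omitted colours `x`. -/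
def signG (x : Fin 4 → Fin p) : ℕ :=
  ∑ s, (x s : ℕ) + ∑ s, ∑ r, if r < s then ind (x s < x r) else 0

/-- The sign exponents of the faces of a colouring with omitted colours `x`. -/
def nu (x : Fin 4 → Fin p) (i : Fin p) : ℕ := i + ∑ s, ind (x s < i)

/-- The position of the label in group `s` in the face of colour `m`. -/
def posx (x : Fin 4 → Fin p) (m : Fin p) (s : Fin 4) : ℕ :=
  ∑ r, if r < s then ind (if r = 0 then x r = m else x r ≠ m) else 0

lemma ind_trich (y x : Fin p) : ind (y < x) + ind (x < y) + ind (x = y) = 1 := by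
  unfold ind
  rcases lt_trichotomy y x with h | h | h
  · simp [h, h.not_gt, h.ne']
  · simp [h]
  · simp [h, h.not_gt, h.ne]

lemma ind_ne (y x : Fin p) : ind (x ≠ y) + ind (x = y) = 1 := by
  unfold ind
  by_cases h : x = y <;> simp [h]

lemma ind_self (y : Fin p) : ind (y < y) = 0 := by simp [ind]

lemma ind_eq_zero (y x : Fin p) (h : x ≠ y) : ind (x = y) = 0 := by simp [ind, h]

lemma parity_swap (x : Fin 4 → Fin p) (a : Fin 3) (m : Fin p) (hm : m ≠ x a.succ) :
    (signG x + nu x m + posx x m a.succ + (signG (Function.update x a.succ m) +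
      nu (Function.update x a.succ m) (x a.succ) +
      posx (Function.update x a.succ m) (x a.succ) a.succ)) % 2 = 1 := by
  have t1 := ind_trich (x 0) m
  have t2 := ind_trich (x 1) m
  have t3 := ind_trich (x 2) m
  have t4 := ind_trich (x 3) m
  have u1 := ind_trich (x 0) (x a.succ)
  have u2 := ind_trich (x 1) (x a.succ)
  have u3 := ind_trich (x 2) (x a.succ)
  have u4 := ind_trich (x 3) (x a.succ)
  have s1 := ind_trich m (x 0)
  have s2 := ind_trich m (x 1)
  have s3 := ind_trich m (x 2)
  have s4 := ind_trich m (x 3)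
  have w1 := ind_trich (x a.succ) (x 0)
  have w2 := ind_trich (x a.succ) (x 1)
  have w3 := ind_trich (x a.succ) (x 2)
  have w4 := ind_trich (x a.succ) (x 3)
  have v1 := ind_ne m (x 1)
  have v2 := ind_ne m (x 2)
  have y1 := ind_ne (x a.succ) (x 1)
  have y2 := ind_ne (x a.succ) (x 2)
  have n1 := ind_eq_zero _ _ hm
  have n2 := ind_self m
  have n3 := ind_self (x a.succ)
  simp only [signG, nu, posx, Fin.sum_univ_four]
  fin_cases a
  · simp [Function.update] at *
    omega
  · simp [Function.update] at *
    omega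
  · simp [Function.update] at *
    omega

lemma nu_swap (x : Fin 4 → Fin p) (s : Fin 4) (m i : Fin p) :
    nu (Function.update x s m) i + ind (x s < i) = nu x i + ind (m < i) := by
  unfold nu
  rw [← Finset.add_sum_erase _ _ (mem_univ s),
    ← Finset.add_sum_erase (f := fun s => ind (x s < i)) _ (mem_univ s)]
  have : ∑ t ∈ univ.erase s, ind (Function.update x s m t < i) =
      ∑ t ∈ univ.erase s, ind (x t < i) :=
    Finset.sum_congr rfl (fun t ht => by rw [Function.update_of_ne (ne_of_mem_erase ht)])
  rw [this, Function.update_self]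
  omega

lemma parity_first (x : Fin 4 → Fin p) (m : Fin p) :
    (signG (Function.update x 0 m) + nu (Function.update x 0 m) m) % 2 =
      (∑ a : Fin 3, (x a.succ : ℕ) +
        ∑ a : Fin 3, ∑ b : Fin 3, if b < a then ind (x a.succ < x b.succ) else 0) % 2 := by
  have n2 := ind_self m
  simp only [signG, nu, Fin.sum_univ_four, Fin.sum_univ_three]
  simp [Function.update] at *
  omega

end signs

section cyclic

variable {p : ℕ} [NeZero p]

lemma fin_val_add_one (hp : 2 ≤ p) (i : Fin p) :
    ((i + 1 : Fin p) : ℕ) + p * ind ((i : ℕ) + 1 = p) = i + 1 := by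
  have h1 : ((1 : Fin p) : ℕ) = 1 := by
    rw [Fin.val_one']
    exact Nat.mod_eq_of_lt (by omega)
  rw [Fin.val_add, h1]
  unfold ind
  split_ifs with h
  · rw [h]; simp
  · rw [Nat.mod_eq_of_lt (by omega)]; simp

lemma ind_cyclic (hp : 2 ≤ p) (y x : Fin p) :
    (ind (y + 1 < x + 1) + ind (y < x) + ind ((y : ℕ) + 1 = p) + ind ((x : ℕ) + 1 = p)) % 2 = 0 := by
  have h1 := fin_val_add_one hp y
  have h2 := fin_val_add_one hp x
  simp only [ind, Fin.lt_def] at h1 h2 ⊢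
  generalize ((y + 1 : Fin p) : ℕ) = y' at h1 ⊢
  generalize ((x + 1 : Fin p) : ℕ) = x' at h2 ⊢
  have := y.isLt
  have := x.isLt
  split_ifs at h1 h2 ⊢ <;> omega

lemma signG_cyclic (hp : 2 ≤ p) (hodd : p % 2 = 1) (x : Fin 4 → Fin p) :
    signG (fun s => x s + 1) % 2 = signG x % 2 := by
  have e : ∀ s, (((x s + 1 : Fin p) : ℕ) + ind ((x s : ℕ) + 1 = p)) % 2 = (x s + 1) % 2 := by
    intro s
    have := fin_val_add_one hp (x s)
    obtain ⟨k, hk⟩ : ∃ k, p = 2 * k + 1 := ⟨p / 2, by omega⟩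
    generalize ind ((x s : ℕ) + 1 = p) = d at *
    have h2 : p * d = 2 * (k * d) + d := by rw [hk]; ring
    omega
  have e0 := e 0
  have e1 := e 1
  have e2 := e 2
  have e3 := e 3
  have c10 := ind_cyclic hp (x 1) (x 0)
  have c20 := ind_cyclic hp (x 2) (x 0)
  have c21 := ind_cyclic hp (x 2) (x 1)
  have c30 := ind_cyclic hp (x 3) (x 0)
  have c31 := ind_cyclic hp (x 3) (x 1)
  have c32 := ind_cyclic hp (x 3) (x 2)
  simp only [signG, Fin.sum_univ_four]
  simp
  omega

lemma nu_cyclic (hp : 2 ≤ p) (hodd : p % 2 = 1) (x : Fin 4 → Fin p) (i l : Fin p) :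
    (nu (fun s => x s + 1) (i + 1) + nu (fun s => x s + 1) (l + 1) + ind (l + 1 < i + 1)) % 2 =
      (nu x i + nu x l + ind (l < i)) % 2 := by
  have e : ∀ s : Fin p, (((s + 1 : Fin p) : ℕ) + ind ((s : ℕ) + 1 = p)) % 2 = (s + 1) % 2 := by
    intro s
    have := fin_val_add_one hp s
    obtain ⟨k, hk⟩ : ∃ k, p = 2 * k + 1 := ⟨p / 2, by omega⟩
    generalize ind ((s : ℕ) + 1 = p) = d at *
    have h2 : p * d = 2 * (k * d) + d := by rw [hk]; ring
    omega
  have ei := e i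
  have el := e l
  have i0 := ind_cyclic hp (x 0) i
  have i1 := ind_cyclic hp (x 1) i
  have i2 := ind_cyclic hp (x 2) i
  have i3 := ind_cyclic hp (x 3) i
  have l0 := ind_cyclic hp (x 0) l
  have l1 := ind_cyclic hp (x 1) l
  have l2 := ind_cyclic hp (x 2) l
  have l3 := ind_cyclic hp (x 3) l
  have li := ind_cyclic hp l i
  simp only [nu, Fin.sum_univ_four]
  omega

end cyclic

/-- Colourings of a distinguished vertex and of three blocks of `p - 1` vertices by `p` colours, in
such a way that the vertices of each block receive different colours. -/
abbrev Coloring (p : ℕ) := Fin p × (Fin 3 → Equiv.Perm (Fin p))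

namespace Coloring

variable {p : ℕ} [NeZero p]

/-- The label of the vertex `r` of the block `a`. -/
def rank (p : ℕ) (a : Fin 3) (r : Fin p) : ℕ := a * (p - 1) + r

/-- The face of colour `i`. -/
def face (κ : Coloring p) (i : Fin p) : Face :=
  Fin.cons (if κ.1 = i then some 0 else none)
    (fun a => if (κ.2 a).symm i = 0 then none else some (rank p a ((κ.2 a).symm i)))

/-- The colour of the distinguished vertex, and the colours omitted by the three blocks. -/
def om (κ : Coloring p) : Fin 4 → Fin p := Fin.cons κ.1 (fun a => κ.2 a 0)

lemma face_zero (κ : Coloring p) (i : Fin p) :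
    face κ i 0 = if κ.1 = i then some 0 else none := rfl

lemma face_succ (κ : Coloring p) (i : Fin p) (a : Fin 3) :
    face κ i a.succ = if (κ.2 a).symm i = 0 then none else some (rank p a ((κ.2 a).symm i)) := rfl

lemma om_zero (κ : Coloring p) : om κ 0 = κ.1 := rfl

lemma om_succ (κ : Coloring p) (a : Fin 3) : om κ a.succ = κ.2 a 0 := rfl

lemma rank_bounds (a : Fin 3) (r : Fin p) (hr : r ≠ 0) :
    (a : ℕ) * (p - 1) < rank p a r ∧ rank p a r ≤ (a + 1) * (p - 1) := by
  have h0 : 0 < (r : ℕ) := by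
    rw [Nat.pos_iff_ne_zero]
    intro h
    exact hr (Fin.ext (by simp [h]))
  have := r.isLt
  unfold rank
  constructor
  · omega
  · rw [add_mul]; omega

lemma rank_lt_rank (a b : Fin 3) (r t : Fin p) (hr : r ≠ 0) (ht : t ≠ 0) (hab : a < b) :
    rank p a r < rank p b t := by
  have h1 := (rank_bounds a r hr).2
  have h2 := (rank_bounds b t ht).1
  have : ((a : ℕ) + 1) * (p - 1) ≤ b * (p - 1) := Nat.mul_le_mul_right _ hab
  omega

lemma rank_inj (a b : Fin 3) (r t : Fin p) (hr : r ≠ 0) (ht : t ≠ 0) (h : rank p a r = rank p b t) :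
    a = b ∧ r = t := by
  rcases lt_trichotomy a b with hab | hab | hab
  · exact absurd h (rank_lt_rank a b r t hr ht hab).ne
  · subst hab
    refine ⟨rfl, Fin.ext ?_⟩
    unfold rank at h
    omega
  · exact absurd h (rank_lt_rank b a t r ht hr hab).ne'

lemma mem_labels_face (κ : Coloring p) (i : Fin p) (u : ℕ) :
    u ∈ (face κ i).labels ↔
      (u = 0 ∧ κ.1 = i) ∨ ∃ a r, r ≠ 0 ∧ u = rank p a r ∧ κ.2 a r = i := by
  rw [Face.mem_labels, Fin.exists_fin_succ]
  apply or_congr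
  · rw [face_zero]
    split_ifs with h
    · simp [h, eq_comm]
    · simp [h]
  · apply exists_congr
    intro a
    rw [face_succ]
    constructor
    · intro h
      split_ifs at h with h0
      refine ⟨_, h0, ?_, Equiv.apply_symm_apply _ _⟩
      simpa using h.symm
    · rintro ⟨r, hr, hu, hi⟩
      have : (κ.2 a).symm i = r := by rw [← hi]; simp
      rw [this]
      simp [hr, hu]

lemma pos_face (κ : Coloring p) (i : Fin p) (s : Fin 4) :
    (face κ i).pos s = posx (om κ) i s := by
  unfold Face.pos posx
  apply Finset.sum_congr rfl
  intro r _
  by_cases hr : r < s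
  · simp only [hr, true_and, if_true, ind]
    refine Fin.cases ?_ (fun a => ?_) r
    · rw [face_zero, om_zero]
      simp
    · rw [face_succ, om_succ]
      have h1 : (κ.2 a).symm i = 0 ↔ κ.2 a 0 = i := by
        rw [Equiv.symm_apply_eq, eq_comm]
      by_cases h : κ.2 a 0 = i
      · simp [h1.mpr h, h]
      · simp [h1, h]
  · simp [hr]

lemma isSome_face_succ (κ : Coloring p) (i : Fin p) (a : Fin 3) :
    (face κ i a.succ).isSome ↔ (κ.2 a).symm i ≠ 0 := by
  rw [face_succ]
  split_ifs with h <;> simp [h]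

lemma disjoint_face (κ : Coloring p) (t l : Fin p) (u : ℕ) (h1 : u ∈ (face κ t).labels)
    (h2 : u ∈ (face κ l).labels) : t = l := by
  rw [mem_labels_face] at h1 h2
  rcases h1 with ⟨h0, h1⟩ | ⟨a, r, hr, hu, h1⟩ <;> rcases h2 with ⟨h0', h2⟩ | ⟨b, r', hr', hu', h2⟩
  · rw [← h1, h2]
  · have := (rank_bounds b r' hr').1
    omega
  · have := (rank_bounds a r hr).1
    omega
  · obtain ⟨rfl, rfl⟩ := rank_inj a b r r' hr hr' (by rw [← hu, hu'])
    rw [← h1, h2]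

lemma exists_mem_face (κ : Coloring p) (u : ℕ) (hu : u < 3 * (p - 1) + 1) :
    ∃ i, u ∈ (face κ i).labels := by
  by_cases h0 : u = 0
  · exact ⟨κ.1, (mem_labels_face _ _ _).mpr (Or.inl ⟨h0, rfl⟩)⟩
  · have hq : 0 < p - 1 := by omega
    have hr : (u - 1) % (p - 1) + 1 < p := by
      have := Nat.mod_lt (u - 1) hq
      omega
    have ha : (u - 1) / (p - 1) < 3 := by
      rw [Nat.div_lt_iff_lt_mul hq]
      omega
    refine ⟨_, (mem_labels_face _ _ _).mpr (Or.inr ⟨⟨_, ha⟩, ⟨_, hr⟩, ?_, ?_, rfl⟩)⟩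
    · intro h
      have := congrArg Fin.val h
      simp at this
    · have := Nat.div_add_mod (u - 1) (p - 1)
      simp only [rank]
      rw [mul_comm]
      omega

lemma adm_face (κ : Coloring p) (i : Fin p) : Stage.Adm (3 * (p - 1) + 1) (face κ i).labels := by
  refine ⟨?_, ?_, Face.labels_length_le _⟩
  · have key : ∀ s t : Fin 4, s < t → ∀ x ∈ face κ i s, ∀ y ∈ face κ i t, x < y := by
      intro s t
      refine Fin.cases ?_ (fun a => ?_) s <;> refine Fin.cases ?_ (fun b => ?_) t
      · simp
      · intro _ x hx y hy
        rw [face_zero] at hx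
        rw [face_succ] at hy
        split_ifs at hx hy with h1 h2
        · simp at hy
        · have := (rank_bounds b _ h2).1
          simp at hx hy
          omega
        · simp at hx
        · simp at hx
      · simp
      · intro hab x hx y hy
        rw [face_succ] at hx hy
        split_ifs at hx hy with h1 h2 h2
        · simp at hx
        · simp at hx
        · simp at hy
        · have := rank_lt_rank a b _ _ h1 h2 (by simpa using hab)
          simp at hx hy
          omega
    have one : ∀ o : Option ℕ, o.toList.Pairwise (· < ·) := by
      intro o
      cases o <;> simp
    unfold Face.labels
    simp only [List.pairwise_append, List.mem_append, Option.mem_toList]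
    refine ⟨one _, ⟨one _, ⟨one _, one _, ?_⟩, ?_⟩, ?_⟩
    · exact key 2 3 (by decide)
    · rintro x hx y (hy | hy)
      · exact key 1 2 (by decide) x hx y hy
      · exact key 1 3 (by decide) x hx y hy
    · rintro x hx y (hy | hy | hy)
      · exact key 0 1 (by decide) x hx y hy
      · exact key 0 2 (by decide) x hx y hy
      · exact key 0 3 (by decide) x hx y hy
  · intro x hx
    rw [mem_labels_face] at hx
    rcases hx with ⟨h, _⟩ | ⟨a, r, hr, h, _⟩
    · omega
    · have := (rank_bounds a r hr).2
      have : ((a : ℕ) + 1) * (p - 1) ≤ 3 * (p - 1) := Nat.mul_le_mul_right _ a.isLt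
      omega

end Coloring

namespace Coloring

open Stage Cell Coch Move

variable {p : ℕ} [NeZero p] {n : ℕ} {c : ℕ → ℕ}

/-- The signed contribution of a colouring. -/
def val (T : Stage n (3 * (p - 1) + 1) c) (κ : Coloring p) : ℤ :=
  (-1) ^ signG (om κ) * ∑ i ∈ range n, ∑ j ∈ range n,
    top (nu (om κ)) (cells (fun t => T.part (face κ t).labels) i j)

/-- The signed sum over the colourings giving the colour `i` to the label `u`. -/
def Zsum (T : Stage n (3 * (p - 1) + 1) c) (u : ℕ) (i : Fin p) : ℤ :=
  ∑ κ : Coloring p, if u ∈ (face κ i).labels then val T κ else 0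

/-- The cyclic shift of the colours. -/
def shift : Coloring p ≃ Coloring p :=
  Equiv.prodCongr (Equiv.addRight 1) (Equiv.piCongrRight fun _ => Equiv.mulLeft (Equiv.addRight 1))

lemma face_shift (κ : Coloring p) (i : Fin p) : face (shift κ) (i + 1) = face κ i := by
  funext s
  refine Fin.cases ?_ (fun a => ?_) s
  · rw [face_zero, face_zero]
    simp [shift]
  · rw [face_succ, face_succ]
    have : ((shift κ).2 a).symm (i + 1) = (κ.2 a).symm i := by
      rw [Equiv.symm_apply_eq]
      simp [shift]
    rw [this]

lemma om_shift (κ : Coloring p) : om (shift κ) = fun s => om κ s + 1 := by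
  funext s
  refine Fin.cases ?_ (fun a => ?_) s
  · simp [om_zero, shift]
  · simp [om_succ, shift]

lemma val_shift (hp : 2 ≤ p) (hodd : p % 2 = 1) (T : Stage n (3 * (p - 1) + 1) c)
    (κ : Coloring p) : val T (shift κ) = val T κ := by
  unfold val
  rw [om_shift, neg_one_pow_congr_mod (signG_cyclic hp hodd (om κ))]
  refine congrArg₂ (fun a b : ℤ => a * b) rfl ?_
  apply Finset.sum_congr rfl
  intro i _
  apply Finset.sum_congr rfl
  intro j _
  rw [top_reindex (e := nu (om κ)) (Equiv.addRight 1)]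
  · congr 1
    funext t
    simp only [cells, Equiv.coe_addRight, face_shift]
  · intro i l _
    apply neg_one_pow_congr_mod
    exact nu_cyclic hp hodd (om κ) i l

lemma Zsum_succ (hp : 2 ≤ p) (hodd : p % 2 = 1) (T : Stage n (3 * (p - 1) + 1) c) (u : ℕ)
    (i : Fin p) : Zsum T u (i + 1) = Zsum T u i := by
  unfold Zsum
  rw [← Equiv.sum_comp shift]
  simp only [face_shift, val_shift hp hodd]

lemma Zsum_eq (hp : 2 ≤ p) (hodd : p % 2 = 1) (T : Stage n (3 * (p - 1) + 1) c) (u : ℕ)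
    (i : Fin p) : Zsum T u i = Zsum T u 0 := by
  have : ∀ (k : ℕ) (hk : k < p), Zsum T u ⟨k, hk⟩ = Zsum T u 0 := by
    intro k
    induction k with
    | zero => intro hk; rfl
    | succ k ih =>
      intro hk
      have e : (⟨k + 1, hk⟩ : Fin p) = ⟨k, by omega⟩ + 1 := by
        have := fin_val_add_one hp (⟨k, by omega⟩ : Fin p)
        apply Fin.ext
        simp only [ind, hk.ne, if_false, mul_zero, add_zero] at this
        rw [this]
      rw [e, Zsum_succ hp hodd, ih]
  exact this i i.isLt

lemma Zsum_total (hp : 2 ≤ p) (hodd : p % 2 = 1) (T : Stage n (3 * (p - 1) + 1) c) (u : ℕ)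
    (hu : u < 3 * (p - 1) + 1) : (p : ℤ) * Zsum T u 0 = ∑ κ : Coloring p, val T κ := by
  have h1 : ∑ i : Fin p, Zsum T u i = p * Zsum T u 0 := by
    simp [Zsum_eq hp hodd T u]
  rw [← h1]
  unfold Zsum
  rw [Finset.sum_comm]
  apply Finset.sum_congr rfl
  intro κ _
  obtain ⟨i, hi⟩ := exists_mem_face κ u hu
  rw [Finset.sum_eq_single i]
  · simp [hi]
  · intro l _ hl
    rw [if_neg]
    exact fun h => hl (disjoint_face κ l i u h hi)
  · simp

lemma Zsum_eq_Zsum (hp : 2 ≤ p) (hodd : p % 2 = 1) (T : Stage n (3 * (p - 1) + 1) c) (u : ℕ)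
    (hu : u < 3 * (p - 1) + 1) : Zsum T u 0 = Zsum T 0 0 := by
  have h1 := Zsum_total hp hodd T u hu
  have h2 := Zsum_total hp hodd T 0 (by omega)
  have : (p : ℤ) ≠ 0 := by
    have : p ≠ 0 := by omega
    exact_mod_cast this
  exact mul_left_cancel₀ this (h1.trans h2.symm)

section moves

variable {T T' : Stage n (3 * (p - 1) + 1) c} {u : ℕ} (D : Move T T' u)

/-- The top degree part obtained from a family of faces with the homotopy in the first place. -/
def homTop (b : Fin p → Face) (e : Fin p → ℕ) : ℤ :=
  ∑ i ∈ range n, ∑ j ∈ range n, top e (cells (D.fam 0 b) i j)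

/-- The contribution of the removal of the label in group `s` of the face of colour `m`. -/
def term (κ : Coloring p) (m : Fin p) (s : Fin 4) : ℤ :=
  if u ∈ (delAt (face κ) m s 0).labels then
    (-1) ^ signG (om κ) * (delSign (nu (om κ)) (face κ) m s *
      homTop D (delAt (face κ) m s) (fun t => nu (om κ) t + if m < t then 1 else 0)) else 0

lemma homTop_eq_zero (b : Fin p → Face) (e : Fin p → ℕ) (hu : u ∉ (b 0).labels) :
    homTop D b e = 0 := by
  unfold homTop
  apply Finset.sum_eq_zero
  intro i _
  apply Finset.sum_eq_zero
  intro j _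
  apply top_eq_zero_of_cell _ _ 0
  simp [cells, fam, D.hom_eq_zero_of_notMem hu, cell]

lemma mem_labels_of_mem_del (b : Fin p → Face) (m : Fin p) (s : Fin 4) (t : Fin p)
    (h : u ∈ (delAt b m s t).labels) : u ∈ (b t).labels := by
  rw [Face.mem_labels] at h ⊢
  obtain ⟨s', hs'⟩ := h
  refine ⟨s', ?_⟩
  unfold delAt Face.del at hs'
  by_cases htm : t = m
  · subst htm
    rw [Function.update_self] at hs'
    by_cases hss : s' = s
    · subst hss; simp at hs'
    · rwa [Function.update_of_ne hss] at hs'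
  · rwa [Function.update_of_ne htm] at hs'

lemma fin_zero_le (i : Fin p) : (0 : Fin p) ≤ i := by
  rw [Fin.le_def]
  simp

lemma nu_zero (x : Fin 4 → Fin p) : nu x 0 = 0 := by
  unfold nu ind
  simp

lemma Zsum_move : Zsum T' u 0 = Zsum T u 0 + ∑ κ : Coloring p, ∑ m, ∑ s, term D κ m s := by
  unfold Zsum
  rw [← Finset.sum_add_distrib]
  apply Finset.sum_congr rfl
  intro κ _
  by_cases hu : u ∈ (face κ 0).labels
  · rw [if_pos hu, if_pos hu]
    unfold val
    rw [D.top_sub_top 0 fin_zero_le (nu (om κ)) (nu_zero _) (face κ) (adm_face κ)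
      (fun t l x h1 h2 => disjoint_face κ t l x h1 h2) hu, mul_add]
    congr 1
    rw [Finset.mul_sum]
    have e1 : ∀ i, (-1 : ℤ) ^ signG (om κ) * ∑ j ∈ range n, ∑ m, ∑ s,
        delSign (nu (om κ)) (face κ) m s *
        top (fun t => nu (om κ) t + if m < t then 1 else 0)
          (cells (D.fam 0 (delAt (face κ) m s)) i j) =
        ∑ m, ∑ s, ∑ j ∈ range n, (-1 : ℤ) ^ signG (om κ) * (delSign (nu (om κ)) (face κ) m s *
        top (fun t => nu (om κ) t + if m < t then 1 else 0)
          (cells (D.fam 0 (delAt (face κ) m s)) i j)) := by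
      intro i
      rw [Finset.mul_sum]
      simp only [Finset.mul_sum]
      rw [Finset.sum_comm]
      apply Finset.sum_congr rfl
      intro m _
      rw [Finset.sum_comm]
    simp only [e1]
    rw [Finset.sum_comm]
    apply Finset.sum_congr rfl
    intro m _
    rw [Finset.sum_comm]
    apply Finset.sum_congr rfl
    intro s _
    simp only [← Finset.mul_sum]
    unfold term
    split_ifs with hd
    · rfl
    · have := homTop_eq_zero D (delAt (face κ) m s)
        (fun t => nu (om κ) t + if m < t then 1 else 0) hd
      unfold homTop at this
      rw [this]
      simp
  · rw [if_neg hu, if_neg hu, zero_add]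
    symm
    apply Finset.sum_eq_zero
    intro m _
    apply Finset.sum_eq_zero
    intro s _
    unfold term
    rw [if_neg]
    exact fun h => hu (mem_labels_of_mem_del _ _ _ _ h)

/-- Exchange of the vertex `r` of the block `a` with the omitted colour. -/
def exch (a : Fin 3) (r : Fin p) (κ : Coloring p) : Coloring p :=
  (κ.1, Function.update κ.2 a (κ.2 a * Equiv.swap 0 r))

lemma exch_exch (a : Fin 3) (r : Fin p) (κ : Coloring p) : exch a r (exch a r κ) = κ := by
  simp [exch, mul_assoc]

lemma om_exch (a : Fin 3) (r : Fin p) (κ : Coloring p) :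
    om (exch a r κ) = Function.update (om κ) a.succ (κ.2 a r) := by
  funext s
  refine Fin.cases ?_ (fun b => ?_) s
  · rw [Function.update_of_ne (Fin.succ_ne_zero a).symm]; rfl
  · by_cases hb : b = a
    · subst hb
      simp [om_succ, exch]
    · rw [Function.update_of_ne (by simpa using hb)]
      simp [om_succ, exch, hb]

lemma delAt_face_apply (a : Fin 3) (r : Fin p) (κ : Coloring p) (i : Fin p) (s : Fin 4) :
    delAt (face κ) (κ.2 a r) a.succ i s =
      if s = a.succ ∧ (κ.2 a).symm i = r then none else face κ i s := by
  unfold delAt Face.del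
  have h1 : (κ.2 a).symm i = r ↔ i = κ.2 a r := by rw [Equiv.symm_apply_eq]
  by_cases hi : i = κ.2 a r
  · rw [hi, Function.update_self]
    by_cases hs : s = a.succ
    · subst hs; simp
    · simp [hs]
  · rw [Function.update_of_ne hi]
    simp [h1, hi]

lemma delAt_exch (a : Fin 3) (r : Fin p) (hr : r ≠ 0) (κ : Coloring p) :
    delAt (face (exch a r κ)) ((exch a r κ).2 a r) a.succ =
      delAt (face κ) (κ.2 a r) a.succ := by
  funext i s
  rw [delAt_face_apply, delAt_face_apply]
  refine Fin.cases ?_ (fun b => ?_) s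
  · simp [(Fin.succ_ne_zero a).symm, face_zero, exch]
  · by_cases hb : b = a
    · subst hb
      have e1 : ((exch b r κ).2 b).symm i = Equiv.swap 0 r ((κ.2 b).symm i) := by
        rw [Equiv.symm_apply_eq]
        simp [exch]
      rw [e1, face_succ, face_succ, e1]
      generalize (κ.2 b).symm i = y
      by_cases h0 : y = 0
      · subst h0
        simp
      · by_cases hyr : y = r
        · subst hyr
          simp
        · rw [Equiv.swap_apply_of_ne_of_ne h0 hyr]
    · simp [face_succ, exch, hb]

lemma term_exch (a : Fin 3) (r : Fin p) (hr : r ≠ 0) (κ : Coloring p) :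
    term D (exch a r κ) ((exch a r κ).2 a r) a.succ = - term D κ (κ.2 a r) a.succ := by
  unfold term
  rw [delAt_exch a r hr κ]
  split_ifs with h
  · have h1 : (exch a r κ).2 a r = κ.2 a 0 := by simp [exch]
    have hne : κ.2 a r ≠ om κ a.succ := by
      rw [om_succ]
      exact fun h => hr ((κ.2 a).injective h)
    have hs1 : (face κ (κ.2 a r) a.succ).isSome := by
      rw [isSome_face_succ]; simpa using hr
    have hs2 : (face (exch a r κ) ((exch a r κ).2 a r) a.succ).isSome := by
      rw [isSome_face_succ]; simpa using hr
    unfold delSign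
    rw [if_pos hs1, if_pos hs2, pos_face, pos_face, om_exch, h1, ← om_succ]
    have hpar := parity_swap (om κ) a (κ.2 a r) hne
    have hsign : (-1 : ℤ) ^ signG (Function.update (om κ) a.succ (κ.2 a r)) *
        (-1) ^ (nu (Function.update (om κ) a.succ (κ.2 a r)) (om κ a.succ) +
          posx (Function.update (om κ) a.succ (κ.2 a r)) (om κ a.succ) a.succ) =
        - ((-1) ^ signG (om κ) * (-1) ^ (nu (om κ) (κ.2 a r) + posx (om κ) (κ.2 a r) a.succ)) := by
      rw [← pow_add, ← pow_add]
      apply neg_one_pow_eq_neg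
      omega
    have hexp : (fun t => nu (Function.update (om κ) a.succ (κ.2 a r)) t +
        if om κ a.succ < t then 1 else 0) =
        fun t => nu (om κ) t + if κ.2 a r < t then 1 else 0 := by
      funext t
      exact nu_swap (om κ) a.succ (κ.2 a r) t
    rw [hexp, ← mul_assoc, hsign, ← mul_assoc]
    ring
  · simp

lemma sum_term_succ (a : Fin 3) : ∑ κ : Coloring p, ∑ m, term D κ m a.succ = 0 := by
  have h1 : ∀ κ : Coloring p, ∑ m, term D κ m a.succ = ∑ r, term D κ (κ.2 a r) a.succ :=
    fun κ => (Equiv.sum_comp (κ.2 a) _).symm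
  simp only [h1]
  rw [Finset.sum_comm]
  apply Finset.sum_eq_zero
  intro r _
  by_cases hr : r = 0
  · subst hr
    apply Finset.sum_eq_zero
    intro κ _
    have : ¬ (face κ (κ.2 a 0) a.succ).isSome := by
      rw [isSome_face_succ]; simp
    unfold term delSign
    rw [if_neg this]
    simp
  · have h2 := Equiv.sum_comp (⟨exch a r, exch a r, exch_exch a r, exch_exch a r⟩ :
      Coloring p ≃ Coloring p) (fun κ => term D κ (κ.2 a r) a.succ)
    simp only [Equiv.coe_fn_mk, term_exch D a r hr, Finset.sum_neg_distrib] at h2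
    linarith

lemma om_pair (ω : Fin p) (π : Fin 3 → Equiv.Perm (Fin p)) :
    om (ω, π) = Function.update (om (0, π)) 0 ω := by
  funext s
  refine Fin.cases ?_ (fun b => ?_) s
  · simp [om_zero]
  · rw [Function.update_of_ne (Fin.succ_ne_zero b)]; rfl

lemma delAt_face_zero (ω : Fin p) (π : Fin 3 → Equiv.Perm (Fin p)) :
    delAt (face (ω, π)) ω 0 = delAt (face (0, π)) 0 0 := by
  have key : ∀ ω, delAt (face (ω, π)) ω 0 =
      fun i => Function.update (face (0, π) i) 0 none := by
    intro ω
    funext i s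
    unfold delAt Face.del
    refine Fin.cases ?_ (fun b => ?_) s
    · by_cases hi : i = ω
      · subst hi; simp
      · rw [Function.update_of_ne hi]
        simp [face_zero, Ne.symm hi]
    · by_cases hi : i = ω
      · subst hi; simp [face_succ]
      · rw [Function.update_of_ne hi]
        simp [face_succ]
  rw [key, key]

lemma term_zero (ω : Fin p) (π : Fin 3 → Equiv.Perm (Fin p)) :
    term D (ω, π) ω 0 = term D (0, π) 0 0 := by
  unfold term
  rw [delAt_face_zero]
  split_ifs with h
  · have hs : ∀ ω : Fin p, (face (ω, π) ω 0).isSome := by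
      intro ω
      rw [face_zero]; simp
    have hpos : ∀ ω : Fin p, (face (ω, π) ω).pos 0 = 0 := by
      intro ω
      simp [Face.pos]
    unfold delSign
    rw [if_pos (hs ω), if_pos (hs 0), hpos, hpos, ← mul_assoc, ← mul_assoc]
    refine congrArg₂ (fun a b : ℤ => a * b) ?_ ?_
    · rw [← pow_add, ← pow_add]
      apply neg_one_pow_congr_mod
      have h1 := parity_first (om (0, π)) ω
      have h2 := parity_first (om (0, π)) 0
      rw [← om_pair] at h1 h2
      omega
    · unfold homTop
      apply Finset.sum_congr rfl
      intro i _
      apply Finset.sum_congr rfl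
      intro j _
      apply top_congr_mod
      intro t
      have h1 := nu_swap (om (0, π)) 0 ω t
      rw [← om_pair, om_zero] at h1
      unfold ind at h1
      simp only at h1 ⊢
      omega
  · rfl

lemma sum_term_zero : (p : ℤ) ∣ ∑ κ : Coloring p, ∑ m, term D κ m 0 := by
  have h1 : ∀ κ : Coloring p, ∑ m, term D κ m 0 = term D (0, κ.2) 0 0 := by
    rintro ⟨ω, π⟩
    rw [Finset.sum_eq_single ω, term_zero]
    · intro m _ hm
      have : ¬ (face (ω, π) m 0).isSome := by
        rw [face_zero]
        simp [Ne.symm hm]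
      unfold term delSign
      rw [if_neg this]
      simp
    · simp
  simp only [h1]
  rw [Fintype.sum_prod_type]
  simp

/-- The signed sum over colourings is invariant modulo `p` under moves. -/
lemma Zsum_move_modEq (D : Move T T' u) (hp : 2 ≤ p) (hodd : p % 2 = 1) (hu : u < 3 * (p - 1) + 1) :
    Zsum T' 0 0 ≡ Zsum T 0 0 [ZMOD p] := by
  rw [← Zsum_eq_Zsum hp hodd T' u hu, ← Zsum_eq_Zsum hp hodd T u hu, Zsum_move D]
  have h1 : ∑ κ : Coloring p, ∑ m, ∑ s, term D κ m s = ∑ κ : Coloring p, ∑ m, term D κ m 0 := by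
    have h2 : ∀ κ : Coloring p, ∑ m, ∑ s, term D κ m s =
        ∑ m, term D κ m 0 + ∑ a : Fin 3, ∑ m, term D κ m a.succ := by
      intro κ
      rw [Finset.sum_comm, Fin.sum_univ_succ]
    simp only [h2, Finset.sum_add_distrib]
    have h3 : ∑ κ : Coloring p, ∑ a : Fin 3, ∑ m, term D κ m a.succ = 0 := by
      rw [Finset.sum_comm]
      exact Finset.sum_eq_zero (fun a _ => sum_term_succ D a)
    rw [h3, add_zero]
  rw [h1]
  obtain ⟨k, hk⟩ := sum_term_zero D
  rw [hk]
  exact (Int.modEq_iff_dvd.mpr ⟨-k, by ring⟩)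

end moves

end Coloring

/-- The indicator cochain of a grid square. -/
def pt (z : ℕ × ℕ) (i j : ℕ) : ℤ := if i = z.1 ∧ j = z.2 then 1 else 0

/-- The horizontal component of the cochain dual to an L-shaped path between two squares. -/
def lh (y z : ℕ × ℕ) (i j : ℕ) : ℤ :=
  if i = z.1 then (if j ≤ y.2 then 1 else 0) - (if j ≤ z.2 then 1 else 0) else 0

/-- The vertical component of the cochain dual to an L-shaped path between two squares. -/
def lv (y z : ℕ × ℕ) (i j : ℕ) : ℤ :=
  if j = y.2 then (if i ≤ z.1 then 1 else 0) - (if i ≤ y.1 then 1 else 0) else 0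

lemma lh_lv_dE (y z : ℕ × ℕ) (i j : ℕ) :
    lh y z i j + lv y z (i + 1) j - lh y z i (j + 1) - lv y z i j = pt y i j - pt z i j := by
  have key : ∀ a b : ℕ, (if a ≤ b then (1 : ℤ) else 0) =
      (if a = b then 1 else 0) + (if a + 1 ≤ b then 1 else 0) := by
    intro a b
    split_ifs <;> first | rfl | omega
  simp only [lh, lv, pt, ite_and]
  rw [key j y.2, key j z.2, key i y.1, key i z.1]
  generalize (if j + 1 ≤ y.2 then (1 : ℤ) else 0) = a
  generalize (if j + 1 ≤ z.2 then (1 : ℤ) else 0) = b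
  generalize (if i + 1 ≤ y.1 then (1 : ℤ) else 0) = d
  generalize (if i + 1 ≤ z.1 then (1 : ℤ) else 0) = e
  split_ifs <;> ring

lemma eq_of_lh_ne_zero {y z : ℕ × ℕ} {i j : ℕ} (h : lh y z i j ≠ 0) : i = z.1 := by
  by_contra hc
  simp [lh, hc] at h

lemma eq_of_lv_ne_zero {y z : ℕ × ℕ} {i j : ℕ} (h : lv y z i j ≠ 0) : j = y.2 := by
  by_contra hc
  simp [lv, hc] at h

lemma lh_bot (y z : ℕ × ℕ) (i : ℕ) : lh y z i 0 = 0 := by simp [lh]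

lemma lv_bot (y z : ℕ × ℕ) (j : ℕ) : lv y z 0 j = 0 := by simp [lv]

lemma lh_top {y z : ℕ × ℕ} {n : ℕ} (hy : y.2 < n) (hz : z.2 < n) (i : ℕ) : lh y z i n = 0 := by
  simp [lh, hy.not_ge, hz.not_ge]

lemma lv_top {y z : ℕ × ℕ} {n : ℕ} (hy : y.1 < n) (hz : z.1 < n) (j : ℕ) : lv y z n j = 0 := by
  simp [lv, hy.not_ge, hz.not_ge]

/-- The squares of the grid `[0, n)²` whose row and column have class `a`. -/
def InClass (c : ℕ → ℕ) (n a : ℕ) (z : ℕ × ℕ) : Prop := c z.1 = a ∧ c z.2 = a ∧ z.1 < n ∧ z.2 < n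

namespace Stage

variable {n R : ℕ} {c : ℕ → ℕ}

lemma part_congr {T T' : Stage n R c} (hP : ∀ a < R, T'.P a = T.P a)
    (hh : ∀ a b, a < R → b < R → T'.h a b = T.h a b)
    (hv : ∀ a b, a < R → b < R → T'.v a b = T.v a b)
    {l : List ℕ} (hl : Adm R l) : T'.part l = T.part l := by
  obtain ⟨-, h2, -⟩ := hl
  match l, h2 with
  | [], _ => rfl
  | [a], h2 => simp only [part, hP a (h2 a (by simp))]
  | [a, b], h2 =>
    simp only [part, hh a b (h2 a (by simp)) (h2 b (by simp)),
      hv a b (h2 a (by simp)) (h2 b (by simp))]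
  | [a, b, d], h2 =>
    simp only [part, hh a b (h2 a (by simp)) (h2 b (by simp)),
      hh b d (h2 b (by simp)) (h2 d (by simp)), hh a d (h2 a (by simp)) (h2 d (by simp))]
  | _ :: _ :: _ :: _ :: _, _ => rfl

/-- The stage interpolating between `T` and `T'`: the labels below `k` are at their place
in `T'`, the others at their place in `T`. -/
def interp (T T' : Stage n R c) (l l' : ℕ → ℕ × ℕ)
    (hl : ∀ a < R, InClass c n a (l a)) (hl' : ∀ a < R, InClass c n a (l' a))
    (hT : ∀ a < R, T.P a = pt (l a)) (hT' : ∀ a < R, T'.P a = pt (l' a)) (k : ℕ) :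
    Stage n R c where
  P a := if a < k then T'.P a else T.P a
  h a b i j := if b < k then T'.h a b i j else
    if a < k then T.h a b i j - lh (l a) (l' a) i j else T.h a b i j
  v a b i j := if b < k then T'.v a b i j else
    if a < k then T.v a b i j - lv (l a) (l' a) i j else T.v a b i j
  dE a b i j hab hb := by
    have h1 := T.dE a b i j hab hb
    have h2 := T'.dE a b i j hab hb
    have h3 := lh_lv_dE (l a) (l' a) i j
    rw [← hT a (by omega), ← hT' a (by omega)] at h3
    by_cases hbk : b < k
    · have hak : a < k := by omega
      simp only [hbk, hak, if_true]
      exact h2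
    · by_cases hak : a < k
      · simp only [hbk, hak, if_true, if_false]
        linarith
      · simp only [hbk, hak, if_false]
        exact h1
  hs a b i j hab hb hne := by
    by_cases hbk : b < k
    · simp only [hbk, if_true] at hne
      exact T'.hs a b i j hab hb hne
    · by_cases hak : a < k
      · simp only [hbk, hak, if_true, if_false] at hne
        by_cases hz : T.h a b i j = 0
        · have := eq_of_lh_ne_zero (y := l a) (z := l' a) (i := i) (j := j)
            (by intro h0; simp [hz, h0] at hne)
          left
          rw [this, (hl' a (by omega)).1]
        · exact T.hs a b i j hab hb hz
      · simp only [hbk, hak, if_false] at hne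
        exact T.hs a b i j hab hb hne
  vs a b i j hab hb hne := by
    by_cases hbk : b < k
    · simp only [hbk, if_true] at hne
      exact T'.vs a b i j hab hb hne
    · by_cases hak : a < k
      · simp only [hbk, hak, if_true, if_false] at hne
        by_cases hz : T.v a b i j = 0
        · have := eq_of_lv_ne_zero (y := l a) (z := l' a) (i := i) (j := j)
            (by intro h0; simp [hz, h0] at hne)
          left
          rw [this, (hl a (by omega)).2.1]
        · exact T.vs a b i j hab hb hz
      · simp only [hbk, hak, if_false] at hne
        exact T.vs a b i j hab hb hne
  Ps a i j ha hne := by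
    by_cases hak : a < k
    · simp only [hak, if_true] at hne
      exact T'.Ps a i j ha hne
    · simp only [hak, if_false] at hne
      exact T.Ps a i j ha hne
  h0 a b i hab hb := by
    simp only [T.h0 a b i hab hb, T'.h0 a b i hab hb, lh_bot, sub_zero, ite_self]
  hn a b i hab hb := by
    have ha : a < R := by omega
    simp only [T.hn a b i hab hb, T'.hn a b i hab hb,
      lh_top (hl a ha).2.2.2 (hl' a ha).2.2.2, sub_zero, ite_self]
  v0 a b i hab hb := by
    simp only [T.v0 a b i hab hb, T'.v0 a b i hab hb, lv_bot, sub_zero, ite_self]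
  vn a b i hab hb := by
    have ha : a < R := by omega
    simp only [T.vn a b i hab hb, T'.vn a b i hab hb,
      lv_top (hl a ha).2.2.1 (hl' a ha).2.2.1, sub_zero, ite_self]

/-- Consecutive interpolating stages differ by a move. -/
def interpMove (T T' : Stage n R c) (l l' : ℕ → ℕ × ℕ)
    (hl : ∀ a < R, InClass c n a (l a)) (hl' : ∀ a < R, InClass c n a (l' a))
    (hT : ∀ a < R, T.P a = pt (l a)) (hT' : ∀ a < R, T'.P a = pt (l' a)) (k : ℕ) (hk : k < R) :
    Move (interp T T' l l' hl hl' hT hT' k) (interp T T' l l' hl hl' hT hT' (k + 1)) k where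
  sh := lh (l k) (l' k)
  sv := lv (l k) (l' k)
  hP a ha := by
    have : a < k + 1 ↔ a < k := by omega
    simp only [interp, this]
  hh a b ha hb := by
    have h1 : a < k + 1 ↔ a < k := by omega
    have h2 : b < k + 1 ↔ b < k := by omega
    simp only [interp, h1, h2]
  hv a b ha hb := by
    have h1 : a < k + 1 ↔ a < k := by omega
    have h2 : b < k + 1 ↔ b < k := by omega
    simp only [interp, h1, h2]
  ds i j := by
    simp only [interp, lt_irrefl, if_false, Nat.lt_succ_self, if_true]
    rw [hT k hk, hT' k hk, lh_lv_dE]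
  shs i j h := by rw [eq_of_lh_ne_zero h, (hl' k hk).1]
  svs i j h := by rw [eq_of_lv_ne_zero h, (hl k hk).2.1]
  sh0 i := lh_bot _ _ i
  shn i := lh_top (hl k hk).2.2.2 (hl' k hk).2.2.2 i
  sv0 j := lv_bot _ _ j
  svn j := lv_top (hl k hk).2.2.1 (hl' k hk).2.2.1 j

end Stage

namespace Coloring

open Stage

variable {p : ℕ} [NeZero p] {n : ℕ} {c : ℕ → ℕ}

lemma Zsum_congr {T T' : Stage n (3 * (p - 1) + 1) c}
    (h : ∀ l, Adm (3 * (p - 1) + 1) l → T'.part l = T.part l) (u : ℕ) (i : Fin p) :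
    Zsum T' u i = Zsum T u i := by
  have : ∀ κ : Coloring p, ∀ t, T'.part (face κ t).labels = T.part (face κ t).labels :=
    fun κ t => h _ (adm_face κ t)
  simp only [Zsum, val, this]

/-- The signed sum modulo `p` does not depend on the stage. -/
lemma Zsum_modEq (hp : 2 ≤ p) (hodd : p % 2 = 1) (T T' : Stage n (3 * (p - 1) + 1) c)
    (l l' : ℕ → ℕ × ℕ)
    (hl : ∀ a < 3 * (p - 1) + 1, InClass c n a (l a))
    (hl' : ∀ a < 3 * (p - 1) + 1, InClass c n a (l' a))
    (hT : ∀ a < 3 * (p - 1) + 1, T.P a = pt (l a))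
    (hT' : ∀ a < 3 * (p - 1) + 1, T'.P a = pt (l' a)) :
    Zsum T' 0 0 ≡ Zsum T 0 0 [ZMOD p] := by
  have h1 : ∀ k ≤ 3 * (p - 1) + 1,
      Zsum (interp T T' l l' hl hl' hT hT' k) 0 0 ≡ Zsum T 0 0 [ZMOD p] := by
    intro k
    induction k with
    | zero =>
      intro _
      rw [Zsum_congr (T := T)]
      intro l hl
      apply part_congr _ _ _ hl <;> intros <;> simp [interp]
    | succ k ih =>
      intro hk
      exact (Zsum_move_modEq (interpMove T T' l l' hl hl' hT hT' k hk) hp hodd hk).trans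
        (ih (by omega))
  have h2 := h1 _ le_rfl
  rwa [Zsum_congr (T := T')] at h2
  intro l hl
  apply part_congr _ _ _ hl
  · intro a ha
    simp only [interp, ha, if_true]
  · intro a b ha hb
    simp only [interp, hb, if_true]
  · intro a b ha hb
    simp only [interp, hb, if_true]

end Coloring

namespace Cell

variable {I : Type*} [Fintype I] [LinearOrder I]

lemma top_eq_two_mul (e : I → ℕ) (A : I → Cell) :
    top e A = 2 * (∑ i, (A i).p * ∏ t, (if t = i then 1 else (A t).w) +
      ∑ i, ∑ l, if i = l then 0 else
        sg e i l * ((A i).h * (A l).v) * ∏ t, (if t = i ∨ t = l then 1 else (A t).w)) := by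
  unfold top
  rw [mul_add]
  congr 1
  have h1 : ∀ i l, (if i = l then 0 else
      sg e i l * wedge (A i) (A l) * ∏ t, (if t = i ∨ t = l then 1 else (A t).w)) =
      (if i = l then 0 else
        sg e i l * ((A i).h * (A l).v) * ∏ t, (if t = i ∨ t = l then 1 else (A t).w)) +
      (if l = i then 0 else
        sg e l i * ((A l).h * (A i).v) * ∏ t, (if t = l ∨ t = i then 1 else (A t).w)) := by
    intro i l
    by_cases h : i = l
    · simp [h]
    · simp only [h, Ne.symm h, if_false, wedge, sg_antisymm e (Ne.symm h), or_comm]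
      ring
  simp only [h1, Finset.sum_add_distrib]
  rw [Finset.sum_comm (f := fun i l => if l = i then 0 else
        sg e l i * ((A l).h * (A i).v) * ∏ t, (if t = l ∨ t = i then 1 else (A t).w))]
  ring

end Cell

namespace Stage

variable {n R : ℕ} {c : ℕ → ℕ}

/-- The stage given by L-shaped paths between given squares. -/
def ofLoc (l : ℕ → ℕ × ℕ) (hl : ∀ a < R, InClass c n a (l a)) : Stage n R c where
  P a := pt (l a)
  h a b := lh (l a) (l b)
  v a b := lv (l a) (l b)
  dE a b i j _ _ := lh_lv_dE _ _ i j
  hs a b i j _ hb h := Or.inr (by rw [eq_of_lh_ne_zero h, (hl b hb).1])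
  vs a b i j hab hb h := Or.inl (by rw [eq_of_lv_ne_zero h, (hl a (by omega)).2.1])
  Ps a i j ha h := by
    unfold pt at h
    have h' : i = (l a).1 ∧ j = (l a).2 := by
      by_contra hc
      simp [hc] at h
    rw [h'.1, h'.2]
    exact ⟨(hl a ha).1, (hl a ha).2.1⟩
  h0 a b i _ _ := lh_bot _ _ i
  hn a b i hab hb := lh_top (hl a (by omega)).2.2.2 (hl b hb).2.2.2 i
  v0 a b j _ _ := lv_bot _ _ j
  vn a b j hab hb := lv_top (hl a (by omega)).2.2.1 (hl b hb).2.2.1 j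

lemma sum_lh (y z : ℕ × ℕ) (i j : ℕ) : potential (lh y z) i j =
    if z.1 < i then (if j ≤ y.2 then 1 else 0) - (if j ≤ z.2 then 1 else 0) else 0 := by
  unfold potential lh
  rw [Finset.sum_ite_eq']
  simp

/-- The stage with all labels on the diagonal. -/
def diag (hc : ∀ a < R, InClass c n a (a, a)) : Stage n R c := ofLoc (fun a => (a, a)) hc

variable (hc : ∀ a < R, InClass c n a (a, a))

lemma diag_h {a b : ℕ} (hab : a < b) (i j : ℕ) :
    (diag hc).h a b i j = if i = b ∧ a < j ∧ j ≤ b then -1 else 0 := by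
  simp only [diag, ofLoc, lh]
  split_ifs <;> first | rfl | omega

lemma diag_v {a b : ℕ} (hab : a < b) (i j : ℕ) :
    (diag hc).v a b i j = if j = a ∧ a < i ∧ i ≤ b then 1 else 0 := by
  simp only [diag, ofLoc, lv]
  split_ifs <;> first | rfl | omega

lemma diag_w {a b d : ℕ} (hab : a < b) (hbd : b < d) (i j : ℕ) :
    potential (fun i j => (diag hc).h a b i j + (diag hc).h b d i j - (diag hc).h a d i j) i j =
      if b < i ∧ i ≤ d ∧ a < j ∧ j ≤ b then -1 else 0 := by
  rw [potential_sub (fun i j => (diag hc).h a b i j + (diag hc).h b d i j), potential_add]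
  change potential (lh _ _) i j + potential (lh _ _) i j - potential (lh _ _) i j = _
  simp only [sum_lh]
  split_ifs <;> first | rfl | omega

lemma diag_p_ne {l : List ℕ} {i j : ℕ} (h : ((diag hc).part l).p i j ≠ 0) : i = j := by
  match l with
  | [] => simp [part] at h
  | [a] =>
    simp only [part, diag, ofLoc, pt] at h
    by_contra hne
    have : ¬ (i = a ∧ j = a) := by omega
    simp [this] at h
  | [a, b] => simp [part] at h
  | [a, b, d] => simp [part] at h
  | _ :: _ :: _ :: _ :: _ => simp [part] at h

lemma diag_h_ne {l : List ℕ} (hl : Adm R l) {i j : ℕ} (h : ((diag hc).part l).h i j ≠ 0) :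
    ∃ a, l = [a, i] ∧ a < j ∧ j ≤ i := by
  match l, hl with
  | [], _ => simp [part] at h
  | [a], _ => simp [part] at h
  | [a, b], hl =>
    have hab : a < b := by simpa using hl.1
    simp only [part] at h
    rw [diag_h hc hab] at h
    have : i = b ∧ a < j ∧ j ≤ b := by
      by_contra hn
      simp [hn] at h
    obtain ⟨rfl, h2⟩ := this
    exact ⟨a, rfl, h2⟩
  | [a, b, d], _ => simp [part] at h
  | _ :: _ :: _ :: _ :: _, _ => simp [part] at h

lemma diag_v_ne {l : List ℕ} (hl : Adm R l) {i j : ℕ} (h : ((diag hc).part l).v i j ≠ 0) :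
    ∃ d, l = [j, d] ∧ j < i ∧ i ≤ d := by
  match l, hl with
  | [], _ => simp [part] at h
  | [a], _ => simp [part] at h
  | [a, b], hl =>
    have hab : a < b := by simpa using hl.1
    simp only [part] at h
    rw [diag_v hc hab] at h
    have : j = a ∧ a < i ∧ i ≤ b := by
      by_contra hn
      simp [hn] at h
    obtain ⟨rfl, h2⟩ := this
    exact ⟨b, rfl, h2⟩
  | [a, b, d], _ => simp [part] at h
  | _ :: _ :: _ :: _ :: _, _ => simp [part] at h

lemma diag_w_ne {l : List ℕ} (hl : Adm R l) {i j : ℕ} (h : ((diag hc).part l).w i j ≠ 0) :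
    ∃ a b d, l = [a, b, d] ∧ a < j ∧ j ≤ b ∧ b < i ∧ i ≤ d := by
  match l, hl with
  | [], _ => simp [part] at h
  | [a], _ => simp [part] at h
  | [a, b], _ => simp [part] at h
  | [a, b, d], hl =>
    have hab : (a < b ∧ a < d) ∧ b < d := by simpa using hl.1
    simp only [part] at h
    rw [diag_w hc hab.1.1 hab.2] at h
    have : b < i ∧ i ≤ d ∧ a < j ∧ j ≤ b := by
      by_contra hn
      simp [hn] at h
    exact ⟨a, b, d, rfl, by tauto⟩
  | _ :: _ :: _ :: _ :: _, _ => simp [part] at h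

end Stage

namespace Coloring

open Stage Cell Coch

variable {p : ℕ} [NeZero p] {n : ℕ} {c : ℕ → ℕ}

lemma card_eq_of_faces (κ : Coloring p) (U : Finset ℕ) (S : Finset (Fin p))
    (hU : ∀ u ∈ U, u < 3 * (p - 1) + 1) (h1 : ∀ t ∈ S, ∃ u ∈ U, u ∈ (face κ t).labels)
    (h2 : ∀ t, ∀ u ∈ U, ∀ u' ∈ U, u ∈ (face κ t).labels → u' ∈ (face κ t).labels → u = u')
    (h3 : ∀ t, ∀ u ∈ U, u ∈ (face κ t).labels → t ∈ S) : U.card = S.card := by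
  have hch : ∀ u : ℕ, ∃ t, u ∈ U → u ∈ (face κ t).labels := by
    intro u
    by_cases hu : u ∈ U
    · obtain ⟨t, ht⟩ := exists_mem_face κ u (hU u hu)
      exact ⟨t, fun _ => ht⟩
    · exact ⟨0, fun h => absurd h hu⟩
  choose g hg using hch
  apply Finset.card_bij (fun u _ => g u)
  · intro u hu
    exact h3 _ u hu (hg u hu)
  · intro u hu u' hu' he
    exact h2 (g u) u hu u' hu' (hg u hu) (he ▸ hg u' hu')
  · intro t ht
    obtain ⟨u, hu, hut⟩ := h1 t ht
    exact ⟨u, hu, disjoint_face κ _ _ u (hg u hu) hut⟩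

/-- The largest element of `Fin p`. -/
def lastFin (p : ℕ) [NeZero p] : Fin p := ⟨p - 1, Nat.sub_lt (NeZero.pos p) one_pos⟩

/-- The colourings contributing to the signed sum of the diagonal stage. -/
def Rainbow (κ : Coloring p) : Prop :=
  κ.2 0 0 = κ.1 ∧ κ.2 1 0 = κ.2 0 (lastFin p) ∧ κ.2 2 0 = κ.2 1 (lastFin p)

instance (κ : Coloring p) : Decidable (Rainbow κ) := by
  unfold Rainbow
  infer_instance

lemma lastFin_ne (hp : 2 ≤ p) : lastFin p ≠ 0 := by
  intro h
  have := congrArg Fin.val h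
  simp [lastFin] at this
  omega

lemma mem_face_rank (κ : Coloring p) (a : Fin 3) (r : Fin p) (hr : r ≠ 0) :
    rank p a r ∈ (face κ (κ.2 a r)).labels :=
  (mem_labels_face _ _ _).mpr (Or.inr ⟨a, r, hr, rfl, rfl⟩)

lemma colour_zero_eq (κ : Coloring p) (t : Fin p) (a : Fin 3)
    (h : ∀ u ∈ (face κ t).labels, u ≤ a * (p - 1) ∨ (a + 1) * (p - 1) < u) : κ.2 a 0 = t := by
  by_contra hne
  have h0 : (κ.2 a).symm t ≠ 0 := by
    intro h0
    exact hne (by rw [← h0]; simp)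
  have hm := mem_face_rank κ a _ h0
  rw [Equiv.apply_symm_apply] at hm
  have := rank_bounds a _ h0
  have := h _ hm
  omega

lemma rainbow_of_ne (hp : 2 ≤ p) (κ : Coloring p) (i j : ℕ) (m l : Fin p) (hml : m ≠ l)
    (hm : ∃ a, (face κ m).labels = [a, i] ∧ a < j ∧ j ≤ i)
    (hl : ∃ d, (face κ l).labels = [j, d] ∧ j < i ∧ i ≤ d)
    (ht : ∀ t, t ≠ m → t ≠ l →
      ∃ a b d, (face κ t).labels = [a, b, d] ∧ a < j ∧ j ≤ b ∧ b < i ∧ i ≤ d) :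
    Rainbow κ ∧ i = 2 * (p - 1) ∧ j = p - 1 ∧ m = κ.2 1 (lastFin p) ∧ l = κ.2 0 (lastFin p) := by
  obtain ⟨a₀, hm, ha₀, hji⟩ := hm
  obtain ⟨d₀, hl, hji', hd₀⟩ := hl
  have hlt : ∀ t, ∀ u ∈ (face κ t).labels, u < 3 * (p - 1) + 1 := fun t => (adm_face κ t).2.1
  have hcard1 := card_eq_of_faces κ (Ico i (3 * (p - 1) + 1)) univ
    (fun u hu => (mem_Ico.mp hu).2)
    (by
      intro t _
      by_cases h1 : t = m
      · subst h1
        exact ⟨i, mem_Ico.mpr ⟨le_rfl, hlt t i (by simp [hm])⟩, by simp [hm]⟩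
      · by_cases h2 : t = l
        · subst h2
          exact ⟨d₀, mem_Ico.mpr ⟨hd₀, hlt t d₀ (by simp [hl])⟩, by simp [hl]⟩
        · obtain ⟨a, b, d, hf, _⟩ := ht t h1 h2
          exact ⟨d, mem_Ico.mpr ⟨by omega, hlt t d (by simp [hf])⟩, by simp [hf]⟩)
    (by
      intro t u hu u' hu' h3 h4
      rw [mem_Ico] at hu hu'
      by_cases h1 : t = m
      · subst h1
        simp [hm] at h3 h4
        omega
      · by_cases h2 : t = l
        · subst h2
          simp [hl] at h3 h4
          omega
        · obtain ⟨a, b, d, hf, _⟩ := ht t h1 h2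
          simp [hf] at h3 h4
          omega)
    (fun _ _ _ _ => mem_univ _)
  have hiR := hlt m i (by simp [hm])
  rw [Nat.card_Ico, card_univ, Fintype.card_fin] at hcard1
  have hcard2 := card_eq_of_faces κ (range j) (univ.erase l)
    (fun u hu => by rw [mem_range] at hu; omega)
    (by
      intro t htl
      have h2 := ne_of_mem_erase htl
      by_cases h1 : t = m
      · subst h1
        exact ⟨a₀, mem_range.mpr ha₀, by simp [hm]⟩
      · obtain ⟨a, b, d, hf, h⟩ := ht t h1 h2
        exact ⟨a, mem_range.mpr h.1, by simp [hf]⟩)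
    (by
      intro t u hu u' hu' h3 h4
      rw [mem_range] at hu hu'
      by_cases h1 : t = m
      · subst h1
        simp [hm] at h3 h4
        omega
      · by_cases h2 : t = l
        · subst h2
          simp [hl] at h3 h4
          omega
        · obtain ⟨a, b, d, hf, _⟩ := ht t h1 h2
          simp [hf] at h3 h4
          omega)
    (by
      intro t u hu hut
      refine mem_erase.mpr ⟨?_, mem_univ _⟩
      rintro rfl
      rw [mem_range] at hu
      simp [hl] at hut
      omega)
  rw [card_range, card_erase_of_mem (mem_univ _), card_univ, Fintype.card_fin] at hcard2
  have hi : i = 2 * (p - 1) := by omega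
  have hlast := lastFin_ne hp
  have hr0 : rank p 0 (lastFin p) = j := by simp [rank, lastFin, hcard2]
  have hr1 : rank p 1 (lastFin p) = i := by simp [rank, lastFin, hi]; omega
  have hmc : m = κ.2 1 (lastFin p) :=
    disjoint_face κ _ _ i (by simp [hm]) (hr1 ▸ mem_face_rank κ 1 _ hlast)
  have hlc : l = κ.2 0 (lastFin p) :=
    disjoint_face κ _ _ j (by simp [hl]) (hr0 ▸ mem_face_rank κ 0 _ hlast)
  have hd : d₀ ≠ i := by
    rintro rfl
    exact hml (disjoint_face κ _ _ d₀ (by simp [hm]) (by simp [hl]))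
  refine ⟨⟨?_, ?_, ?_⟩, hi, hcard2, hmc, hlc⟩
  · have hol : κ.2 0 0 ≠ l := by
      rw [hlc]
      exact fun h => hlast ((κ.2 0).injective h).symm
    obtain ⟨a, haj, ha⟩ : ∃ a, a < j ∧ a ∈ (face κ (κ.2 0 0)).labels := by
      by_cases h1 : κ.2 0 0 = m
      · exact ⟨a₀, ha₀, by simp [h1, hm]⟩
      · obtain ⟨a, b, d, hf, h⟩ := ht _ h1 hol
        exact ⟨a, h.1, by simp [hf]⟩
    rcases (mem_labels_face _ _ _).mp ha with ⟨_, h⟩ | ⟨b, r, hr, hu, h⟩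
    · exact h.symm
    · exfalso
      have hb : b = 0 := by
        by_contra hb
        have h1 := (rank_bounds b r hr).1
        have h2 : 1 ≤ (b : ℕ) := Nat.one_le_iff_ne_zero.mpr (fun h => hb (Fin.ext h))
        have : 1 * (p - 1) ≤ b * (p - 1) := Nat.mul_le_mul_right _ h2
        omega
      subst hb
      exact hr ((κ.2 0).injective h)
  · rw [← hlc]
    apply colour_zero_eq
    intro u hu
    simp [hl] at hu
    simp
    omega
  · rw [← hmc]
    apply colour_zero_eq
    intro u hu
    simp [hm] at hu
    simp
    omega

end Coloring

namespace Coloring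

open Stage Cell Coch

variable {p : ℕ} [NeZero p] {n : ℕ} {c : ℕ → ℕ}

lemma labels_eq (κ : Coloring p) (t : Fin p) : (face κ t).labels =
    (face κ t 0).toList ++ ((face κ t (Fin.succ 0)).toList ++
      ((face κ t (Fin.succ 1)).toList ++ (face κ t (Fin.succ 2)).toList)) := rfl

lemma face_succ_apply (κ : Coloring p) (a : Fin 3) (r : Fin p) (hr : r ≠ 0) :
    face κ (κ.2 a r) a.succ = some (rank p a r) := by
  rw [face_succ]
  simp [hr]

lemma face_succ_zero (κ : Coloring p) (a : Fin 3) : face κ (κ.2 a 0) a.succ = none := by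
  rw [face_succ]
  simp

lemma rank_lt_of_ne_last (a : Fin 3) (r : Fin p) (hr : r ≠ 0) (hl : r ≠ lastFin p) :
    (a : ℕ) * (p - 1) < rank p a r ∧ rank p a r < (a + 1) * (p - 1) := by
  refine ⟨(rank_bounds a r hr).1, ?_⟩
  have h : (r : ℕ) ≠ p - 1 := fun h => hl (Fin.ext h)
  have := r.isLt
  have : ((a : ℕ) + 1) * (p - 1) = a * (p - 1) + (p - 1) := by ring
  unfold rank
  omega

namespace Rainbow

variable {κ : Coloring p}

lemma ne (hp : 2 ≤ p) (hκ : Rainbow κ) : κ.2 1 (lastFin p) ≠ κ.2 0 (lastFin p) := by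
  rw [← hκ.2.1]
  exact fun h => lastFin_ne hp ((κ.2 1).injective h)

lemma first_of_ne (hκ : Rainbow κ) {t : Fin p} (ht : t ≠ κ.2 0 (lastFin p)) :
    ∃ a < p - 1, (face κ t 0).toList ++ (face κ t (Fin.succ 0)).toList = [a] := by
  obtain ⟨r, rfl⟩ := (κ.2 0).surjective t
  by_cases hr : r = 0
  · subst hr
    refine ⟨0, ?_, ?_⟩
    · by_contra h
      apply ht
      congr 1
      apply Fin.ext
      simp [lastFin]
      omega
    · rw [face_succ_zero, face_zero, if_pos hκ.1.symm]
      simp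
  · have h := rank_lt_of_ne_last 0 r hr (fun h => ht (by rw [h]))
    refine ⟨rank p 0 r, by simpa using h.2, ?_⟩
    rw [face_succ_apply κ 0 r hr, face_zero, if_neg]
    · simp
    · rw [← hκ.1]
      exact fun h => hr ((κ.2 0).injective h).symm

lemma labels_m (hp : 2 ≤ p) (hκ : Rainbow κ) :
    ∃ a < p - 1, (face κ (κ.2 1 (lastFin p))).labels = [a, 2 * (p - 1)] := by
  obtain ⟨a, ha, hf⟩ := first_of_ne hκ (ne hp hκ)
  refine ⟨a, ha, ?_⟩
  rw [labels_eq, ← List.append_assoc, hf, face_succ_apply κ 1 _ (lastFin_ne hp), ← hκ.2.2,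
    face_succ_zero]
  simp [rank, lastFin]
  omega

lemma labels_l (hp : 2 ≤ p) (hκ : Rainbow κ) :
    ∃ d, 2 * (p - 1) < d ∧ (face κ (κ.2 0 (lastFin p))).labels = [p - 1, d] := by
  obtain ⟨r, hr⟩ := (κ.2 2).surjective (κ.2 0 (lastFin p))
  have hr0 : r ≠ 0 := by
    rintro rfl
    rw [hκ.2.2] at hr
    exact ne hp hκ hr
  refine ⟨rank p 2 r, (rank_bounds 2 r hr0).1, ?_⟩
  have h1 : face κ (κ.2 0 (lastFin p)) 0 = none := by
    rw [face_zero, if_neg]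
    rw [← hκ.1]
    exact fun h => lastFin_ne hp ((κ.2 0).injective h).symm
  have h2 : face κ (κ.2 0 (lastFin p)) (Fin.succ 0) = some (rank p 0 (lastFin p)) :=
    face_succ_apply κ 0 _ (lastFin_ne hp)
  have h3 : face κ (κ.2 0 (lastFin p)) (Fin.succ 1) = none := by
    rw [← hκ.2.1]
    exact face_succ_zero κ 1
  have h4 : face κ (κ.2 0 (lastFin p)) (Fin.succ 2) = some (rank p 2 r) := by
    rw [← hr]
    exact face_succ_apply κ 2 r hr0
  rw [labels_eq, h1, h2, h3, h4]
  simp [rank, lastFin]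

lemma labels_t (hκ : Rainbow κ) {t : Fin p} (h1 : t ≠ κ.2 1 (lastFin p))
    (h2 : t ≠ κ.2 0 (lastFin p)) : ∃ a b d, (face κ t).labels = [a, b, d] ∧
      a < p - 1 ∧ p - 1 < b ∧ b < 2 * (p - 1) ∧ 2 * (p - 1) < d := by
  obtain ⟨a, ha, hf⟩ := first_of_ne hκ h2
  obtain ⟨r, hr⟩ := (κ.2 1).surjective t
  obtain ⟨s, hs⟩ := (κ.2 2).surjective t
  have hr0 : r ≠ 0 := by
    rintro rfl
    exact h2 (hr ▸ hκ.2.1)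
  have hs0 : s ≠ 0 := by
    rintro rfl
    exact h1 (hs ▸ hκ.2.2)
  have hb := rank_lt_of_ne_last 1 r hr0 (by rintro rfl; exact h1 hr.symm)
  refine ⟨a, rank p 1 r, rank p 2 s, ?_, ha, by simpa using hb.1, hb.2, (rank_bounds 2 s hs0).1⟩
  have h3 := face_succ_apply κ 1 r hr0
  have h4 := face_succ_apply κ 2 s hs0
  rw [hr] at h3
  rw [hs] at h4
  rw [labels_eq, ← List.append_assoc, hf, h3, h4]
  simp

end Rainbow

variable (hc : ∀ a < 3 * (p - 1) + 1, InClass c n a (a, a))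

lemma sign_rainbow (hp : 2 ≤ p) {κ : Coloring p} (h0 : κ.1 = 0) (hκ : Rainbow κ) :
    (-1) ^ signG (om κ) * sg (nu (om κ)) (κ.2 1 (lastFin p)) (κ.2 0 (lastFin p)) = 1 := by
  have hne := Rainbow.ne hp hκ
  have e0 : om κ 0 = 0 := h0
  have e1 : om κ 1 = 0 := hκ.1.trans h0
  have e2 : om κ 2 = κ.2 0 (lastFin p) := hκ.2.1
  have e3 : om κ 3 = κ.2 1 (lastFin p) := hκ.2.2
  generalize κ.2 1 (lastFin p) = m at *
  generalize κ.2 0 (lastFin p) = l at *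
  unfold sg
  rw [← pow_add]
  have : (-1 : ℤ) ^ 0 = 1 := pow_zero _
  rw [← this]
  apply neg_one_pow_congr_mod
  simp only [signG, nu, Fin.sum_univ_four, e0, e1, e2, e3]
  simp [ind]
  rcases lt_or_gt_of_ne hne with h | h
  · simp only [h, h.not_gt, if_true, if_false]
    omega
  · simp only [h, h.not_gt, if_true, if_false]
    omega

lemma top_diag (hp : 2 ≤ p) (hodd : p % 2 = 1) (κ : Coloring p) (i j : ℕ) :
    top (nu (om κ)) (cells (fun t => (diag hc).part (face κ t).labels) i j) =
      if Rainbow κ ∧ i = 2 * (p - 1) ∧ j = p - 1 then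
        2 * sg (nu (om κ)) (κ.2 1 (lastFin p)) (κ.2 0 (lastFin p)) else 0 := by
  rw [top_eq_two_mul]
  set W : Fin p → Cell := cells (fun t => (diag hc).part (face κ t).labels) i j with hW
  have hfirst : ∑ m, (W m).p * ∏ t, (if t = m then 1 else (W t).w) = 0 := by
    apply Finset.sum_eq_zero
    intro m _
    by_contra hne
    have h1 := diag_p_ne hc (left_ne_zero_of_mul hne)
    obtain ⟨t, ht⟩ : ∃ t : Fin p, t ≠ m := by
      by_cases hm : m = 0
      · exact ⟨lastFin p, hm ▸ lastFin_ne hp⟩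
      · exact ⟨0, Ne.symm hm⟩
    have h2 := Finset.prod_ne_zero_iff.mp (right_ne_zero_of_mul hne) t (mem_univ t)
    rw [if_neg ht] at h2
    obtain ⟨a, b, d, -, h⟩ := diag_w_ne hc (adm_face κ t) h2
    omega
  have hterm : ∀ m l, m ≠ l → sg (nu (om κ)) m l * ((W m).h * (W l).v) *
      ∏ t, (if t = m ∨ t = l then 1 else (W t).w) ≠ 0 →
      Rainbow κ ∧ i = 2 * (p - 1) ∧ j = p - 1 ∧ m = κ.2 1 (lastFin p) ∧ l = κ.2 0 (lastFin p) := by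
    intro m l hml hne
    have h1 := right_ne_zero_of_mul (left_ne_zero_of_mul hne)
    apply rainbow_of_ne hp κ i j m l hml
    · exact diag_h_ne hc (adm_face κ m) (left_ne_zero_of_mul h1)
    · exact diag_v_ne hc (adm_face κ l) (right_ne_zero_of_mul h1)
    · intro t htm htl
      have h2 := Finset.prod_ne_zero_iff.mp (right_ne_zero_of_mul hne) t (mem_univ t)
      rw [if_neg (by tauto)] at h2
      exact diag_w_ne hc (adm_face κ t) h2
  rw [hfirst, zero_add]
  split_ifs with h
  · obtain ⟨hκ, hi, hj⟩ := h
    congr 1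
    have hne := Rainbow.ne hp hκ
    rw [Finset.sum_eq_single (κ.2 1 (lastFin p)), Finset.sum_eq_single (κ.2 0 (lastFin p)),
      if_neg hne]
    · have e1 : (W (κ.2 1 (lastFin p))).h = -1 := by
        obtain ⟨a, ha, hf⟩ := Rainbow.labels_m hp hκ
        simp only [hW, cells, cell, hf, part]
        rw [diag_h hc (by omega), if_pos (by omega)]
      have e2 : (W (κ.2 0 (lastFin p))).v = 1 := by
        obtain ⟨d, hd, hf⟩ := Rainbow.labels_l hp hκ
        simp only [hW, cells, cell, hf, part]
        rw [diag_v hc (by omega), if_pos (by omega)]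
      have e3 : ∏ t, (if t = κ.2 1 (lastFin p) ∨ t = κ.2 0 (lastFin p) then 1 else (W t).w) =
          -1 := by
        have h1 : ∀ t, (if t = κ.2 1 (lastFin p) ∨ t = κ.2 0 (lastFin p) then 1 else (W t).w) =
            if t = κ.2 1 (lastFin p) ∨ t = κ.2 0 (lastFin p) then 1 else -1 := by
          intro t
          split_ifs with h
          · rfl
          · push Not at h
            obtain ⟨a, b, d, hf, h⟩ := Rainbow.labels_t hκ h.1 h.2
            simp only [hW, cells, cell, hf, part]
            rw [diag_w hc (by omega) (by omega), if_pos (by omega)]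
        simp only [h1]
        rw [Finset.prod_ite, Finset.prod_const_one, Finset.prod_const, one_mul]
        have h2 : (univ.filter fun t : Fin p =>
            ¬ (t = κ.2 1 (lastFin p) ∨ t = κ.2 0 (lastFin p))).card = p - 2 := by
          have h3 : (univ.filter fun t : Fin p =>
              ¬ (t = κ.2 1 (lastFin p) ∨ t = κ.2 0 (lastFin p))) =
              (univ.erase (κ.2 1 (lastFin p))).erase (κ.2 0 (lastFin p)) := by
            ext t
            simp
            tauto
          rw [h3, card_erase_of_mem (by simp [Ne.symm hne]), card_erase_of_mem (mem_univ _),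
            card_univ, Fintype.card_fin]
          omega
        rw [h2]
        exact Odd.neg_one_pow (by rw [Nat.odd_iff]; omega)
      rw [e1, e2, e3]
      ring
    · intro l _ hl
      split_ifs with hml
      · rfl
      · by_contra hn
        exact hl (hterm _ _ hml hn).2.2.2.2
    · simp
    · intro m _ hm
      apply Finset.sum_eq_zero
      intro l _
      split_ifs with hml
      · rfl
      · by_contra hn
        exact hm (hterm _ _ hml hn).2.2.2.1
    · simp
  · rw [mul_eq_zero]
    right
    apply Finset.sum_eq_zero
    intro m _
    apply Finset.sum_eq_zero
    intro l _
    split_ifs with hml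
    · rfl
    · by_contra hn
      have := hterm _ _ hml hn
      tauto

lemma Zsum_diag (hp : 2 ≤ p) (hodd : p % 2 = 1) :
    Zsum (diag hc) 0 0 = ∑ κ : Coloring p, if κ.1 = 0 ∧ Rainbow κ then 2 else 0 := by
  unfold Zsum
  apply Finset.sum_congr rfl
  intro κ _
  have h0 : 0 ∈ (face κ 0).labels ↔ κ.1 = 0 := by
    rw [mem_labels_face]
    constructor
    · rintro (⟨_, h⟩ | ⟨a, r, hr, h, _⟩)
      · exact h
      · have := (rank_bounds a r hr).1
        omega
    · intro h
      exact Or.inl ⟨rfl, h⟩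
  simp only [h0]
  by_cases hκ : κ.1 = 0
  · simp only [hκ, true_and, if_true]
    unfold val
    simp only [top_diag hc hp hodd]
    by_cases hr : Rainbow κ
    · simp only [hr, true_and, if_true]
      have hn : 2 * (p - 1) < n := (hc (2 * (p - 1)) (by omega)).2.2.1
      rw [Finset.sum_eq_single (2 * (p - 1)), Finset.sum_eq_single (p - 1)]
      · simp only [true_and, if_true]
        have := sign_rainbow hp hκ hr
        linear_combination 2 * this
      · intro b _ hb
        simp [hb]
      · intro h
        exact absurd (mem_range.mpr (by omega)) h
      · intro b _ hb
        simp [hb]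
      · intro h
        exact absurd (mem_range.mpr (by omega)) h
    · simp [hr]
  · simp [hκ]

lemma sum_perm_apply (q : ℕ) [NeZero q] (y : Fin q) :
    ∑ π : Equiv.Perm (Fin q), (if π 0 = y then (1 : ℤ) else 0) = (q - 1).factorial := by
  have h1 : ∀ z, ∑ π : Equiv.Perm (Fin q), (if π 0 = z then (1 : ℤ) else 0) =
      ∑ π : Equiv.Perm (Fin q), (if π 0 = y then (1 : ℤ) else 0) := by
    intro z
    rw [← Equiv.sum_comp (Equiv.mulLeft (Equiv.swap y z))]
    apply Finset.sum_congr rfl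
    intro π _
    have : (Equiv.mulLeft (Equiv.swap y z) π) 0 = z ↔ π 0 = y := by
      simp only [Equiv.coe_mulLeft, Equiv.Perm.mul_apply]
      rw [Equiv.swap_apply_eq_iff, Equiv.swap_apply_right]
    simp only [this]
  have h2 : ∑ z : Fin q, ∑ π : Equiv.Perm (Fin q), (if π 0 = z then (1 : ℤ) else 0) =
      q.factorial := by
    rw [Finset.sum_comm]
    simp [Fintype.card_perm]
  simp only [h1] at h2
  rw [Finset.sum_const, card_univ, Fintype.card_fin, nsmul_eq_mul] at h2
  have hq : q ≠ 0 := NeZero.ne q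
  rw [← Nat.mul_factorial_pred hq, Nat.cast_mul] at h2
  exact mul_left_cancel₀ (by exact_mod_cast hq) h2

lemma Zsum_diag_eq (hp : 2 ≤ p) (hodd : p % 2 = 1) :
    Zsum (diag hc) 0 0 = 2 * ((p - 1).factorial : ℤ) ^ 3 := by
  rw [Zsum_diag hc hp hodd, Fintype.sum_prod_type, Finset.sum_eq_single 0]
  · have h1 : ∀ π : Fin 3 → Equiv.Perm (Fin p),
        (if (0 : Fin p) = 0 ∧ Rainbow ((0 : Fin p), π) then (2 : ℤ) else 0) =
        (if π 0 0 = 0 then 1 else 0) * ((if π 1 0 = π 0 (lastFin p) then 1 else 0) *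
          ((if π 2 0 = π 1 (lastFin p) then 1 else 0) * 2)) := by
      intro π
      unfold Rainbow
      simp only [true_and]
      split_ifs <;> first | rfl | tauto
    rw [Finset.sum_congr rfl (fun π _ => h1 π),
      ← (Fin.consEquiv (fun _ : Fin 3 => Equiv.Perm (Fin p))).sum_comp, Fintype.sum_prod_type]
    have h2 : ∀ π₀ : Equiv.Perm (Fin p), ∑ σ : Fin 2 → Equiv.Perm (Fin p),
        (if σ 0 0 = π₀ (lastFin p) then (1 : ℤ) else 0) *
          ((if σ 1 0 = σ 0 (lastFin p) then 1 else 0) * 2) =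
        2 * ((p - 1).factorial : ℤ) ^ 2 := by
      intro π₀
      rw [← (finTwoArrowEquiv (Equiv.Perm (Fin p))).symm.sum_comp, Fintype.sum_prod_type]
      simp only [finTwoArrowEquiv_symm_apply, Matrix.cons_val_zero, Matrix.cons_val_one,
        ← Finset.mul_sum, ← Finset.sum_mul, sum_perm_apply]
      ring
    have h3 : ∀ (π₀ : Equiv.Perm (Fin p)) (σ : Fin 2 → Equiv.Perm (Fin p)),
        (Fin.consEquiv (fun _ : Fin 3 => Equiv.Perm (Fin p))) (π₀, σ) = Fin.cons π₀ σ :=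
      fun _ _ => rfl
    have h4 : ∀ (π₀ : Equiv.Perm (Fin p)) (σ : Fin 2 → Equiv.Perm (Fin p)),
        (Fin.cons π₀ σ : Fin 3 → Equiv.Perm (Fin p)) 0 = π₀ ∧
        (Fin.cons π₀ σ : Fin 3 → Equiv.Perm (Fin p)) 1 = σ 0 ∧
        (Fin.cons π₀ σ : Fin 3 → Equiv.Perm (Fin p)) 2 = σ 1 := fun _ _ => ⟨rfl, rfl, rfl⟩
    simp only [h3, (h4 _ _).1, (h4 _ _).2.1, (h4 _ _).2.2, ← Finset.mul_sum, h2]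
    rw [← Finset.sum_mul, sum_perm_apply]
    ring
  · intro ω _ hω
    simp [hω]
  · simp

lemma Zsum_diag_not_modEq (hp : p.Prime) (hp3 : 3 ≤ p) : ¬ Zsum (diag hc) 0 0 ≡ 0 [ZMOD p] := by
  have hodd : p % 2 = 1 := Nat.odd_iff.mp (hp.odd_of_ne_two (by omega))
  rw [Zsum_diag_eq hc (by omega) hodd, Int.modEq_zero_iff_dvd]
  intro h
  have h' : p ∣ 2 * (p - 1).factorial ^ 3 := by exact_mod_cast h
  rcases (hp.dvd_mul).mp h' with h1 | h1
  · have := Nat.le_of_dvd (by norm_num) h1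
    omega
  · have := (hp.dvd_factorial).mp (hp.dvd_of_dvd_pow h1)
    omega

/-- For every stage there are a colouring and a square with nonvanishing contribution. -/
lemma exists_cell_ne_zero (hp : p.Prime) (hp3 : 3 ≤ p)
    (T : Stage n (3 * (p - 1) + 1) c) (l : ℕ → ℕ × ℕ)
    (hc : ∀ a < 3 * (p - 1) + 1, InClass c n a (a, a))
    (hl : ∀ a < 3 * (p - 1) + 1, InClass c n a (l a))
    (hT : ∀ a < 3 * (p - 1) + 1, T.P a = pt (l a)) :
    ∃ (κ : Coloring p) (i j : ℕ), i < n ∧ j < n ∧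
      ∀ t, (T.part (face κ t).labels).cell i j ≠ ⟨0, 0, 0, 0⟩ := by
  have hodd : p % 2 = 1 := Nat.odd_iff.mp (hp.odd_of_ne_two (by omega))
  by_contra hcon
  push Not at hcon
  have h0 : Zsum T 0 0 = 0 := by
    unfold Zsum
    apply Finset.sum_eq_zero
    intro κ _
    split_ifs
    · unfold val
      rw [mul_eq_zero]
      right
      apply Finset.sum_eq_zero
      intro i hi
      apply Finset.sum_eq_zero
      intro j hj
      obtain ⟨t, ht⟩ := hcon κ i j (mem_range.mp hi) (mem_range.mp hj)
      exact top_eq_zero_of_cell _ _ t ht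
    · rfl
  have h1 := Zsum_modEq (by omega) hodd T (diag hc) l (fun a => (a, a)) hl hc hT (fun _ _ => rfl)
  rw [h0] at h1
  exact Zsum_diag_not_modEq hc hp hp3 h1

end Coloring

namespace Stage

variable {n R : ℕ} {c : ℕ → ℕ}

/-- The stage given by chains of squares, consecutive squares being joined by L-shaped paths. -/
def ofChains (l : ℕ → ℕ × ℕ) (K : ℕ) (Q : ℕ → ℕ → ℕ → ℕ × ℕ)
    (hl : ∀ a < R, InClass c n a (l a)) (h0 : ∀ a b, Q a b 0 = l a) (hK : ∀ a b, Q a b K = l b)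
    (hQ : ∀ a b, a < R → ∀ k < K, InClass c n a (Q a b k)) : Stage n R c where
  P a := pt (l a)
  h a b i j := ∑ k ∈ range K, lh (Q a b k) (Q a b (k + 1)) i j
  v a b i j := ∑ k ∈ range K, lv (Q a b k) (Q a b (k + 1)) i j
  dE a b i j _ _ := by
    rw [← h0 a b, ← hK a b, ← Finset.sum_range_sub' (fun k => pt (Q a b k) i j),
      ← Finset.sum_add_distrib, ← Finset.sum_sub_distrib, ← Finset.sum_sub_distrib]
    exact Finset.sum_congr rfl (fun k _ => lh_lv_dE _ _ i j)
  hs a b i j hab hb h := by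
    obtain ⟨k, hk, hne⟩ := Finset.exists_ne_zero_of_sum_ne_zero h
    rw [mem_range] at hk
    rw [eq_of_lh_ne_zero hne]
    by_cases hk' : k + 1 = K
    · right
      rw [hk', hK, (hl b hb).1]
    · left
      exact (hQ a b (by omega) (k + 1) (by omega)).1
  vs a b i j hab hb h := by
    obtain ⟨k, hk, hne⟩ := Finset.exists_ne_zero_of_sum_ne_zero h
    rw [mem_range] at hk
    rw [eq_of_lv_ne_zero hne]
    left
    exact (hQ a b (by omega) k hk).2.1
  Ps a i j ha h := by
    unfold pt at h
    have h' : i = (l a).1 ∧ j = (l a).2 := by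
      by_contra hc
      simp [hc] at h
    rw [h'.1, h'.2]
    exact ⟨(hl a ha).1, (hl a ha).2.1⟩
  h0 a b i _ _ := Finset.sum_eq_zero (fun k _ => lh_bot _ _ i)
  hn a b i hab hb := by
    have hQ' : ∀ k ≤ K, (Q a b k).2 < n := by
      intro k hk
      rcases hk.lt_or_eq with hk | rfl
      · exact (hQ a b (by omega) k hk).2.2.2
      · rw [hK]
        exact (hl b hb).2.2.2
    refine Finset.sum_eq_zero (fun k hk => ?_)
    rw [mem_range] at hk
    exact lh_top (hQ' k hk.le) (hQ' (k + 1) hk) i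
  v0 a b j _ _ := Finset.sum_eq_zero (fun k _ => lv_bot _ _ j)
  vn a b j hab hb := by
    have hQ' : ∀ k ≤ K, (Q a b k).1 < n := by
      intro k hk
      rcases hk.lt_or_eq with hk | rfl
      · exact (hQ a b (by omega) k hk).2.2.1
      · rw [hK]
        exact (hl b hb).2.2.1
    refine Finset.sum_eq_zero (fun k hk => ?_)
    rw [mem_range] at hk
    exact lv_top (hQ' k hk.le) (hQ' (k + 1) hk) j

/-- The signed number of crossings of the leftward ray from the lower left corner of the square
`(i, j)` with the L-shaped path from `y` to `z`. -/
def crossing (y z : ℕ × ℕ) (i j : ℕ) : ℤ :=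
  if z.1 < i then (if j ≤ y.2 then 1 else 0) - (if j ≤ z.2 then 1 else 0) else 0

variable {l : ℕ → ℕ × ℕ} {K : ℕ} {Q : ℕ → ℕ → ℕ → ℕ × ℕ}
    (hl : ∀ a < R, InClass c n a (l a)) (h0 : ∀ a b, Q a b 0 = l a) (hK : ∀ a b, Q a b K = l b)
    (hQ : ∀ a b, a < R → ∀ k < K, InClass c n a (Q a b k))

lemma potential_sum (K : ℕ) (f : ℕ → ℕ → ℕ → ℤ) (i j : ℕ) :
    potential (fun i j => ∑ k ∈ range K, f k i j) i j = ∑ k ∈ range K, potential (f k) i j := by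
  unfold potential
  rw [Finset.sum_comm]

lemma near_of_ne {y z : ℕ × ℕ} {i j : ℕ} (h : lh y z i j ≠ 0 ∨ lv y z i j ≠ 0) :
    |(i : ℤ) - z.1| ≤ |(y.1 : ℤ) - z.1| ∧ |(j : ℤ) - z.2| ≤ |(y.2 : ℤ) - z.2| := by
  rcases h with h | h
  · have h1 := eq_of_lh_ne_zero h
    unfold lh at h
    rw [if_pos h1] at h
    refine ⟨by simp [h1], ?_⟩
    split_ifs at h with h2 h3 <;> first | (exfalso; omega) | 
      (rw [abs_le]; constructor <;> cases abs_cases ((y.2 : ℤ) - z.2) <;> omega)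
  · have h1 := eq_of_lv_ne_zero h
    unfold lv at h
    rw [if_pos h1] at h
    refine ⟨?_, by simp [h1]⟩
    split_ifs at h with h2 h3 <;> first | (exfalso; omega) | 
      (rw [abs_le]; constructor <;> cases abs_cases ((y.1 : ℤ) - z.1) <;> omega)

/-- What the nonvanishing of the cochain of a face at the square `(i, j)` means for a stage given
by chains of squares. -/
def ChainHit (l : ℕ → ℕ × ℕ) (K : ℕ) (Q : ℕ → ℕ → ℕ → ℕ × ℕ) (i j : ℕ) : List ℕ → Prop
  | [a] => (i, j) = l a
  | [a, b] => ∃ k < K, |(i : ℤ) - (Q a b (k + 1)).1| ≤ |((Q a b k).1 : ℤ) - (Q a b (k + 1)).1| ∧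
      |(j : ℤ) - (Q a b (k + 1)).2| ≤ |((Q a b k).2 : ℤ) - (Q a b (k + 1)).2|
  | [a, b, d] => ∑ k ∈ range K, crossing (Q a b k) (Q a b (k + 1)) i j +
      ∑ k ∈ range K, crossing (Q b d k) (Q b d (k + 1)) i j -
      ∑ k ∈ range K, crossing (Q a d k) (Q a d (k + 1)) i j ≠ 0
  | _ => False

lemma chainHit_of_ne {f : List ℕ} {i j : ℕ}
    (h : ((ofChains l K Q hl h0 hK hQ).part f).cell i j ≠ ⟨0, 0, 0, 0⟩) :
    ChainHit l K Q i j f := by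
  match f with
  | [] => exact absurd rfl h
  | [a] =>
    by_contra hc
    apply h
    have : ¬ (i = (l a).1 ∧ j = (l a).2) := fun h => hc (Prod.ext h.1 h.2)
    simp [part, Coch.cell, ofChains, pt, this]
  | [a, b] =>
    have hne : ∑ k ∈ range K, lh (Q a b k) (Q a b (k + 1)) i j ≠ 0 ∨
        ∑ k ∈ range K, lv (Q a b k) (Q a b (k + 1)) i j ≠ 0 := by
      by_contra hc
      push Not at hc
      apply h
      simp [part, Coch.cell, ofChains, hc.1, hc.2]
    rcases hne with hne | hne
    · obtain ⟨k, hk, hne⟩ := Finset.exists_ne_zero_of_sum_ne_zero hne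
      exact ⟨k, mem_range.mp hk, near_of_ne (Or.inl hne)⟩
    · obtain ⟨k, hk, hne⟩ := Finset.exists_ne_zero_of_sum_ne_zero hne
      exact ⟨k, mem_range.mp hk, near_of_ne (Or.inr hne)⟩
  | [a, b, d] =>
    intro hc
    apply h
    have hp : ∀ a b, potential ((ofChains l K Q hl h0 hK hQ).h a b) i j =
        ∑ k ∈ range K, crossing (Q a b k) (Q a b (k + 1)) i j := by
      intro a b
      change potential (fun i j => ∑ k ∈ range K, lh (Q a b k) (Q a b (k + 1)) i j) i j = _
      rw [potential_sum]
      exact Finset.sum_congr rfl (fun k _ => sum_lh _ _ i j)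
    have : potential (fun i j => (ofChains l K Q hl h0 hK hQ).h a b i j +
        (ofChains l K Q hl h0 hK hQ).h b d i j - (ofChains l K Q hl h0 hK hQ).h a d i j) i j =
        0 := by
      rw [potential_sub (fun i j => (ofChains l K Q hl h0 hK hQ).h a b i j +
        (ofChains l K Q hl h0 hK hQ).h b d i j), potential_add, hp, hp, hp]
      exact hc
    simp only [part, Coch.cell, this]
    rfl
  | _ :: _ :: _ :: _ :: _ => exact absurd rfl h

end Stage

/-- The signed number of crossings of the negative real axis when stepping from `u` to `w`. -/
def axisCrossing (u w : ℂ) : ℤ :=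
  if w.re < 0 then (if 0 < u.im then 1 else 0) - (if 0 < w.im then 1 else 0) else 0

lemma re_div_pos_of_norm_sub_lt {u w : ℂ} (h : ‖w - u‖ < ‖u‖) : 0 < (w / u).re := by
  have hu : u ≠ 0 := by
    rintro rfl
    simp at h
    linarith [norm_nonneg w]
  have h1 : ‖w / u - 1‖ < 1 := by
    rw [div_sub_one hu, norm_div, div_lt_one (norm_pos_iff.mpr hu)]
    exact h
  have h2 := (abs_lt.mp ((Complex.abs_re_le_norm (w / u - 1)).trans_lt h1)).1
  simp only [Complex.sub_re, Complex.one_re] at h2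
  linarith

lemma abs_arg_div_lt {u w : ℂ} (h : ‖w - u‖ < ‖u‖) : |(w / u).arg| < Real.pi / 2 :=
  Complex.abs_arg_lt_pi_div_two_iff.mpr (Or.inl (re_div_pos_of_norm_sub_lt h))

lemma ne_zero_of_norm_sub_lt {u w : ℂ} (h : ‖w - u‖ < ‖u‖) : w ≠ 0 := by
  rintro rfl
  simp at h

lemma ne_zero_of_norm_sub_lt' {u w : ℂ} (h : ‖w - u‖ < ‖u‖) : u ≠ 0 := by
  rintro rfl
  simp at h
  linarith [norm_nonneg w]

lemma arg_div_eq_add_axisCrossing {u w : ℂ} (hu : u.im ≠ 0) (hw : w.im ≠ 0)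
    (h : ‖w - u‖ < ‖u‖) :
    (w / u).arg = w.arg - u.arg + 2 * Real.pi * axisCrossing u w := by
  have h1 := abs_lt.mp (abs_arg_div_lt h)
  have hang := Complex.arg_div_coe_angle (ne_zero_of_norm_sub_lt h) (ne_zero_of_norm_sub_lt' h)
  rw [← Real.Angle.coe_sub, Real.Angle.angle_eq_iff_two_pi_dvd_sub] at hang
  obtain ⟨k, hk⟩ := hang
  have hpi := Real.pi_pos
  have key : k = axisCrossing u w := by
    have hlt : ∀ a b : ℤ, 2 * Real.pi * a < 2 * Real.pi * b → a < b := by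
      intro a b hab
      exact_mod_cast lt_of_mul_lt_mul_left hab (by positivity)
    unfold axisCrossing
    rcases lt_or_gt_of_ne hu with hu' | hu' <;> rcases lt_or_gt_of_ne hw with hw' | hw'
    · have a1 := Complex.arg_neg_iff.mpr hu'
      have a2 := Complex.arg_neg_iff.mpr hw'
      have a3 := Complex.neg_pi_lt_arg u
      have a4 := Complex.neg_pi_lt_arg w
      have b1 := hlt k 1 (by push_cast; linarith)
      have b2 := hlt (-1) k (by push_cast; linarith)
      rw [if_neg hu'.not_gt, if_neg hw'.not_gt]
      simp only [sub_self, ite_self]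
      omega
    · have a1 := Complex.arg_neg_iff.mpr hu'
      have a2 := Complex.arg_nonneg_iff.mpr hw'.le
      have a3 := Complex.neg_pi_lt_arg u
      have a4 := Complex.arg_le_pi w
      rw [if_neg hu'.not_gt, if_pos hw']
      by_cases hr : w.re < 0
      · rw [if_pos hr]
        have a5 : ¬ w.arg ≤ Real.pi / 2 := by
          rw [Complex.arg_le_pi_div_two_iff]
          push Not
          exact ⟨hr, hw'.le⟩
        have b1 := hlt k 0 (by push_cast; linarith)
        have b2 := hlt (-2) k (by push_cast; linarith)
        omega
      · rw [if_neg hr]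
        have a5 : w.arg ≤ Real.pi / 2 := by
          rw [Complex.arg_le_pi_div_two_iff]
          left
          linarith
        have b1 := hlt k 1 (by push_cast; linarith)
        have b2 := hlt (-1) k (by push_cast; linarith)
        omega
    · have a1 := Complex.arg_nonneg_iff.mpr hu'.le
      have a2 := Complex.arg_neg_iff.mpr hw'
      have a3 := Complex.arg_le_pi u
      have a4 := Complex.neg_pi_lt_arg w
      rw [if_pos hu', if_neg hw'.not_gt]
      by_cases hr : w.re < 0
      · rw [if_pos hr]
        have a5 : ¬ -(Real.pi / 2) ≤ w.arg := by
          rw [Complex.neg_pi_div_two_le_arg_iff]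
          push Not
          exact ⟨hr, hw'⟩
        have b1 := hlt k 2 (by push_cast; linarith)
        have b2 := hlt 0 k (by push_cast; linarith)
        omega
      · rw [if_neg hr]
        have a5 : -(Real.pi / 2) ≤ w.arg := by
          rw [Complex.neg_pi_div_two_le_arg_iff]
          left
          linarith
        have b1 := hlt k 1 (by push_cast; linarith)
        have b2 := hlt (-1) k (by push_cast; linarith)
        omega
    · have a1 := Complex.arg_nonneg_iff.mpr hu'.le
      have a2 := Complex.arg_nonneg_iff.mpr hw'.le
      have a3 := Complex.arg_le_pi u
      have a4 := Complex.arg_le_pi w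
      have b1 := hlt k 1 (by push_cast; linarith)
      have b2 := hlt (-1) k (by push_cast; linarith)
      rw [if_pos hu', if_pos hw']
      simp only [sub_self, ite_self]
      omega
  rw [← key]
  linarith

lemma abs_im_sub_lt_of_norm_exp_sub_lt {Θ : ℝ → ℂ} (hΘ : Continuous Θ) {s t : ℝ} (hst : s ≤ t)
    (h : ∀ r ∈ Set.Icc s t,
      ‖Complex.exp (Θ r) - Complex.exp (Θ s)‖ < ‖Complex.exp (Θ s)‖) :
    |(Θ t).im - (Θ s).im| < Real.pi / 2 := by
  have hcos : ∀ r ∈ Set.Icc s t, 0 < Real.cos ((Θ r).im - (Θ s).im) := by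
    intro r hr
    have := re_div_pos_of_norm_sub_lt (h r hr)
    rw [← Complex.exp_sub, Complex.exp_re, Complex.sub_im] at this
    exact (pos_iff_pos_of_mul_pos this).mp (Real.exp_pos _)
  have hcont : ContinuousOn (fun r => |(Θ r).im - (Θ s).im|) (Set.Icc s t) :=
    (by fun_prop : Continuous _).continuousOn
  by_contra hc
  push Not at hc
  have hpi := Real.pi_pos
  obtain ⟨r, hr, hr'⟩ := intermediate_value_Icc hst hcont
    (show Real.pi / 2 ∈ Set.Icc _ _ from ⟨by simp; positivity, hc⟩)
  have h1 := hcos r hr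
  rw [← Real.cos_abs] at h1
  simp only at hr'
  rw [hr', Real.cos_pi_div_two] at h1
  exact lt_irrefl _ h1

/-- The difference between the continuous argument `θ` of `g`, corrected to a nearby point `u`,
and the principal argument of `u`. -/
def argDefect (θ : ℝ) (g u : ℂ) : ℝ := θ + (u / g).arg - u.arg

lemma axisCrossing_eq_argDefect_sub {Θ : ℝ → ℂ} (hΘ : Continuous Θ) {s t : ℝ} (hst : s ≤ t)
    (h : ∀ r ∈ Set.Icc s t,
      ‖Complex.exp (Θ r) - Complex.exp (Θ s)‖ < ‖Complex.exp (Θ s)‖)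
    {u w : ℂ} (hu : u.im ≠ 0) (hw : w.im ≠ 0) (huw : ‖w - u‖ < ‖u‖)
    (hs : ‖u - Complex.exp (Θ s)‖ < ‖Complex.exp (Θ s)‖)
    (ht : ‖w - Complex.exp (Θ t)‖ < ‖Complex.exp (Θ t)‖) :
    2 * Real.pi * axisCrossing u w =
      argDefect (Θ t).im (Complex.exp (Θ t)) w - argDefect (Θ s).im (Complex.exp (Θ s)) u := by
  have h0 := abs_lt.mp (abs_im_sub_lt_of_norm_exp_sub_lt hΘ hst h)
  have h1 := abs_lt.mp (abs_arg_div_lt huw)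
  have h2 := abs_lt.mp (abs_arg_div_lt hs)
  have h3 := abs_lt.mp (abs_arg_div_lt ht)
  have hang : (((w / u).arg : ℝ) : Real.Angle) =
      (((Θ t).im + (w / Complex.exp (Θ t)).arg - (Θ s).im -
        (u / Complex.exp (Θ s)).arg : ℝ) : Real.Angle) := by
    have hw0 := ne_zero_of_norm_sub_lt huw
    have hu0 := ne_zero_of_norm_sub_lt' huw
    have he : ∀ z : ℂ, ((Complex.exp z).arg : Real.Angle) = (z.im : Real.Angle) := by
      intro z
      rw [Complex.arg_exp]
      exact Real.Angle.coe_toIocMod _ _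
    rw [Real.Angle.coe_sub, Real.Angle.coe_sub, Real.Angle.coe_add,
      Complex.arg_div_coe_angle hw0 hu0, Complex.arg_div_coe_angle hw0 (Complex.exp_ne_zero _),
      Complex.arg_div_coe_angle hu0 (Complex.exp_ne_zero _), he, he]
    abel
  rw [Real.Angle.angle_eq_iff_two_pi_dvd_sub] at hang
  obtain ⟨k, hk⟩ := hang
  have hpi := Real.pi_pos
  have hk0 : k = 0 := by
    have hlt : ∀ a b : ℤ, 2 * Real.pi * a < 2 * Real.pi * b → a < b := by
      intro a b hab
      exact_mod_cast lt_of_mul_lt_mul_left hab (by positivity)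
    have b1 := hlt k 1 (by push_cast; linarith)
    have b2 := hlt (-1) k (by push_cast; linarith)
    omega
  have h4 := arg_div_eq_add_axisCrossing hu hw huw
  rw [hk0] at hk
  unfold argDefect
  push_cast at hk
  linarith

lemma sum_axisCrossing {Θ : ℝ → ℂ} (hΘ : Continuous Θ) {τ : ℕ → ℝ} (hτ : Monotone τ) (K : ℕ)
    {u : ℕ → ℂ} (hu : ∀ k, (u k).im ≠ 0) (huu : ∀ k < K, ‖u (k + 1) - u k‖ < ‖u k‖)
    (h : ∀ k < K, ∀ r ∈ Set.Icc (τ k) (τ (k + 1)),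
      ‖Complex.exp (Θ r) - Complex.exp (Θ (τ k))‖ < ‖Complex.exp (Θ (τ k))‖)
    (hs : ∀ k ≤ K, ‖u k - Complex.exp (Θ (τ k))‖ < ‖Complex.exp (Θ (τ k))‖) :
    2 * Real.pi * ((∑ k ∈ range K, axisCrossing (u k) (u (k + 1)) : ℤ) : ℝ) =
      argDefect (Θ (τ K)).im (Complex.exp (Θ (τ K))) (u K) -
        argDefect (Θ (τ 0)).im (Complex.exp (Θ (τ 0))) (u 0) := by
  rw [← Finset.sum_range_sub
    (fun k => argDefect (Θ (τ k)).im (Complex.exp (Θ (τ k))) (u k)), Int.cast_sum, Finset.mul_sum]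
  refine Finset.sum_congr rfl (fun k hk => ?_)
  rw [mem_range] at hk
  exact axisCrossing_eq_argDefect_sub hΘ (hτ (Nat.le_succ k)) (h k hk) (hu k) (hu (k + 1))
    (huu k hk) (hs k hk.le) (hs (k + 1) hk)

namespace Grid

variable (R : ℕ) (D M : ℝ)

/-- The index of a grid line of class `a` close to `t`. -/
def index (a : ℕ) (t : ℝ) : ℕ := R * ⌊(t + M) / D⌋₊ + a

/-- The square of class `a` close to `w`. -/
def square (a : ℕ) (w : ℂ) : ℕ × ℕ := (index R D M a w.re, index R D M a w.im)

/-- The position of a square in the plane. -/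
def point (z : ℕ × ℕ) : ℂ := ⟨D / R * z.1 - M, D / R * z.2 - M⟩

/-- The lower left corner of a square. -/
def corner (i j : ℕ) : ℂ := ⟨D / R * (i - 1 / 2) - M, D / R * (j - 1 / 2) - M⟩

variable {R D M}

lemma abs_index_sub_le (hD : 0 < D) {a : ℕ} (ha : a < R) {t : ℝ} (ht : |t| ≤ M) :
    |D / R * index R D M a t - M - t| ≤ D := by
  have hR : (0 : ℝ) < R := by exact_mod_cast (Nat.zero_le a).trans_lt ha
  have ht' := abs_le.mp ht
  have h0 : 0 ≤ (t + M) / D := div_nonneg (by linarith) hD.le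
  have h1 := Nat.floor_le h0
  have h2 := Nat.lt_floor_add_one ((t + M) / D)
  rw [le_div_iff₀ hD] at h1
  rw [div_lt_iff₀ hD] at h2
  have h3 : D / R * index R D M a t = ⌊(t + M) / D⌋₊ * D + D * (a / R) := by
    unfold index
    push_cast
    field_simp
  have h4 : (a : ℝ) / R ≤ 1 := by
    rw [div_le_one hR]
    exact_mod_cast ha.le
  have h5 : (0 : ℝ) ≤ a / R := by positivity
  rw [h3, abs_le]
  constructor <;> nlinarith

lemma index_lt (hD : 0 < D) {a : ℕ} (ha : a < R) {t : ℝ} (ht : |t| ≤ M) :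
    index R D M a t < R * (⌊2 * M / D⌋₊ + 1) := by
  have h : ⌊(t + M) / D⌋₊ ≤ ⌊2 * M / D⌋₊ :=
    Nat.floor_le_floor (by gcongr; linarith [(abs_le.mp ht).2])
  unfold index
  nlinarith

lemma inClass_square (hD : 0 < D) {a : ℕ} (ha : a < R) {w : ℂ} (hw : ‖w‖ ≤ M) :
    InClass (fun i => i % R) (R * (⌊2 * M / D⌋₊ + 1)) a (square R D M a w) := by
  have h : ∀ t, index R D M a t % R = a := by
    intro t
    unfold index
    rw [Nat.mul_add_mod, Nat.mod_eq_of_lt ha]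
  exact ⟨h _, h _, index_lt hD ha ((Complex.abs_re_le_norm w).trans hw),
    index_lt hD ha ((Complex.abs_im_le_norm w).trans hw)⟩

lemma norm_point_square_sub_le (hD : 0 < D) {a : ℕ} (ha : a < R) {w : ℂ} (hw : ‖w‖ ≤ M) :
    ‖point R D M (square R D M a w) - w‖ ≤ 2 * D := by
  have h1 := abs_index_sub_le hD ha ((Complex.abs_re_le_norm w).trans hw)
  have h2 := abs_index_sub_le hD ha ((Complex.abs_im_le_norm w).trans hw)
  refine (Complex.norm_le_abs_re_add_abs_im _).trans ?_
  rw [Complex.sub_re, Complex.sub_im]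
  simp only [point, square]
  linarith

lemma crossing_eq (hD : 0 < D) (hR : 0 < R) (y z : ℕ × ℕ) (i j : ℕ) :
    Stage.crossing y z i j =
      axisCrossing (point R D M y - corner R D M i j) (point R D M z - corner R D M i j) := by
  have hR' : (0 : ℝ) < R := by exact_mod_cast hR
  have hη : 0 < D / R := div_pos hD hR'
  have hlt : ∀ a b : ℕ, D / R * a - M - (D / R * (b - 1 / 2) - M) < 0 ↔ a < b := by
    intro a b
    rw [show D / R * a - M - (D / R * (b - 1 / 2) - M) = D / R * ((a : ℝ) - b + 1 / 2) by ring,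
      ← mul_zero (D / R), mul_lt_mul_iff_right₀ hη]
    constructor
    · intro h
      have : (a : ℝ) < b := by linarith
      exact_mod_cast this
    · intro h
      have : (a : ℝ) + 1 ≤ b := by exact_mod_cast h
      linarith
  have hle : ∀ a b : ℕ, 0 < D / R * a - M - (D / R * (b - 1 / 2) - M) ↔ b ≤ a := by
    intro a b
    rw [show D / R * a - M - (D / R * (b - 1 / 2) - M) = D / R * ((a : ℝ) - b + 1 / 2) by ring,
      mul_pos_iff_of_pos_left hη]
    constructor
    · intro h
      have : (b : ℝ) < a + 1 := by linarith
      exact Nat.lt_succ_iff.mp (by exact_mod_cast this)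
    · intro h
      have : (b : ℝ) ≤ a := by exact_mod_cast h
      linarith
  simp only [Stage.crossing, axisCrossing, Complex.sub_re, Complex.sub_im, point, corner, hlt, hle]

lemma point_sub_corner_im_ne_zero (hD : 0 < D) (hR : 0 < R) (z : ℕ × ℕ) (i j : ℕ) :
    (point R D M z - corner R D M i j).im ≠ 0 := by
  have hR' : (0 : ℝ) < R := by exact_mod_cast hR
  have hη : 0 < D / R := div_pos hD hR'
  simp only [Complex.sub_im, point, corner]
  rw [show D / R * z.2 - M - (D / R * (j - 1 / 2) - M) = D / R * ((z.2 : ℝ) - j + 1 / 2) by ring]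
  refine mul_ne_zero hη.ne' (fun h => ?_)
  have h' : (2 * (z.2 : ℤ) - 2 * j + 1 : ℝ) = 0 := by
    push_cast
    linarith
  have h'' : 2 * (z.2 : ℤ) - 2 * j + 1 = 0 := by exact_mod_cast h'
  omega

lemma div_le_self (hD : 0 < D) (hR : 0 < R) : D / R ≤ D :=
  _root_.div_le_self hD.le (by exact_mod_cast hR)

lemma norm_point_sub_corner_le (hD : 0 < D) (hR : 0 < R) {y z : ℕ × ℕ} {i j : ℕ}
    (h1 : |(i : ℤ) - z.1| ≤ |(y.1 : ℤ) - z.1|) (h2 : |(j : ℤ) - z.2| ≤ |(y.2 : ℤ) - z.2|) :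
    ‖point R D M z - corner R D M i j‖ ≤ 2 * ‖point R D M y - point R D M z‖ + D := by
  have hη : 0 < D / R := div_pos hD (by exact_mod_cast hR)
  have key : ∀ i y z : ℕ, |(i : ℤ) - z| ≤ |(y : ℤ) - z| →
      |D / R * z - M - (D / R * (i - 1 / 2) - M)| ≤
        |D / R * y - M - (D / R * z - M)| + D / R / 2 := by
    intro i y z h
    have h' : |(i : ℝ) - z| ≤ |(y : ℝ) - z| := by exact_mod_cast h
    rw [show D / R * z - M - (D / R * (i - 1 / 2) - M) = -(D / R * (i - z)) + D / R / 2 by ring,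
      show D / R * y - M - (D / R * z - M) = D / R * (y - z) by ring]
    refine (abs_add_le _ _).trans ?_
    rw [abs_neg, abs_mul, abs_mul, abs_of_pos (half_pos hη), abs_of_pos hη]
    gcongr
  have k1 := key _ _ _ h1
  have k2 := key _ _ _ h2
  have n1 := Complex.abs_re_le_norm (point R D M y - point R D M z)
  have n2 := Complex.abs_im_le_norm (point R D M y - point R D M z)
  have := div_le_self hD hR
  refine (Complex.norm_le_abs_re_add_abs_im _).trans ?_
  rw [Complex.sub_re, Complex.sub_im] at *
  simp only [point, corner] at *
  linarith

lemma norm_corner_le (hD : 0 < D) (hR : 0 < R) (hM : 0 ≤ M) {i j : ℕ}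
    (hi : i < R * (⌊2 * M / D⌋₊ + 1)) (hj : j < R * (⌊2 * M / D⌋₊ + 1)) :
    ‖corner R D M i j‖ ≤ 2 * (M + D) := by
  have hR' : (0 : ℝ) < R := by exact_mod_cast hR
  have hη : 0 < D / R := div_pos hD hR'
  have hle := div_le_self hD hR
  have key : ∀ i < R * (⌊2 * M / D⌋₊ + 1), |D / R * ((i : ℝ) - 1 / 2) - M| ≤ M + D := by
    intro i hi
    have h1 : (i : ℝ) ≤ R * (⌊2 * M / D⌋₊ + 1) := by exact_mod_cast hi.le
    have h2 := Nat.floor_le (show 0 ≤ 2 * M / D by positivity)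
    rw [le_div_iff₀ hD] at h2
    have h3 : D / R * i ≤ ⌊2 * M / D⌋₊ * D + D := by
      calc D / R * i ≤ D / R * (R * (⌊2 * M / D⌋₊ + 1)) := by gcongr
        _ = _ := by field_simp
    have h4 : 0 ≤ D / R * i := by positivity
    rw [abs_le]
    constructor <;> nlinarith
  have k1 := key i hi
  have k2 := key j hj
  refine (Complex.norm_le_abs_re_add_abs_im _).trans ?_
  simp only [corner]
  linarith

end Grid

/-- The three paths joining `a`, `b` and `d` admit continuous logarithms around `x` which agree at
the three vertices. -/
def ClosedLog (g : ℕ → ℕ → ℝ → ℂ) (x : ℂ) (a b d : ℕ) : Prop :=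
  ∃ Θ₁ Θ₂ Θ₃ : ℝ → ℂ, Continuous Θ₁ ∧ Continuous Θ₂ ∧ Continuous Θ₃ ∧
    (∀ r ∈ Set.Icc (0 : ℝ) 1, Complex.exp (Θ₁ r) = g a b r - x) ∧
    (∀ r ∈ Set.Icc (0 : ℝ) 1, Complex.exp (Θ₂ r) = g b d r - x) ∧
    (∀ r ∈ Set.Icc (0 : ℝ) 1, Complex.exp (Θ₃ r) = g a d r - x) ∧
    Θ₁ 0 = Θ₃ 0 ∧ Θ₁ 1 = Θ₂ 0 ∧ Θ₂ 1 = Θ₃ 1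

/-- The point `x` is, up to `ε`, on the drawing of a face or encircled by it. -/
def Near (φ : ℕ → ℂ) (g : ℕ → ℕ → ℝ → ℂ) (ε : ℝ) (x : ℂ) : List ℕ → Prop
  | [a] => ‖φ a - x‖ ≤ ε
  | [a, b] => ∃ r ∈ Set.Icc (0 : ℝ) 1, ‖g a b r - x‖ ≤ ε
  | [a, b, d] => (∃ r ∈ Set.Icc (0 : ℝ) 1, ‖g a b r - x‖ ≤ ε) ∨
      (∃ r ∈ Set.Icc (0 : ℝ) 1, ‖g b d r - x‖ ≤ ε) ∨
      (∃ r ∈ Set.Icc (0 : ℝ) 1, ‖g a d r - x‖ ≤ ε) ∨ ¬ ClosedLog g x a b d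
  | _ => False

namespace Grid

/-- The subdivision points of the unit interval. -/
def time (N k : ℕ) : ℝ := min (k / N) 1

lemma time_mem (N k : ℕ) : time N k ∈ Set.Icc (0 : ℝ) 1 :=
  ⟨le_min (by positivity) zero_le_one, min_le_right _ _⟩

lemma time_mono (N : ℕ) : Monotone (time N) := by
  intro k l hkl
  unfold time
  gcongr

lemma time_zero (N : ℕ) : time N 0 = 0 := by simp [time]

lemma time_last {N k : ℕ} (hN : 0 < N) (hk : N ≤ k) : time N k = 1 := by
  have hN' : (0 : ℝ) < N := by exact_mod_cast hN
  unfold time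
  rw [min_eq_right]
  rw [le_div_iff₀ hN']
  simpa using (show (N : ℝ) ≤ k by exact_mod_cast hk)

lemma time_succ_sub_le (N k : ℕ) : time N (k + 1) - time N k ≤ 1 / N := by
  unfold time
  push_cast
  rw [add_div]
  have : (0 : ℝ) ≤ 1 / N := by positivity
  rcases le_total ((k : ℝ) / N) 1 with h | h
  · rw [min_eq_left h]
    linarith [min_le_left ((k : ℝ) / N + 1 / N) 1]
  · rw [min_eq_right h]
    linarith [min_le_right ((k : ℝ) / N + 1 / N) 1]

variable {R N : ℕ} {D M ε : ℝ} {φ : ℕ → ℂ} {g : ℕ → ℕ → ℝ → ℂ}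

/-- The chain of squares approximating the path from `a` to `b`. -/
def chain (R N : ℕ) (D M : ℝ) (φ : ℕ → ℂ) (g : ℕ → ℕ → ℝ → ℂ) (a b k : ℕ) : ℕ × ℕ :=
  if k ≤ N then square R D M a (g a b (time N k)) else square R D M b (φ b)

/-- The hypotheses under which the drawing is approximated by chains of squares up to `ε`. -/
structure Fine (R N : ℕ) (D M ε : ℝ) (φ : ℕ → ℂ) (g : ℕ → ℕ → ℝ → ℂ) : Prop where
  hN : 0 < N
  hD : 0 < D
  hDε : 16 * D ≤ ε
  h0 : ∀ a b, g a b 0 = φ a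
  h1 : ∀ a b, g a b 1 = φ b
  hM : ∀ a b, ∀ r ∈ Set.Icc (0 : ℝ) 1, ‖g a b r‖ ≤ M
  osc : ∀ a b, ∀ r ∈ Set.Icc (0 : ℝ) 1, ∀ s ∈ Set.Icc (0 : ℝ) 1, |r - s| ≤ 1 / N →
    ‖g a b r - g a b s‖ ≤ ε / 8

namespace Fine

lemma osc_time (F : Fine R N D M ε φ g) (a b k : ℕ) {r : ℝ}
    (hr : r ∈ Set.Icc (time N k) (time N (k + 1))) :
    ‖g a b r - g a b (time N k)‖ ≤ ε / 8 := by
  refine F.osc a b r ⟨(time_mem N k).1.trans hr.1, hr.2.trans (time_mem N (k + 1)).2⟩ _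
    (time_mem N k) ?_
  rw [abs_of_nonneg (by linarith [hr.1])]
  linarith [hr.2, time_succ_sub_le N k]

lemma norm_chain_sub_le (F : Fine R N D M ε φ g) {a b : ℕ} (ha : a < R) (hb : b < R) (k : ℕ) :
    ‖point R D M (chain R N D M φ g a b k) - g a b (time N k)‖ ≤ ε / 8 := by
  have hle : 2 * D ≤ ε / 8 := by linarith [F.hDε]
  unfold chain
  split_ifs with h
  · exact (norm_point_square_sub_le F.hD ha (F.hM a b _ (time_mem N k))).trans hle
  · rw [time_last F.hN (by omega), F.h1]
    refine (norm_point_square_sub_le F.hD hb ?_).trans hle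
    rw [← F.h1 a b]
    exact F.hM a b 1 (by simp)

lemma norm_chain_succ_sub_le (F : Fine R N D M ε φ g) {a b : ℕ} (ha : a < R) (hb : b < R) (k : ℕ) :
    ‖point R D M (chain R N D M φ g a b (k + 1)) - point R D M (chain R N D M φ g a b k)‖ ≤
      3 * (ε / 8) := by
  have h1 := F.norm_chain_sub_le ha hb k
  have h2 := F.norm_chain_sub_le ha hb (k + 1)
  have h3 := F.osc_time a b k (Set.right_mem_Icc.mpr (time_mono N (Nat.le_succ k)))
  rw [norm_sub_rev] at h1
  calc _ = ‖(point R D M (chain R N D M φ g a b (k + 1)) - g a b (time N (k + 1))) +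
        (g a b (time N (k + 1)) - g a b (time N k)) +
        (g a b (time N k) - point R D M (chain R N D M φ g a b k))‖ := by congr 1; ring
    _ ≤ _ := (norm_add₃_le).trans (by linarith)

lemma chain_zero (F : Fine R N D M ε φ g) (a b : ℕ) :
    chain R N D M φ g a b 0 = square R D M a (φ a) := by
  rw [chain, if_pos (Nat.zero_le N), time_zero, F.h0]

lemma chain_last (a b : ℕ) : chain R N D M φ g a b (N + 1) = square R D M b (φ b) := by
  rw [chain, if_neg (by omega)]

lemma sum_crossing (F : Fine R N D M ε φ g) {a b i j : ℕ} (ha : a < R) (hb : b < R)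
    {Θ : ℝ → ℂ} (hΘ : Continuous Θ)
    (hexp : ∀ r ∈ Set.Icc (0 : ℝ) 1, Complex.exp (Θ r) = g a b r - corner R D M i j)
    (hfar : ∀ r ∈ Set.Icc (0 : ℝ) 1, ε < ‖g a b r - corner R D M i j‖) :
    2 * Real.pi * ((∑ k ∈ range (N + 1), Stage.crossing (chain R N D M φ g a b k)
      (chain R N D M φ g a b (k + 1)) i j : ℤ) : ℝ) =
      argDefect (Θ 1).im (Complex.exp (Θ 1))
        (point R D M (square R D M b (φ b)) - corner R D M i j) -
      argDefect (Θ 0).im (Complex.exp (Θ 0))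
        (point R D M (square R D M a (φ a)) - corner R D M i j) := by
  have hε : 0 < ε := by linarith [F.hD, F.hDε]
  have hR : 0 < R := by omega
  have hnear : ∀ k, ‖(point R D M (chain R N D M φ g a b k) - corner R D M i j) -
      Complex.exp (Θ (time N k))‖ < ‖Complex.exp (Θ (time N k))‖ := by
    intro k
    rw [hexp _ (time_mem N k), sub_sub_sub_cancel_right]
    linarith [hfar _ (time_mem N k), F.norm_chain_sub_le ha hb k]
  have key := sum_axisCrossing hΘ (time_mono N) (N + 1)
    (u := fun k => point R D M (chain R N D M φ g a b k) - corner R D M i j)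
    (fun k => point_sub_corner_im_ne_zero F.hD hR _ i j) ?_ ?_ (fun k _ => hnear k)
  · rw [time_zero, time_last F.hN (Nat.le_succ N), F.chain_zero, chain_last] at key
    rw [← key]
    simp only [crossing_eq (M := M) F.hD hR]
  · intro k _
    have h1 := F.norm_chain_succ_sub_le ha hb k
    have h2 := F.norm_chain_sub_le ha hb k
    have h3 := hfar _ (time_mem N k)
    have h4 := norm_sub_norm_le (g a b (time N k) - corner R D M i j)
      (point R D M (chain R N D M φ g a b k) - corner R D M i j)
    rw [sub_sub_sub_cancel_right] at h4
    rw [norm_sub_rev] at h2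
    rw [sub_sub_sub_cancel_right]
    linarith
  · intro k _ r hr
    have hr' : r ∈ Set.Icc (0 : ℝ) 1 :=
      ⟨(time_mem N k).1.trans hr.1, hr.2.trans (time_mem N (k + 1)).2⟩
    rw [hexp _ (time_mem N k), hexp r hr', sub_sub_sub_cancel_right]
    linarith [hfar _ (time_mem N k), F.osc_time a b k hr]

lemma near_of_chainHit (F : Fine R N D M ε φ g) {i j : ℕ} {f : List ℕ} (hf : ∀ a ∈ f, a < R)
    (h : Stage.ChainHit (fun a => square R D M a (φ a)) (N + 1) (chain R N D M φ g) i j f) :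
    Near φ g ε (corner R D M i j) f := by
  have hε : 0 < ε := by linarith [F.hD, F.hDε]
  match f with
  | [] => exact h
  | [a] =>
    have ha := hf a (by simp)
    have hM : ‖φ a‖ ≤ M := by
      rw [← F.h0 a a]
      exact F.hM a a 0 (by simp)
    have h' : (i, j) = square R D M a (φ a) := h
    have h1 := norm_point_square_sub_le F.hD ha hM
    have h2 := norm_point_sub_corner_le (M := M) F.hD (by omega : 0 < R)
      (y := square R D M a (φ a)) (z := square R D M a (φ a)) (i := i) (j := j)
      (by rw [← h']) (by rw [← h'])
    rw [sub_self, norm_zero] at h2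
    rw [norm_sub_rev] at h1
    have := norm_sub_le_norm_sub_add_norm_sub (φ a) (point R D M (square R D M a (φ a)))
      (corner R D M i j)
    change ‖φ a - corner R D M i j‖ ≤ ε
    linarith [F.hDε]
  | [a, b] =>
    have ha := hf a (by simp)
    have hb := hf b (by simp)
    obtain ⟨k, hk, h1, h2⟩ := h
    refine ⟨time N (k + 1), time_mem N _, ?_⟩
    have h3 := norm_point_sub_corner_le (M := M) F.hD (by omega : 0 < R) h1 h2
    have h4 := F.norm_chain_succ_sub_le ha hb k
    have h5 := F.norm_chain_sub_le ha hb (k + 1)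
    rw [norm_sub_rev] at h4 h5
    have := norm_sub_le_norm_sub_add_norm_sub (g a b (time N (k + 1)))
      (point R D M (chain R N D M φ g a b (k + 1))) (corner R D M i j)
    linarith [F.hDε]
  | [a, b, d] =>
    have ha := hf a (by simp)
    have hb := hf b (by simp)
    have hd := hf d (by simp)
    by_contra hc
    simp only [Near, not_or, not_exists, not_and, not_not, not_le] at hc
    obtain ⟨hab, hbd, had, Θ₁, Θ₂, Θ₃, c1, c2, c3, e1, e2, e3, v1, v2, v3⟩ := hc
    have s1 := F.sum_crossing ha hb c1 e1 hab
    have s2 := F.sum_crossing hb hd c2 e2 hbd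
    have s3 := F.sum_crossing ha hd c3 e3 had
    rw [v1, v2] at s1
    rw [v3] at s2
    apply h
    have hpi := Real.pi_pos
    have : 2 * Real.pi * ((∑ k ∈ range (N + 1), Stage.crossing (chain R N D M φ g a b k)
          (chain R N D M φ g a b (k + 1)) i j +
        ∑ k ∈ range (N + 1), Stage.crossing (chain R N D M φ g b d k)
          (chain R N D M φ g b d (k + 1)) i j -
        ∑ k ∈ range (N + 1), Stage.crossing (chain R N D M φ g a d k)
          (chain R N D M φ g a d (k + 1)) i j : ℤ) : ℝ) = 0 := by
      rw [Int.cast_sub, Int.cast_add]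
      linarith
    have := (mul_eq_zero.mp this).resolve_left (by positivity)
    exact_mod_cast this
  | _ :: _ :: _ :: _ :: _ => exact h

lemma exists_near (F : Fine R N D M ε φ g) {p : ℕ} [NeZero p] (hp : p.Prime) (hp3 : 3 ≤ p)
    (hR : R = 3 * (p - 1) + 1) :
    ∃ (κ : Coloring p) (x : ℂ), ‖x‖ ≤ 2 * M + ε ∧
      ∀ t, Near φ g ε x (Coloring.face κ t).labels := by
  have hR0 : 0 < R := by omega
  have hφM : ∀ a, ‖φ a‖ ≤ M := fun a => by
    rw [← F.h0 a a]
    exact F.hM a a 0 (by simp)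
  have hl : ∀ a < R, InClass (fun i => i % R) (R * (⌊2 * M / D⌋₊ + 1)) a (square R D M a (φ a)) :=
    fun a ha => inClass_square F.hD ha (hφM a)
  have hQ : ∀ a b, a < R → ∀ k < N + 1, InClass (fun i => i % R) (R * (⌊2 * M / D⌋₊ + 1)) a
      (chain R N D M φ g a b k) := by
    intro a b ha k hk
    rw [chain, if_pos (by omega)]
    exact inClass_square F.hD ha (F.hM a b _ (time_mem N k))
  have hc : ∀ a < R, InClass (fun i => i % R) (R * (⌊2 * M / D⌋₊ + 1)) a (a, a) := by
    intro a ha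
    have : a < R * (⌊2 * M / D⌋₊ + 1) := by nlinarith
    exact ⟨Nat.mod_eq_of_lt ha, Nat.mod_eq_of_lt ha, this, this⟩
  subst hR
  obtain ⟨κ, i, j, hi, hj, h⟩ := Coloring.exists_cell_ne_zero hp hp3
    (Stage.ofChains _ (N + 1) (chain _ N D M φ g) hl F.chain_zero chain_last hQ)
    (fun a => square _ D M a (φ a)) hc hl (fun a _ => rfl)
  refine ⟨κ, corner _ D M i j, ?_, fun t => F.near_of_chainHit (Coloring.adm_face κ t).2.1
    (Stage.chainHit_of_ne hl F.chain_zero chain_last hQ (h t))⟩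
  have := norm_corner_le F.hD hR0 ((norm_nonneg _).trans (hφM 0)) hi hj
  linarith [F.hDε, F.hD]

end Fine

end Grid

lemma ClosedLog.of_near {g : ℕ → ℕ → ℝ → ℂ} {x y : ℂ} {a b d : ℕ} (h : ClosedLog g x a b d)
    (hab : ∀ r ∈ Set.Icc (0 : ℝ) 1, ‖y - x‖ < ‖g a b r - x‖)
    (hbd : ∀ r ∈ Set.Icc (0 : ℝ) 1, ‖y - x‖ < ‖g b d r - x‖)
    (had : ∀ r ∈ Set.Icc (0 : ℝ) 1, ‖y - x‖ < ‖g a d r - x‖) : ClosedLog g y a b d := by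
  obtain ⟨Θ₁, Θ₂, Θ₃, c1, c2, c3, e1, e2, e3, v1, v2, v3⟩ := h
  let Ψ : ℂ → ℂ := fun θ => θ + Complex.log (1 + -(y - x) * Complex.exp (-θ))
  let π : ℝ → ℝ := fun r => Set.projIcc (0 : ℝ) 1 zero_le_one r
  have hπc : Continuous π := continuous_subtype_val.comp continuous_projIcc
  have hπm : ∀ r, π r ∈ Set.Icc (0 : ℝ) 1 := fun r => Subtype.coe_prop _
  have hπ : ∀ r ∈ Set.Icc (0 : ℝ) 1, π r = r := fun r hr => by
    simp only [π, Set.projIcc_of_mem zero_le_one hr]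
  have key : ∀ (f : ℝ → ℂ) (Θ : ℝ → ℂ), Continuous Θ →
      (∀ r ∈ Set.Icc (0 : ℝ) 1, Complex.exp (Θ r) = f r - x) →
      (∀ r ∈ Set.Icc (0 : ℝ) 1, ‖y - x‖ < ‖f r - x‖) →
      Continuous (fun r => Ψ (Θ (π r))) ∧
        ∀ r ∈ Set.Icc (0 : ℝ) 1, Complex.exp (Ψ (Θ (π r))) = f r - y := by
    intro f Θ hΘ he hf
    have hslit : ∀ r, 1 + -(y - x) * Complex.exp (-Θ (π r)) ∈ Complex.slitPlane := by
      intro r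
      apply Complex.mem_slitPlane_of_norm_lt_one
      rw [Complex.exp_neg, he _ (hπm r), norm_mul, norm_neg, norm_inv, ← div_eq_mul_inv]
      exact (div_lt_one ((norm_nonneg _).trans_lt (hf _ (hπm r)))).mpr (hf _ (hπm r))
    refine ⟨(hΘ.comp hπc).add (Continuous.clog ?_ hslit), ?_⟩
    · have := hΘ.comp hπc
      fun_prop
    · intro r hr
      have h0 := Complex.slitPlane_ne_zero (hslit r)
      simp only [Ψ]
      rw [Complex.exp_add, Complex.exp_log h0, mul_add, mul_one, mul_left_comm, ← Complex.exp_add,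
        add_neg_cancel, Complex.exp_zero, hπ r hr, he r hr]
      ring
  have k1 := key _ Θ₁ c1 e1 hab
  have k2 := key _ Θ₂ c2 e2 hbd
  have k3 := key _ Θ₃ c3 e3 had
  refine ⟨_, _, _, k1.1, k2.1, k3.1, k1.2, k2.2, k3.2, ?_, ?_, ?_⟩ <;>
    simp only [hπ 0 (by simp), hπ 1 (by simp), v1, v2, v3]

lemma exists_pos_le_norm_sub {f : ℝ → ℂ} (hf : Continuous f) {x : ℂ}
    (h : ¬ ∃ r ∈ Set.Icc (0 : ℝ) 1, ‖f r - x‖ ≤ 0) :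
    ∃ δ > 0, ∀ r ∈ Set.Icc (0 : ℝ) 1, δ ≤ ‖f r - x‖ := by
  push Not at h
  obtain ⟨s, hs, hmin⟩ := isCompact_Icc.exists_isMinOn (Set.nonempty_Icc.mpr zero_le_one)
    (show ContinuousOn (fun r => ‖f r - x‖) (Set.Icc (0 : ℝ) 1) by fun_prop)
  exact ⟨_, h s hs, fun r hr => hmin hr⟩

lemma eventually_not_exists_norm_sub_le {f : ℝ → ℂ} (hf : Continuous f) {ι : Type*}
    {l : Filter ι} {ε : ι → ℝ} {y : ι → ℂ} {x : ℂ} (hε : Tendsto ε l (𝓝 0))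
    (hy : Tendsto y l (𝓝 x)) (h : ¬ ∃ r ∈ Set.Icc (0 : ℝ) 1, ‖f r - x‖ ≤ 0) :
    ∀ᶠ n in l, (¬ ∃ r ∈ Set.Icc (0 : ℝ) 1, ‖f r - y n‖ ≤ ε n) ∧
      ∀ r ∈ Set.Icc (0 : ℝ) 1, ‖y n - x‖ < ‖f r - x‖ := by
  obtain ⟨δ, hδ, hδ'⟩ := exists_pos_le_norm_sub hf h
  have h1 := hε.eventually (gt_mem_nhds (half_pos hδ))
  have h2 := hy.eventually (Metric.ball_mem_nhds x (half_pos hδ))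
  filter_upwards [h1, h2] with n h1 h2
  rw [dist_eq_norm] at h2
  constructor
  · rintro ⟨r, hr, hle⟩
    have := norm_sub_le_norm_sub_add_norm_sub (f r) (y n) x
    linarith [hδ' r hr]
  · intro r hr
    linarith [hδ' r hr]

lemma Near.of_tendsto {φ : ℕ → ℂ} {g : ℕ → ℕ → ℝ → ℂ} (hg : ∀ a b, Continuous (g a b))
    {ι : Type*} {l : Filter ι} [l.NeBot] {ε : ι → ℝ} {y : ι → ℂ} {x : ℂ}
    (hε : Tendsto ε l (𝓝 0)) (hy : Tendsto y l (𝓝 x)) {f : List ℕ}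
    (h : ∀ᶠ n in l, Near φ g (ε n) (y n) f) : Near φ g 0 x f := by
  match f with
  | [] => exact h.exists.choose_spec
  | [a] => exact le_of_tendsto_of_tendsto (tendsto_const_nhds.sub hy).norm hε h
  | [a, b] =>
    by_contra hc
    obtain ⟨n, h1, h2⟩ := (h.and (eventually_not_exists_norm_sub_le (hg a b) hε hy hc)).exists
    exact h2.1 h1
  | [a, b, d] =>
    by_contra hc
    simp only [Near, not_or, not_not] at hc
    obtain ⟨hab, hbd, had, hlog⟩ := hc
    obtain ⟨n, h1, h2, h3, h4⟩ := (h.and ((eventually_not_exists_norm_sub_le (hg a b) hε hy hab).and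
      ((eventually_not_exists_norm_sub_le (hg b d) hε hy hbd).and
      (eventually_not_exists_norm_sub_le (hg a d) hε hy had)))).exists
    rcases h1 with h1 | h1 | h1 | h1
    · exact h2.1 h1
    · exact h3.1 h1
    · exact h4.1 h1
    · exact h1 (hlog.of_near h2.2 h3.2 h4.2)
  | _ :: _ :: _ :: _ :: _ => exact h.exists.choose_spec

lemma exists_near_zero {φ : ℕ → ℂ} {g : ℕ → ℕ → ℝ → ℂ} (hg : ∀ a b, Continuous (g a b)) {M : ℝ}
    (h0 : ∀ a b, g a b 0 = φ a) (h1 : ∀ a b, g a b 1 = φ b)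
    (hM : ∀ a b, ∀ r ∈ Set.Icc (0 : ℝ) 1, ‖g a b r‖ ≤ M)
    (hosc : ∀ ε > 0, ∃ δ > 0, ∀ a b, ∀ r ∈ Set.Icc (0 : ℝ) 1, ∀ s ∈ Set.Icc (0 : ℝ) 1,
      |r - s| < δ → ‖g a b r - g a b s‖ ≤ ε)
    {p : ℕ} [NeZero p] (hp : p.Prime) (hp3 : 3 ≤ p) :
    ∃ (κ : Coloring p) (x : ℂ), ∀ t, Near φ g 0 x (Coloring.face κ t).labels := by
  have step : ∀ n : ℕ, ∃ (κ : Coloring p) (x : ℂ), ‖x‖ ≤ 2 * M + 1 ∧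
      ∀ t, Near φ g (1 / ((n : ℝ) + 1)) x (Coloring.face κ t).labels := by
    intro n
    have hε : 0 < 1 / ((n : ℝ) + 1) := Nat.one_div_pos_of_nat
    obtain ⟨δ, hδ, hδ'⟩ := hosc (1 / ((n : ℝ) + 1) / 8) (by positivity)
    obtain ⟨N, hN⟩ := exists_nat_one_div_lt hδ
    have F : Grid.Fine (3 * (p - 1) + 1) (N + 1) (1 / ((n : ℝ) + 1) / 16) M (1 / ((n : ℝ) + 1)) φ g :=
      ⟨Nat.succ_pos N, by positivity, by linarith, h0, h1, hM,
        fun a b r hr s hs hrs => hδ' a b r hr s hs (hrs.trans_lt (by exact_mod_cast hN))⟩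
    obtain ⟨κ, x, hx, h⟩ := F.exists_near hp hp3 rfl
    refine ⟨κ, x, hx.trans ?_, h⟩
    have : 1 / ((n : ℝ) + 1) ≤ 1 := by
      rw [div_le_one (by positivity)]
      linarith [(Nat.cast_nonneg n : (0 : ℝ) ≤ n)]
    linarith
  choose κ y hy h using step
  have hfin : Finite (Coloring p) := inferInstance
  obtain ⟨κ₀, hκ₀⟩ := ((hyperfilter ℕ).map κ).eq_pure_of_finite
  obtain ⟨x, -, hx⟩ := (isCompact_closedBall (0 : ℂ) (2 * M + 1)).ultrafilter_le_nhds
    ((hyperfilter ℕ).map y) (by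
      rw [le_principal_iff]
      exact (Eventually.of_forall (fun n => by simpa using hy n) :
        ∀ᶠ n in hyperfilter ℕ, y n ∈ Metric.closedBall 0 (2 * M + 1)))
  refine ⟨κ₀, x, fun t => ?_⟩
  have hev : ∀ᶠ n in hyperfilter ℕ, κ n = κ₀ := by
    have : {κ₀} ∈ (hyperfilter ℕ).map κ := by
      rw [hκ₀]
      exact Set.mem_singleton κ₀
    exact this
  refine Near.of_tendsto hg (tendsto_one_div_add_atTop_nhds_zero_nat.mono_left Nat.hyperfilter_le_atTop)
    hx ?_
  filter_upwards [hev] with n hn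
  rw [← hn]
  exact h n t

lemma exists_matching_labeling {V : Type*} [Fintype V] [DecidableEq V] (M : Finset (Sym2 V))
    (hMedges : ∀ e ∈ M, ¬ e.IsDiag)
    (hMmatching : ∀ e ∈ M, ∀ e' ∈ M, e ≠ e' → ∀ v, v ∈ e → v ∉ e')
    (hcard : 2 * #M < Fintype.card V) :
    ∃ ν : ℕ → V, (∀ u ≤ 2 * #M, ∀ v ≤ 2 * #M, ν u = ν v → u = v) ∧
      ∀ u ≤ 2 * #M, ∀ v ≤ 2 * #M, s(ν u, ν v) ∈ M →
        u ≠ 0 ∧ v ≠ 0 ∧ (u - 1) / 2 = (v - 1) / 2 := by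
  obtain ⟨v₀⟩ : Nonempty V := Fintype.card_pos_iff.mp (by omega)
  let f : ℕ → Sym2 V := fun k => if h : k < #M then (M.equivFin.symm ⟨k, h⟩ : Sym2 V) else s(v₀, v₀)
  have hfM : ∀ k < #M, f k ∈ M := by
    intro k hk
    simp only [f, dif_pos hk]
    exact Subtype.coe_prop _
  have hfinj : ∀ k < #M, ∀ l < #M, f k = f l → k = l := by
    intro k hk l hl h
    simp only [f, dif_pos hk, dif_pos hl] at h
    simpa using M.equivFin.symm.injective (Subtype.ext h)
  have hfsurj : ∀ e ∈ M, ∃ k < #M, f k = e := by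
    intro e he
    refine ⟨M.equivFin ⟨e, he⟩, Fin.isLt _, ?_⟩
    simp [f]
  let q : ℕ → V := fun u => if u % 2 = 0 then (f (u / 2)).out.1 else (f (u / 2)).out.2
  have hqf : ∀ u, q u ∈ f (u / 2) := by
    intro u
    simp only [q]
    split_ifs
    · exact Sym2.out_fst_mem _
    · exact Sym2.out_snd_mem _
  have hfq : ∀ k, f k = s(q (2 * k), q (2 * k + 1)) := by
    intro k
    have h1 : (2 * k + 1) / 2 = k := by omega
    have h2 : (2 * k + 1) % 2 = 1 := by omega
    simp only [q, Nat.mul_mod_right, if_true, h1, h2, one_ne_zero, if_false,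
      Nat.mul_div_cancel_left k two_pos]
    exact (Quot.out_eq (f k)).symm
  obtain ⟨w, -, hw⟩ := Finset.exists_mem_notMem_of_card_lt_card
    (s := (range (2 * #M)).image q) (t := univ)
    (card_image_le.trans_lt (by rwa [card_range, card_univ]))
  have hwM : ∀ e ∈ M, w ∉ e := by
    intro e he hwe
    obtain ⟨k, hk, rfl⟩ := hfsurj e he
    rw [hfq, Sym2.mem_iff] at hwe
    apply hw
    rw [mem_image]
    rcases hwe with rfl | rfl
    · exact ⟨2 * k, mem_range.mpr (by omega), rfl⟩
    · exact ⟨2 * k + 1, mem_range.mpr (by omega), rfl⟩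
  have hshare : ∀ e ∈ M, ∀ e' ∈ M, ∀ v, v ∈ e → v ∈ e' → e = e' := by
    intro e he e' he' v hv hv'
    by_contra hne
    exact hMmatching e he e' he' hne v hv hv'
  refine ⟨fun u => if u = 0 then w else q (u - 1), ?_, ?_⟩
  · intro u hu v hv h
    simp only at h
    split_ifs at h with hu0 hv0 hv0
    · omega
    · exact absurd (h ▸ hqf (v - 1)) (hwM _ (hfM _ (by omega)))
    · exact absurd (h ▸ hqf (u - 1)) (hwM _ (hfM _ (by omega)))
    · have h1 : (u - 1) / 2 = (v - 1) / 2 := hfinj _ (by omega) _ (by omega)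
        (hshare _ (hfM _ (by omega)) _ (hfM _ (by omega)) _ (hqf (u - 1)) (h ▸ hqf (v - 1)))
      by_contra hne
      have hdiag := hMedges _ (hfM ((u - 1) / 2) (by omega))
      rw [hfq, Sym2.mk_isDiag_iff] at hdiag
      rcases Nat.mod_two_eq_zero_or_one (u - 1) with h2 | h2
      · rw [show 2 * ((u - 1) / 2) = u - 1 by omega, show u - 1 + 1 = v - 1 by omega] at hdiag
        exact hdiag h
      · rw [show 2 * ((u - 1) / 2) = v - 1 by omega, show v - 1 + 1 = u - 1 by omega] at hdiag
        exact hdiag h.symm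
  · intro u hu v hv h
    have key : ∀ u ≤ 2 * #M, ∀ e ∈ M, (if u = 0 then w else q (u - 1)) ∈ e →
        u ≠ 0 ∧ f ((u - 1) / 2) = e := by
      intro u hu e he h
      split_ifs at h with hu0
      · exact absurd h (hwM e he)
      · exact ⟨hu0, hshare _ (hfM _ (by omega)) _ he _ (hqf (u - 1)) h⟩
    have h1 := key u hu _ h (Sym2.mem_mk_left _ _)
    have h2 := key v hv _ h (Sym2.mem_mk_right _ _)
    exact ⟨h1.1, h2.1, hfinj _ (by omega) _ (by omega) (h1.2.trans h2.2.symm)⟩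

lemma adj_of_mem_face {p : ℕ} [NeZero p] (hp : p % 2 = 1) {V : Type*} {M : Finset (Sym2 V)}
    {ν : ℕ → V} (hinj : ∀ u ≤ 3 * (p - 1), ∀ v ≤ 3 * (p - 1), ν u = ν v → u = v)
    (hM : ∀ u ≤ 3 * (p - 1), ∀ v ≤ 3 * (p - 1), s(ν u, ν v) ∈ M →
      u ≠ 0 ∧ v ≠ 0 ∧ (u - 1) / 2 = (v - 1) / 2)
    {κ : Coloring p} {t : Fin p} {u v : ℕ} (hu : u ∈ (Coloring.face κ t).labels)
    (hv : v ∈ (Coloring.face κ t).labels) (huv : u ≠ v) :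
    ((⊤ : SimpleGraph V).deleteEdges ↑M).Adj (ν u) (ν v) := by
  have hu' : u ≤ 3 * (p - 1) := Nat.lt_succ_iff.mp ((Coloring.adm_face κ t).2.1 u hu)
  have hv' : v ≤ 3 * (p - 1) := Nat.lt_succ_iff.mp ((Coloring.adm_face κ t).2.1 v hv)
  rw [SimpleGraph.deleteEdges_adj, SimpleGraph.top_adj]
  refine ⟨fun h => huv (hinj u hu' v hv' h), fun h => ?_⟩
  obtain ⟨hu0, hv0, heq⟩ := hM u hu' v hv' h
  rw [Coloring.mem_labels_face] at hu hv
  rcases hu with ⟨hu, -⟩ | ⟨a, r, hr, hu, hκ⟩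
  · exact hu0 hu
  rcases hv with ⟨hv, -⟩ | ⟨b, s, hs, hv, hκ'⟩
  · exact hv0 hv
  have key : ∀ (a b : Fin 3) (r s : Fin p), r ≠ 0 → s ≠ 0 →
      (Coloring.rank p a r - 1) / 2 = (Coloring.rank p b s - 1) / 2 → ¬ a < b := by
    intro a b r s hr hs h hab
    have h1 := (Coloring.rank_bounds a r hr)
    have h2 := (Coloring.rank_bounds b s hs)
    obtain ⟨m, hm⟩ : ∃ m, p - 1 = 2 * m := ⟨p / 2, by omega⟩
    have h3 : ((a : ℕ) + 1) * (p - 1) ≤ b * (p - 1) := Nat.mul_le_mul_right _ hab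
    have h4 : ((a : ℕ) + 1) * (p - 1) = 2 * ((a + 1) * m) := by rw [hm]; ring
    omega
  subst hu hv
  have hab : a = b := le_antisymm (not_lt.mp (key b a s r hs hr heq.symm))
    (not_lt.mp (key a b r s hr hs heq))
  subst hab
  exact huv (by rw [(κ.2 a).injective (hκ.trans hκ'.symm)])

lemma exists_log_of_homotopic_refl {X : Type*} [TopologicalSpace X] {q : X} {γ : Path q q}
    (h : γ.Homotopic (Path.refl q)) (F : C(X, {z : ℂ // z ≠ 0})) :
    ∃ Γ : C(unitInterval, ℂ), (∀ t, Complex.exp (Γ t) = F (γ t)) ∧ Γ 0 = Γ 1 := by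
  have cov := Complex.isCoveringMap_exp
  have he : F q = ⟨Complex.exp (Complex.log (F q)), Complex.exp_ne_zero _⟩ :=
    Subtype.ext (Complex.exp_log (F q).2).symm
  let γ₀ : C(unitInterval, {z : ℂ // z ≠ 0}) := F.comp γ.toContinuousMap
  have h0 : γ₀ 0 = ⟨Complex.exp (Complex.log (F q)), Complex.exp_ne_zero _⟩ := by
    rw [← he]
    simp [γ₀]
  have hrel : γ₀.HomotopicRel (ContinuousMap.const unitInterval (F q)) {0, 1} :=
    ContinuousMap.HomotopicRel.comp_continuousMap h F
  have hend := cov.liftPath_apply_one_eq_of_homotopicRel hrel _ h0 he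
  rw [cov.liftPath_const he] at hend
  refine ⟨cov.liftPath γ₀ _ h0, fun t => ?_, ?_⟩
  · have := congrFun (cov.liftPath_lifts γ₀ _ h0) t
    exact congrArg Subtype.val this
  · rw [hend, cov.liftPath_zero]
    rfl

lemma eq_of_exp_const {Θ : ℝ → ℂ} (hΘ : Continuous Θ) {s t : ℝ} (hst : s ≤ t)
    (h : ∀ r ∈ Set.Icc s t, Complex.exp (Θ r) = Complex.exp (Θ s)) : Θ t = Θ s := by
  have him := abs_lt.mp (abs_im_sub_lt_of_norm_exp_sub_lt hΘ hst (fun r hr => by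
    rw [h r hr, sub_self, norm_zero]
    exact norm_pos_iff.mpr (Complex.exp_ne_zero _)))
  obtain ⟨n, hn⟩ := Complex.exp_eq_exp_iff_exists_int.mp (h t ⟨hst, le_rfl⟩)
  have him' := congrArg Complex.im hn
  simp at him'
  have hpi := Real.pi_pos
  have hn0 : n = 0 := by
    have h1 : (n : ℝ) < 1 := by nlinarith
    have h2 : (-1 : ℝ) < n := by nlinarith
    have h1' : n < 1 := by exact_mod_cast h1
    have h2' : -1 < n := by exact_mod_cast h2
    omega
  rw [hn, hn0]
  simp

/-- A closed logarithm along a nullhomotopic triangular loop. -/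
lemma closedLog_of_loop_log {g : ℕ → ℕ → ℝ → ℂ} {x : ℂ} {a b d : ℕ} {f : ℝ → ℂ}
    (hab : ∀ r ∈ Set.Icc (0 : ℝ) 1, f (r / 2) = g a b r)
    (hbd : ∀ r ∈ Set.Icc (0 : ℝ) 1, f (1 / 2 + r / 4) = g b d r)
    (had : ∀ r ∈ Set.Icc (0 : ℝ) 1, f (7 / 8 - r / 8) = g a d r)
    (hend : ∀ r ∈ Set.Icc (7 / 8 : ℝ) 1, f r = f (7 / 8)) {Θ : ℝ → ℂ} (hΘ : Continuous Θ)
    (hexp : ∀ r ∈ Set.Icc (0 : ℝ) 1, Complex.exp (Θ r) = f r - x) (hloop : Θ 0 = Θ 1) :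
    ClosedLog g x a b d := by
  refine ⟨fun r => Θ (r / 2), fun r => Θ (1 / 2 + r / 4), fun r => Θ (7 / 8 - r / 8),
    by fun_prop, by fun_prop, by fun_prop, ?_, ?_, ?_, ?_, ?_, ?_⟩
  · intro r hr
    rw [← hab r hr]
    exact hexp _ ⟨by linarith [hr.1], by linarith [hr.2]⟩
  · intro r hr
    rw [← hbd r hr]
    exact hexp _ ⟨by linarith [hr.1], by linarith [hr.2]⟩
  · intro r hr
    rw [← had r hr]
    exact hexp _ ⟨by linarith [hr.2], by linarith [hr.1]⟩
  · have := eq_of_exp_const hΘ (s := 7 / 8) (t := 1) (by norm_num) (fun r hr => by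
      rw [hexp r ⟨by linarith [hr.1], hr.2⟩, hexp (7 / 8) ⟨by norm_num, by norm_num⟩, hend r hr])
    simp only [zero_div, sub_zero]
    rw [hloop, this]
  · simp
  · norm_num

namespace Drawing

variable {V : Type*} {G : SimpleGraph V} (D : Drawing G) (T : E2 ≃ₗᵢ[ℝ] ℂ)

open Classical in
/-- The curve drawn between two vertices, in complex coordinates: the drawing of the edge if there
is one, and a straight segment otherwise. -/
def curve (a b : V) : ℝ → ℂ :=
  if h : G.Adj a b then fun r => T ((D.edgePath h).extend r)
  else AffineMap.lineMap (T (D.vert a)) (T (D.vert b))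

variable {D T}

lemma curve_of_adj {a b : V} (h : G.Adj a b) (r : ℝ) :
    D.curve T a b r = T ((D.edgePath h).extend r) := by
  rw [curve, dif_pos h]

lemma continuous_curve (a b : V) : Continuous (D.curve T a b) := by
  unfold curve
  split_ifs with h
  · exact T.continuous.comp (D.edgePath h).continuous_extend
  · exact AffineMap.lineMap_continuous

lemma curve_zero (a b : V) : D.curve T a b 0 = T (D.vert a) := by
  unfold curve
  split_ifs with h <;> simp

lemma curve_one (a b : V) : D.curve T a b 1 = T (D.vert b) := by
  unfold curve
  split_ifs with h <;> simp

lemma exists_norm_curve_le [Fintype V] :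
    ∃ M, ∀ a b, ∀ r ∈ Set.Icc (0 : ℝ) 1, ‖D.curve T a b r‖ ≤ M := by
  have hc : Continuous (fun r a b => D.curve T a b r) :=
    continuous_pi (fun a => continuous_pi (fun b => continuous_curve a b))
  obtain ⟨M, hM⟩ := isCompact_Icc.exists_bound_of_continuousOn (s := Set.Icc (0 : ℝ) 1)
    hc.continuousOn
  exact ⟨M, fun a b r hr => (norm_le_pi_norm (fun b => D.curve T a b r) b).trans
    ((norm_le_pi_norm (fun a b => D.curve T a b r) a).trans (hM r hr))⟩

lemma exists_norm_curve_sub_le [Fintype V] {ε : ℝ} (hε : 0 < ε) :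
    ∃ δ > 0, ∀ a b, ∀ r ∈ Set.Icc (0 : ℝ) 1, ∀ s ∈ Set.Icc (0 : ℝ) 1,
      |r - s| < δ → ‖D.curve T a b r - D.curve T a b s‖ ≤ ε := by
  have hc : Continuous (fun r a b => D.curve T a b r) :=
    continuous_pi (fun a => continuous_pi (fun b => continuous_curve a b))
  have hu := isCompact_Icc.uniformContinuousOn_of_continuous (s := Set.Icc (0 : ℝ) 1)
    hc.continuousOn
  obtain ⟨δ, hδ, h⟩ := Metric.uniformContinuousOn_iff.mp hu ε hε
  refine ⟨δ, hδ, fun a b r hr s hs hrs => ?_⟩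
  rw [← dist_eq_norm]
  exact ((dist_le_pi_dist (fun b => D.curve T a b r) (fun b => D.curve T a b s) b).trans
    (dist_le_pi_dist (fun a b => D.curve T a b r) (fun a b => D.curve T a b s) a)).trans
    (h r hr s hs hrs).le

lemma mem_range_of_curve {a b : V} (h : G.Adj a b) {x : ℂ}
    (hx : ∃ r ∈ Set.Icc (0 : ℝ) 1, ‖D.curve T a b r - x‖ ≤ 0) :
    T.symm x ∈ Set.range (D.edgePath h) := by
  obtain ⟨r, hr, hle⟩ := hx
  rw [norm_le_zero_iff, sub_eq_zero, curve_of_adj h, Path.extend_apply _ hr] at hle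
  exact ⟨_, by rw [← hle, T.symm_apply_apply]⟩

variable (D) in
/-- The condition on the walks in the definition of a winding graph. -/
def Catches (x : E2) {a b : V} (w : G.Walk a b) : Prop :=
  (w.IsPath ∧ x ∈ walkImage D w) ∨
    (∃ h : b = a, (w.copy rfl h).IsCycle ∧
      (x ∈ walkImage D w ∨
        ∀ (p : ↥({x}ᶜ : Set E2)) (γ : Path p p),
          (∀ t, (γ t : E2) = (walkPath D (w.copy rfl h)) t) →
          ¬ γ.Homotopic (Path.refl p)))

lemma closedLog_of_homotopic {ν : ℕ → V} {a b d : ℕ} (hab : G.Adj (ν a) (ν b))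
    (hbd : G.Adj (ν b) (ν d)) (had : G.Adj (ν a) (ν d)) {x : ℂ}
    {q : ↥({T.symm x}ᶜ : Set E2)} {γ : Path q q} (hγ : ∀ t, (γ t : E2) = (walkPath D
      (SimpleGraph.Walk.cons hab (SimpleGraph.Walk.cons hbd
        (SimpleGraph.Walk.cons had.symm SimpleGraph.Walk.nil)))) t)
    (h : γ.Homotopic (Path.refl q)) :
    ClosedLog (fun a b => D.curve T (ν a) (ν b)) x a b d := by
  let F : C(↥({T.symm x}ᶜ : Set E2), {z : ℂ // z ≠ 0}) :=
    ⟨fun y => ⟨T y - x, fun h0 => y.2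
      ((T.symm_apply_apply _).symm.trans (congrArg T.symm (sub_eq_zero.mp h0)))⟩, by
      have := T.continuous
      fun_prop⟩
  obtain ⟨Γ, hΓ, hloop⟩ := exists_log_of_homotopic_refl h F
  let P : Path (D.vert (ν a)) (D.vert (ν a)) := (D.edgePath hab).trans
    ((D.edgePath hbd).trans ((D.edgePath had).symm.trans (Path.refl _)))
  have hP : ∀ t, (γ t : E2) = P t := by
    intro t
    rw [hγ t]
    simp only [walkPath, D.edgePath_symm had, P]
  refine closedLog_of_loop_log (f := fun r => T (P.extend r))
    (Θ := fun r => Γ (Set.projIcc 0 1 zero_le_one r)) ?_ ?_ ?_ ?_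
    (Γ.continuous.comp continuous_projIcc) ?_ ?_
  · intro r hr
    rw [curve_of_adj hab, Path.extend_trans_of_le_half _ _ (by linarith [hr.2]),
      show 2 * (r / 2) = r by ring]
  · intro r hr
    rw [curve_of_adj hbd, Path.extend_trans_of_half_le _ _ (by linarith [hr.1]),
      Path.extend_trans_of_le_half _ _ (by linarith [hr.2]),
      show 2 * (2 * (1 / 2 + r / 4) - 1) = r by ring]
  · intro r hr
    rw [curve_of_adj had, Path.extend_trans_of_half_le _ _ (by linarith [hr.2]),
      Path.extend_trans_of_half_le _ _ (by linarith [hr.2]),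
      Path.extend_trans_of_le_half _ _ (by linarith [hr.1]), Path.extend_symm_apply,
      show 1 - 2 * (2 * (2 * (7 / 8 - r / 8) - 1) - 1) = r by ring]
  · have key : ∀ r ∈ Set.Icc (7 / 8 : ℝ) 1, P.extend r = D.vert (ν a) := by
      intro r hr
      rw [Path.extend_trans_of_half_le _ _ (by linarith [hr.1]),
        Path.extend_trans_of_half_le _ _ (by linarith [hr.1]),
        Path.extend_trans_of_half_le _ _ (by linarith [hr.1])]
      simp
    intro r hr
    simp only [key r hr, key (7 / 8) ⟨le_rfl, by norm_num⟩]
  · intro r hr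
    rw [hΓ, Path.extend_apply _ hr, Set.projIcc_of_mem zero_le_one hr, ← hP]
    rfl
  · simpa using hloop

lemma exists_catches {ν : ℕ → V} {x : ℂ} {f : List ℕ}
    (hadj : ∀ u ∈ f, ∀ v ∈ f, u ≠ v → G.Adj (ν u) (ν v)) (hf : f.Pairwise (· < ·))
    (h : Near (fun a => T (D.vert (ν a))) (fun a b => D.curve T (ν a) (ν b)) 0 x f) :
    ∃ (a b : V) (w : G.Walk a b), (∀ v ∈ w.support, ∃ u ∈ f, ν u = v) ∧
      D.Catches (T.symm x) w := by
  match f with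
  | [] => exact h.elim
  | [a] =>
    refine ⟨ν a, ν a, SimpleGraph.Walk.nil, by simp, Or.inl ⟨by simp, ?_⟩⟩
    have h' : ‖T (D.vert (ν a)) - x‖ ≤ 0 := h
    rw [norm_le_zero_iff, sub_eq_zero] at h'
    rw [← h', T.symm_apply_apply]
    exact Set.mem_singleton _
  | [a, b] =>
    have hlt : a < b := by simpa using hf
    have hab := hadj a (by simp) b (by simp) hlt.ne
    refine ⟨ν a, ν b, SimpleGraph.Walk.cons hab SimpleGraph.Walk.nil, by simp, Or.inl ⟨?_, ?_⟩⟩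
    · simp [hab.ne]
    · exact Or.inl (mem_range_of_curve hab h)
  | [a, b, d] =>
    have hlt : (a < b ∧ a < d) ∧ b < d := by simpa using hf
    have hab := hadj a (by simp) b (by simp) hlt.1.1.ne
    have hbd := hadj b (by simp) d (by simp) hlt.2.ne
    have had := hadj a (by simp) d (by simp) hlt.1.2.ne
    refine ⟨ν a, ν a, SimpleGraph.Walk.cons hab (SimpleGraph.Walk.cons hbd
      (SimpleGraph.Walk.cons had.symm SimpleGraph.Walk.nil)), by simp, Or.inr ⟨rfl, ?_, ?_⟩⟩
    · simp [SimpleGraph.Walk.cons_isCycle_iff, hab.ne, hbd.ne, had.ne', hab.ne', had.ne]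
    · rcases h with h | h | h | h
      · exact Or.inl (Or.inl (mem_range_of_curve hab h))
      · exact Or.inl (Or.inr (Or.inl (mem_range_of_curve hbd h)))
      · refine Or.inl (Or.inr (Or.inr (Or.inl ?_)))
        rw [D.edgePath_symm had, Path.symm_range]
        exact mem_range_of_curve had h
      · exact Or.inr (fun q γ hγ hhom => h (closedLog_of_homotopic hab hbd had hγ hhom))
  | _ :: _ :: _ :: _ :: _ => exact h.elim

end Drawing

/-- For a prime `p ≥ 3`, the complete graph `K_{3p-2}` minus a maximal matching
is `p`-winding. -/
theorem complete_minus_matching_winding (p : ℕ) (hp : p.Prime) (hp3 : 3 ≤ p)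
    (M : Finset (Sym2 (Fin (3*p-2))))
    (hMedges : ∀ e ∈ M, ¬ e.IsDiag)
    (hMmatching : ∀ e ∈ M, ∀ e' ∈ M, e ≠ e' → ∀ v, v ∈ e → v ∉ e')
    (hMcard : M.card = (3*p-3)/2) :
    IsQWinding ((⊤ : SimpleGraph (Fin (3*p-2))).deleteEdges ↑M) p := by
  intro D
  have : NeZero p := ⟨hp.ne_zero⟩
  have hodd : p % 2 = 1 := (hp.eq_two_or_odd).resolve_left (by omega)
  have hM2 : 2 * #M = 3 * (p - 1) := by omega
  obtain ⟨ν, hinj, hνM⟩ := exists_matching_labeling M hMedges hMmatching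
    (by rw [Fintype.card_fin]; omega)
  rw [hM2] at hinj hνM
  let T : E2 ≃ₗᵢ[ℝ] ℂ := Complex.orthonormalBasisOneI.repr.symm
  obtain ⟨B, hB⟩ := Drawing.exists_norm_curve_le (D := D) (T := T)
  obtain ⟨κ, x, hx⟩ := exists_near_zero (φ := fun a => T (D.vert (ν a)))
    (g := fun a b => D.curve T (ν a) (ν b)) (fun a b => Drawing.continuous_curve _ _)
    (fun a b => Drawing.curve_zero _ _) (fun a b => Drawing.curve_one _ _)
    (fun a b => hB (ν a) (ν b))
    (fun ε hε => (Drawing.exists_norm_curve_sub_le hε).imp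
      (fun δ h => ⟨h.1, fun a b => h.2 (ν a) (ν b)⟩)) hp hp3
  choose a b w hsupp hw using fun t => Drawing.exists_catches
    (fun u hu v hv huv => adj_of_mem_face hodd hinj hνM hu hv huv) (Coloring.adm_face κ t).1 (hx t)
  refine ⟨a, b, w, T.symm x, fun t l htl => ?_, hw⟩
  rw [Finset.disjoint_left]
  intro v hv hv'
  rw [List.mem_toFinset] at hv hv'
  obtain ⟨u, hu, huv⟩ := hsupp t v hv
  obtain ⟨u', hu', huv'⟩ := hsupp l v hv'
  have hlt := Nat.lt_succ_iff.mp ((Coloring.adm_face κ t).2.1 u hu)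
  have hlt' := Nat.lt_succ_iff.mp ((Coloring.adm_face κ l).2.1 u' hu')
  have := hinj u hlt u' hlt' (huv.trans huv'.symm)
  subst this
  exact htl (Coloring.disjoint_face κ t l u hu hu')
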